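/- arXiv:1801.02856 — 3 statements merged into one kernel-verified Lean document; each statement's English description precedes it below -/
import Mathlib

section
/- Let a > 0, p ∈ ℝ, and C₀ > 0 be fixed. There exist constants M₁ > 0 and ω > 0 such that for every function c : [0,1]×[0,∞) → ℝ that is twice continuously differentiable with all partial derivatives up to order 2 bounded in absolute value by C₀, and every twice continuously differentiable function w : [0,1]×[0,∞) → ℝ satisfying ∂²_t w − a² ∂²_x w + c·w = 0 on (0,1)×(0,∞), w(0,t) = p·(∂_t w + a ∂_x w)(0,t) and (∂_t w + a ∂_x w)(1,t) = 0 for all t > 0, one has for every pair of nonnegative integers α, β with α + β ≤ 2 and every t ≥ 6/a: sup_{x∈[0,1]} |∂_x^α ∂_t^β w(x,t)| ≤ M₁ e^{ω t} · max{ (∫_0^1 [w(x,0)² + (∂_x w(x,0))²] dx)^{1/2}, (∫_0^1 (∂_t w(x,0))² dx)^{1/2} }. The constants M₁ and ω do not depend on t, on w, or on its initial data. -/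
/-- `∂ₓ^α ∂ₜ^β w` evaluated at `(x, t)`. -/
noncomputable def pdxt (w : ℝ → ℝ → ℝ) (α β : ℕ) (x t : ℝ) : ℝ :=
  iteratedDeriv α (fun y => iteratedDeriv β (w y) t) x

/-!
For a solution `W`, put `b = 1 / a` and let `V = ∂[(1, b)] W` be its derivative along right-going
characteristics. The wave equation reads `∂[(1, -b)] V = q W` with `q = b² c`, and the boundary
conditions are `W = P V` at `x = 0`, where `P = p a`, and `V = 0` at `x = 1`.

Integrating `V` back along a left-going characteristic to `x = 1` expresses it through the integral
of `q W` over that characteristic. An exponentially damped energy does not increase along the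
pencil of lines `t = θ (s - b x)`, which joins the initial line to the characteristic `t + b x = s`.
Hence the `L²` norm of `W` on the characteristic, and with it the supremum of `V`, is controlled by
the `H¹ × L²` norm of the initial data; integrating from `x = 0` along the right-going
characteristics controls `W`.

The smoothing comes from `2 b ∂ₜ = ∂[(1, b)] - ∂[(1, -b)]`: under the integral over a left-going
characteristic, the time derivative of `q W` costs only `q W` at the end points and its right-going
derivative, which involves `W` and `V` but no other derivative of `W`. So `W_t` and `V_t` are
bounded by `W` and `V` after a delay `2 b`. Applied to the difference quotients of `W` in time,
which solve the same problem with a differenced source, this bounds `W_tt` after a further delay.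
-/

namespace PerturbedWave

open Set Filter Topology MeasureTheory Real
open scoped fwdDiff

/-- The derivative of `F` in the direction `v`, written as an operator on functions so that such
derivatives can be composed. It is meant for differentiable `F`, and vanishes at points where `F`
is not differentiable. -/
noncomputable def dirDeriv {E : Type*} [NormedAddCommGroup E] [NormedSpace ℝ E]
    (v : E) (F : E → ℝ) (z : E) : ℝ := fderiv ℝ F z v

local notation:max "∂[" v "]" => dirDeriv v

section DirectionalDerivative

variable {E : Type*} [NormedAddCommGroup E] [NormedSpace ℝ E] {F G : E → ℝ}

lemma contDiff_dirDeriv {m n : WithTop ℕ∞} (hF : ContDiff ℝ n F) (hmn : m + 1 ≤ n) (v : E) :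
    ContDiff ℝ m (∂[v] F) :=
  (hF.fderiv_right hmn).clm_apply contDiff_const

lemma continuous_dirDeriv (hF : ContDiff ℝ 1 F) (v : E) : Continuous (∂[v] F) :=
  (hF.continuous_fderiv one_ne_zero).clm_apply continuous_const

lemma hasDerivAt_comp_curve (hF : Differentiable ℝ F) {γ : ℝ → E} {v : E} {s : ℝ}
    (hγ : HasDerivAt γ v s) : HasDerivAt (fun s => F (γ s)) (∂[v] F (γ s)) s :=
  (hF (γ s)).hasFDerivAt.comp_hasDerivAt s hγ

lemma hasDerivAt_add_smul (hF : Differentiable ℝ F) (z v : E) (s : ℝ) :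
    HasDerivAt (fun s : ℝ => F (z + s • v)) (∂[v] F (z + s • v)) s :=
  hasDerivAt_comp_curve hF (by simpa using ((hasDerivAt_id s).smul_const v).const_add z)

lemma dirDeriv_mul (hF : Differentiable ℝ F) (hG : Differentiable ℝ G) (v : E) :
    ∂[v] (fun z => F z * G z) = fun z => ∂[v] F z * G z + F z * ∂[v] G z := by
  funext z
  simp only [dirDeriv, fderiv_fun_mul (hF z) (hG z), add_apply, smul_apply, smul_eq_mul]
  ring

lemma dirDeriv_add (hF : Differentiable ℝ F) (hG : Differentiable ℝ G) (v : E) :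
    ∂[v] (fun z => F z + G z) = fun z => ∂[v] F z + ∂[v] G z := by
  funext z
  simp [dirDeriv, fderiv_fun_add (hF z) (hG z)]

lemma dirDeriv_const_mul (hF : Differentiable ℝ F) (k : ℝ) (v z : E) :
    ∂[v] (fun z => k * F z) z = k * ∂[v] F z := by
  simp [dirDeriv, fderiv_const_mul (hF z)]

lemma dirDeriv_dirDeriv (hF : ContDiff ℝ 2 F) (v w z : E) :
    ∂[v] (∂[w] F) z = fderiv ℝ (fderiv ℝ F) z v w := by
  have hd : DifferentiableAt ℝ (fderiv ℝ F) z :=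
    (hF.fderiv_right (m := 1) (by norm_num)).differentiable one_ne_zero z
  have h := (hd.hasFDerivAt.clm_apply (hasFDerivAt_const w z)).fderiv
  change fderiv ℝ (fun y => fderiv ℝ F y w) z v = _
  simp [h]

lemma dirDeriv_comm (hF : ContDiff ℝ 2 F) (v w : E) : ∂[v] (∂[w] F) = ∂[w] (∂[v] F) := by
  funext z
  have hsymm : IsSymmSndFDerivAt ℝ F z :=
    hF.contDiffAt.isSymmSndFDerivAt (by simp [minSmoothness_of_isRCLikeNormedField])
  rw [dirDeriv_dirDeriv hF, dirDeriv_dirDeriv hF, hsymm.eq]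

lemma abs_dirDeriv_le (F : E → ℝ) (v z : E) : |∂[v] F z| ≤ ‖iteratedFDeriv ℝ 1 F z‖ * ‖v‖ := by
  rw [norm_iteratedFDeriv_one]
  exact (fderiv ℝ F z).le_opNorm v

lemma abs_dirDeriv_dirDeriv_le (hF : ContDiff ℝ 2 F) (v w z : E) :
    |∂[v] (∂[w] F) z| ≤ ‖iteratedFDeriv ℝ 2 F z‖ * (‖v‖ * ‖w‖) := by
  simpa [dirDeriv_dirDeriv hF, iteratedFDeriv_two_apply, Fin.prod_univ_two]
    using (iteratedFDeriv ℝ 2 F z).le_opNorm ![v, w]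

lemma contDiff_fwdDiff {n : WithTop ℕ∞} (hF : ContDiff ℝ n F) (u : E) :
    ContDiff ℝ n (Δ_[u] F) :=
  (hF.comp (contDiff_id.add contDiff_const)).sub hF

lemma dirDeriv_fwdDiff (hF : Differentiable ℝ F) (u v : E) :
    ∂[v] (Δ_[u] F) = Δ_[u] (∂[v] F) := by
  funext z
  have hshift : DifferentiableAt ℝ (fun y => F (y + u)) z := by fun_prop
  change fderiv ℝ (fun y => F (y + u) - F y) z v = fderiv ℝ F (z + u) v - fderiv ℝ F z v
  rw [fderiv_fun_sub hshift (hF z), fderiv_comp_add_right, sub_apply]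

lemma abs_fwdDiff_le (hF : Differentiable ℝ F) {u z : E} {C : ℝ}
    (hC : ∀ s ∈ Icc (0 : ℝ) 1, |∂[u] F (z + s • u)| ≤ C) : |Δ_[u] F z| ≤ C := by
  have h := norm_image_sub_le_of_norm_deriv_le_segment_01'
    (fun s _ => (hasDerivAt_add_smul hF z u s).hasDerivWithinAt)
    (fun s hs => hC s (Ico_subset_Icc_self hs))
  simpa [fwdDiff] using h

lemma abs_dirDeriv_le_of_abs_fwdDiff_le (hF : Differentiable ℝ F) {v z : E} {C : ℝ}
    (hC : ∀ᶠ h in 𝓝[>] (0 : ℝ), |Δ_[h • v] F z| ≤ C * h) : |∂[v] F z| ≤ C := by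
  have hslope := (by simpa only [zero_smul, add_zero] using hasDerivAt_add_smul hF z v 0 :
    HasDerivAt (fun s : ℝ => F (z + s • v)) (∂[v] F z) 0).tendsto_slope_zero_right.abs
  refine le_of_tendsto hslope ?_
  filter_upwards [hC, self_mem_nhdsWithin] with h hle hpos
  rw [smul_eq_mul, abs_mul, abs_of_pos (inv_pos.2 hpos), inv_mul_le_iff₀ hpos, mul_comm]
  simpa [fwdDiff] using hle

end DirectionalDerivative

section Plane

variable {F : ℝ × ℝ → ℝ}

lemma dirDeriv_pair (F : ℝ × ℝ → ℝ) (k l : ℝ) (z : ℝ × ℝ) :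
    ∂[(k, l)] F z = k * ∂[(1, 0)] F z + l * ∂[(0, 1)] F z := by
  have hsplit : ((k, l) : ℝ × ℝ) = k • (1, 0) + l • (0, 1) := by simp
  simp only [dirDeriv, hsplit, map_add, map_smul, smul_eq_mul]

lemma dirDeriv_left_right (hF : ContDiff ℝ 2 F) (b : ℝ) (z : ℝ × ℝ) :
    ∂[(1, -b)] (∂[(1, b)] F) z =
      ∂[(1, 0)] (∂[(1, 0)] F) z - b ^ 2 * ∂[(0, 1)] (∂[(0, 1)] F) z := by
  rw [dirDeriv_pair _ 1 (-b), dirDeriv_comm hF (1, 0), dirDeriv_comm hF (0, 1),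
    dirDeriv_pair _ 1 b, dirDeriv_pair _ 1 b, dirDeriv_comm hF (0, 1) (1, 0)]
  ring

lemma hasDerivAt_fst (hF : Differentiable ℝ F) (x t : ℝ) :
    HasDerivAt (fun x => F (x, t)) (∂[(1, 0)] F (x, t)) x :=
  hasDerivAt_comp_curve hF ((hasDerivAt_id x).prodMk (hasDerivAt_const x t))

lemma hasDerivAt_snd (hF : Differentiable ℝ F) (x t : ℝ) :
    HasDerivAt (fun t => F (x, t)) (∂[(0, 1)] F (x, t)) t :=
  hasDerivAt_comp_curve hF ((hasDerivAt_const t x).prodMk (hasDerivAt_id t))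

lemma hasDerivAt_line (hF : Differentiable ℝ F) (k x t ξ : ℝ) :
    HasDerivAt (fun ξ => F (ξ, t + k * (ξ - x))) (∂[(1, k)] F (ξ, t + k * (ξ - x))) ξ := by
  refine hasDerivAt_comp_curve hF ((hasDerivAt_id ξ).prodMk ?_)
  simpa using (((hasDerivAt_id ξ).sub_const x).const_mul k).const_add t

lemma iteratedDeriv_fst {n : ℕ} (hF : ContDiff ℝ n F) (t : ℝ) :
    iteratedDeriv n (fun x => F (x, t)) = fun x => (∂[(1, 0)])^[n] F (x, t) := by
  induction n generalizing F with
  | zero => simp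
  | succ n ih =>
    have hderiv : deriv (fun x => F (x, t)) = fun x => ∂[(1, 0)] F (x, t) :=
      funext fun x => (hasDerivAt_fst (hF.differentiable (by simp)) x t).deriv
    rw [iteratedDeriv_succ', hderiv, ih (contDiff_dirDeriv hF (by simp) _),
      Function.iterate_succ_apply]

lemma iteratedDeriv_snd {n : ℕ} (hF : ContDiff ℝ n F) (x : ℝ) :
    iteratedDeriv n (fun t => F (x, t)) = fun t => (∂[(0, 1)])^[n] F (x, t) := by
  induction n generalizing F with
  | zero => simp
  | succ n ih =>
    have hderiv : deriv (fun t => F (x, t)) = fun t => ∂[(0, 1)] F (x, t) :=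
      funext fun t => (hasDerivAt_snd (hF.differentiable (by simp)) x t).deriv
    rw [iteratedDeriv_succ', hderiv, ih (contDiff_dirDeriv hF (by simp) _),
      Function.iterate_succ_apply]

lemma contDiff_iterate_dirDeriv {α β : ℕ} (hF : ContDiff ℝ (α + β : ℕ) F) (v : ℝ × ℝ) :
    ContDiff ℝ α ((∂[v])^[β] F) := by
  induction β generalizing F with
  | zero => exact hF
  | succ β ih => exact ih (contDiff_dirDeriv hF (by simp [add_assoc]) v)

lemma pdxt_eq {w : ℝ → ℝ → ℝ} {α β : ℕ} (hw : ContDiff ℝ (α + β : ℕ) (fun z : ℝ × ℝ => w z.1 z.2))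
    (x t : ℝ) :
    pdxt w α β x t = (∂[(1, 0)])^[α] ((∂[(0, 1)])^[β] (fun z : ℝ × ℝ => w z.1 z.2)) (x, t) := by
  have hβ : ContDiff ℝ β (fun z : ℝ × ℝ => w z.1 z.2) := hw.of_le (by exact_mod_cast (by omega))
  have htime (y : ℝ) := congrFun (iteratedDeriv_snd hβ y) t
  simp only [pdxt, htime, iteratedDeriv_fst (contDiff_iterate_dirDeriv hw _)]

end Plane

section Integrals

lemma hasDerivAt_integral_of_continuous {G G' : ℝ → ℝ → ℝ} (hG : ∀ θ, Continuous (G θ))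
    (hG' : Continuous ↿G') (hderiv : ∀ θ x, HasDerivAt (fun θ => G θ x) (G' θ x) θ)
    (x₀ x₁ θ : ℝ) :
    HasDerivAt (fun θ => ∫ x in x₀..x₁, G θ x) (∫ x in x₀..x₁, G' θ x) θ := by
  obtain ⟨C, hC⟩ := ((isCompact_Icc (a := θ - 1) (b := θ + 1)).prod
    (isCompact_uIcc (a := x₀) (b := x₁))).exists_bound_of_continuousOn hG'.continuousOn
  refine (intervalIntegral.hasDerivAt_integral_of_dominated_loc_of_deriv_le
    (bound := fun _ => C) (s := Icc (θ - 1) (θ + 1)) (Icc_mem_nhds (by simp) (by simp))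
    (.of_forall fun η => (hG η).aestronglyMeasurable) ((hG θ).intervalIntegrable _ _)
    (hG'.comp (by fun_prop : Continuous fun x => (θ, x))).aestronglyMeasurable
    (.of_forall fun x hx η hη => hC (η, x) ⟨hη, uIoc_subset_uIcc hx⟩)
    intervalIntegrable_const (.of_forall fun x _ η _ => hderiv η x)).2

lemma sq_integral_le_integral_sq {f : ℝ → ℝ} (hf : Continuous f) :
    (∫ x in (0 : ℝ)..1, f x) ^ 2 ≤ ∫ x in (0 : ℝ)..1, f x ^ 2 := by
  have : IsProbabilityMeasure (volume.restrict (Ioc (0 : ℝ) 1)) := ⟨by simp⟩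
  simp only [intervalIntegral.integral_of_le zero_le_one]
  exact (even_two.convexOn_pow (𝕜 := ℝ)).map_integral_le (by fun_prop) isClosed_univ
    (.of_forall fun _ => mem_univ _) hf.integrableOn_Ioc (hf.pow 2).integrableOn_Ioc

lemma integral_abs_le_sqrt {f : ℝ → ℝ} (hf : Continuous f) {x : ℝ} (hx : x ∈ Icc (0 : ℝ) 1) :
    ∫ ξ in x..1, |f ξ| ≤ √(∫ ξ in (0 : ℝ)..1, f ξ ^ 2) := by
  calc ∫ ξ in x..1, |f ξ| ≤ ∫ ξ in (0 : ℝ)..1, |f ξ| :=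
        intervalIntegral.integral_mono_interval hx.1 hx.2 le_rfl
          (.of_forall fun _ => abs_nonneg _) (hf.abs.intervalIntegrable _ _)
    _ ≤ √(∫ ξ in (0 : ℝ)..1, f ξ ^ 2) :=
        Real.le_sqrt_of_sq_le (by simpa only [sq_abs] using sq_integral_le_integral_sq hf.abs)

end Integrals

section PencilEnergy

variable {A B : ℝ × ℝ → ℝ} {b s : ℝ}

/-- The energy density of right-going and left-going densities `A`, `B` on the line
`t = θ (s - b x)`. As `θ` runs from `0` to `1` these lines interpolate between the initial line and
the left-going characteristic `t + b x = s`, where only the right-going density `A` remains. -/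
def pencilDensity (A B : ℝ × ℝ → ℝ) (b s θ x : ℝ) : ℝ :=
  (1 + θ) * A (x, θ * (s - b * x)) + (1 - θ) * B (x, θ * (s - b * x))

/-- The derivative of `pencilDensity A B b s θ x` with respect to `θ`. -/
noncomputable def pencilDensityDeriv (A B : ℝ × ℝ → ℝ) (b s θ x : ℝ) : ℝ :=
  A (x, θ * (s - b * x)) - B (x, θ * (s - b * x)) + (s - b * x) *
    ((1 + θ) * ∂[(0, 1)] A (x, θ * (s - b * x)) + (1 - θ) * ∂[(0, 1)] B (x, θ * (s - b * x)))

lemma hasDerivAt_pencilDensity (hA : Differentiable ℝ A) (hB : Differentiable ℝ B) (b s θ x : ℝ) :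
    HasDerivAt (fun θ => pencilDensity A B b s θ x) (pencilDensityDeriv A B b s θ x) θ := by
  have hline : HasDerivAt (fun θ : ℝ => (x, θ * (s - b * x))) (0, s - b * x) θ :=
    (hasDerivAt_const θ x).prodMk (by simpa using (hasDerivAt_id θ).mul_const (s - b * x))
  have hdensity := (((hasDerivAt_id θ).const_add 1).mul (hasDerivAt_comp_curve hA hline)).add
    (((hasDerivAt_id θ).const_sub 1).mul (hasDerivAt_comp_curve hB hline))
  refine hdensity.congr_deriv ?_
  simp only [dirDeriv_pair _ 0 (s - b * x), pencilDensityDeriv, id]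
  ring

lemma hasDerivAt_pencilFlux (hA : Differentiable ℝ A) (hB : Differentiable ℝ B) (b s θ x : ℝ) :
    HasDerivAt (fun x => (s - b * x) * (A (x, θ * (s - b * x)) - B (x, θ * (s - b * x))))
      ((s - b * x) * (∂[(1, b)] A (x, θ * (s - b * x)) - ∂[(1, -b)] B (x, θ * (s - b * x)))
        - b * pencilDensityDeriv A B b s θ x) x := by
  have hheight : HasDerivAt (fun x => s - b * x) (-b) x := by
    simpa using ((hasDerivAt_id x).const_mul b).const_sub s
  have hline : HasDerivAt (fun x => (x, θ * (s - b * x))) (1, θ * -b) x :=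
    (hasDerivAt_id x).prodMk (hheight.const_mul θ)
  refine (hheight.mul ((hasDerivAt_comp_curve hA hline).sub
    (hasDerivAt_comp_curve hB hline))).congr_deriv ?_
  simp only [dirDeriv_pair _ 1 b, dirDeriv_pair _ 1 (-b), dirDeriv_pair _ 1 (θ * -b),
    pencilDensityDeriv, Pi.sub_apply]
  ring

lemma integral_pencilDensityDeriv_nonpos (hb : 0 < b) (hs : b ≤ s)
    (hA : ContDiff ℝ 1 A) (hB : ContDiff ℝ 1 B)
    (hsource : ∀ x ∈ Icc (0 : ℝ) 1, ∀ t ≥ 0, ∂[(1, b)] A (x, t) ≤ ∂[(1, -b)] B (x, t))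
    (h₀ : ∀ t ≥ 0, A (0, t) ≤ B (0, t)) (h₁ : ∀ t ≥ 0, B (1, t) ≤ A (1, t)) {θ : ℝ} (hθ : 0 ≤ θ) :
    ∫ x in (0 : ℝ)..1, pencilDensityDeriv A B b s θ x ≤ 0 := by
  have hAd := hA.differentiable one_ne_zero
  have hBd := hB.differentiable one_ne_zero
  have hcont := continuous_dirDeriv hA
  have hcont' := continuous_dirDeriv hB
  have hheight : ∀ x ∈ Icc (0 : ℝ) 1, 0 ≤ s - b * x := fun x hx => by nlinarith [hx.2]
  have hgain : ∫ x in (0 : ℝ)..1, (s - b * x) *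
      (∂[(1, b)] A (x, θ * (s - b * x)) - ∂[(1, -b)] B (x, θ * (s - b * x))) ≤ 0 := by
    rw [intervalIntegral.integral_of_le zero_le_one]
    exact setIntegral_nonpos measurableSet_Ioc fun x hx =>
      mul_nonpos_of_nonneg_of_nonpos (hheight x (Ioc_subset_Icc_self hx))
        (sub_nonpos.2 (hsource x (Ioc_subset_Icc_self hx) _
          (mul_nonneg hθ (hheight x (Ioc_subset_Icc_self hx)))))
  have hdensity : Continuous (pencilDensityDeriv A B b s θ) := by
    unfold pencilDensityDeriv; fun_prop
  have hflux := intervalIntegral.integral_eq_sub_of_hasDerivAt (a := 0) (b := 1)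
    (fun x _ => hasDerivAt_pencilFlux hAd hBd b s θ x)
    (Continuous.intervalIntegrable (by fun_prop) _ _)
  rw [intervalIntegral.integral_sub (Continuous.intervalIntegrable (by fun_prop) _ _)
    (Continuous.intervalIntegrable (by fun_prop) _ _),
    intervalIntegral.integral_const_mul b] at hflux
  have hflux₀ := mul_nonneg (hheight 0 (by simp))
    (sub_nonneg.2 (h₀ _ (mul_nonneg hθ (hheight 0 (by simp)))))
  have hflux₁ := mul_nonneg (hheight 1 (by simp))
    (sub_nonneg.2 (h₁ _ (mul_nonneg hθ (hheight 1 (by simp)))))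
  nlinarith

/-- The energies on the lines `t = θ (s - b x)` decrease in `θ`: the region between two of them
gains nothing from the sources or through the sides of the strip. -/
lemma two_mul_integral_characteristic_le (hb : 0 < b) (hs : b ≤ s)
    (hA : ContDiff ℝ 1 A) (hB : ContDiff ℝ 1 B)
    (hsource : ∀ x ∈ Icc (0 : ℝ) 1, ∀ t ≥ 0, ∂[(1, b)] A (x, t) ≤ ∂[(1, -b)] B (x, t))
    (h₀ : ∀ t ≥ 0, A (0, t) ≤ B (0, t)) (h₁ : ∀ t ≥ 0, B (1, t) ≤ A (1, t)) :
    2 * ∫ x in (0 : ℝ)..1, A (x, s - b * x) ≤ ∫ x in (0 : ℝ)..1, (A (x, 0) + B (x, 0)) := by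
  have hcont := continuous_dirDeriv hA
  have hcont' := continuous_dirDeriv hB
  have hderiv := hasDerivAt_integral_of_continuous
    (G := pencilDensity A B b s) (G' := pencilDensityDeriv A B b s)
    (fun θ => by unfold pencilDensity; fun_prop)
    (by simp only [Function.HasUncurry.uncurry, pencilDensityDeriv, id]; fun_prop)
    (hasDerivAt_pencilDensity (hA.differentiable one_ne_zero) (hB.differentiable one_ne_zero) b s)
    0 1
  have hanti : AntitoneOn (fun θ => ∫ x in (0 : ℝ)..1, pencilDensity A B b s θ x) (Icc 0 1) :=
    antitoneOn_of_hasDerivWithinAt_nonpos (convex_Icc 0 1)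
      (fun θ _ => (hderiv θ).continuousAt.continuousWithinAt)
      (fun θ _ => (hderiv θ).hasDerivWithinAt)
      fun θ hθ => integral_pencilDensityDeriv_nonpos hb hs hA hB hsource h₀ h₁
        (interior_subset hθ).1
  have hends := hanti (by simp) (by simp) (zero_le_one' ℝ)
  simpa [pencilDensity, one_add_one_eq_two] using hends

end PencilEnergy

section StripBound

/-- `|F| ≤ C` on the part `[0, 1] × I` of the strip, the times being restricted to `I`. -/
def StripBound (F : ℝ × ℝ → ℝ) (I : Set ℝ) (C : ℝ) : Prop :=
  ∀ x ∈ Icc (0 : ℝ) 1, ∀ t ∈ I, |F (x, t)| ≤ C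

variable {F G : ℝ × ℝ → ℝ} {I J : Set ℝ} {C D t₀ T b P : ℝ}

lemma StripBound.mono (hF : StripBound F I C) (hJ : J ⊆ I) (hC : C ≤ D) : StripBound F J D :=
  fun x hx t ht => (hF x hx t (hJ ht)).trans hC

lemma StripBound.add (hF : StripBound F I C) (hG : StripBound G I D) :
    StripBound (fun z => F z + G z) I (C + D) :=
  fun x hx t ht => (abs_add_le _ _).trans (add_le_add (hF x hx t ht) (hG x hx t ht))

lemma StripBound.mul (hF : StripBound F I C) (hG : StripBound G I D) :
    StripBound (fun z => F z * G z) I (C * D) := fun x hx t ht =>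
  (abs_mul _ _).trans_le (mul_le_mul (hF x hx t ht) (hG x hx t ht) (abs_nonneg _)
    ((abs_nonneg _).trans (hF x hx t ht)))

lemma StripBound.fwdDiff (hF : Differentiable ℝ F) (hbound : StripBound (∂[(0, 1)] F) (Icc t₀ T) C)
    {h : ℝ} (hh : 0 ≤ h) : StripBound (Δ_[(0, h)] F) (Icc t₀ (T - h)) (C * h) := by
  intro x hx t ht
  refine abs_fwdDiff_le hF fun s hs => ?_
  have hle := hbound x hx (t + s * h) ⟨by nlinarith [hs.1, ht.1], by nlinarith [hs.2, ht.2]⟩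
  rw [dirDeriv_pair F 0 h]
  simpa [abs_mul, abs_of_nonneg hh, mul_comm] using mul_le_mul_of_nonneg_left hle hh

lemma StripBound.transport (hF : Differentiable ℝ F) (hb : 0 ≤ b)
    (hbound : StripBound (∂[(1, b)] F) (Icc t₀ T) C)
    (h₀ : ∀ t ∈ Icc t₀ T, F (0, t) = P * ∂[(1, b)] F (0, t)) :
    StripBound F (Icc (t₀ + b) T) ((|P| + 1) * C) := by
  intro x hx t ht
  have hline : ∀ ξ ∈ Icc 0 x, t + b * (ξ - x) ∈ Icc t₀ T := fun ξ hξ =>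
    ⟨by nlinarith [ht.1, hξ.1, hx.2], by nlinarith [ht.2, hξ.2]⟩
  have hfoot := hline 0 ⟨le_rfl, hx.1⟩
  have hC := hbound 0 (by simp) _ hfoot
  have hinc := norm_image_sub_le_of_norm_deriv_le_segment'
    (fun ξ _ => (hasDerivAt_line hF b x t ξ).hasDerivWithinAt)
    (fun ξ hξ => hbound ξ ⟨hξ.1, hξ.2.le.trans hx.2⟩ _ (hline ξ (Ico_subset_Icc_self hξ)))
    x ⟨hx.1, le_rfl⟩
  simp only [sub_self, mul_zero, add_zero, sub_zero, Real.norm_eq_abs] at hinc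
  calc |F (x, t)| = |F (0, t + b * (0 - x)) + (F (x, t) - F (0, t + b * (0 - x)))| := by ring_nf
    _ ≤ |F (0, t + b * (0 - x))| + |F (x, t) - F (0, t + b * (0 - x))| := abs_add_le _ _
    _ ≤ |P| * C + C * x := by
        rw [h₀ _ hfoot, abs_mul, ← h₀ _ hfoot]
        gcongr
    _ ≤ (|P| + 1) * C := by nlinarith [(abs_nonneg _).trans hC, hx.2]

end StripBound

/-- `Z` solves the wave equation with source `f` on the strip `[0, 1] × [0, ∞)`, in characteristic
form: `1 / b` is the speed, and `∂[(1, b)]`, `∂[(1, -b)]` differentiate along the right-going and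
left-going characteristics. The conditions at `x = 0` and `x = 1` are those of the wave problem with
`P = p a`. -/
structure IsCharacteristicSolution (b P : ℝ) (f Z : ℝ × ℝ → ℝ) : Prop where
  contDiff : ContDiff ℝ 2 Z
  equation : ∀ x ∈ Icc (0 : ℝ) 1, ∀ t ≥ 0, ∂[(1, -b)] (∂[(1, b)] Z) (x, t) = f (x, t)
  at_zero : ∀ t ≥ 0, Z (0, t) = P * ∂[(1, b)] Z (0, t)
  at_one : ∀ t ≥ 0, ∂[(1, b)] Z (1, t) = 0

namespace IsCharacteristicSolution

variable {b P : ℝ} {f Z : ℝ × ℝ → ℝ}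

lemma differentiable (hZ : IsCharacteristicSolution b P f Z) : Differentiable ℝ Z :=
  hZ.contDiff.differentiable two_ne_zero

lemma contDiff_right (hZ : IsCharacteristicSolution b P f Z) : ContDiff ℝ 1 (∂[(1, b)] Z) :=
  contDiff_dirDeriv hZ.contDiff (by norm_num) _

lemma differentiable_right (hZ : IsCharacteristicSolution b P f Z) :
    Differentiable ℝ (∂[(1, b)] Z) :=
  hZ.contDiff_right.differentiable one_ne_zero

lemma fwdDiff (hZ : IsCharacteristicSolution b P f Z) {h : ℝ} (hh : 0 ≤ h) :
    IsCharacteristicSolution b P (Δ_[(0, h)] f) (Δ_[(0, h)] Z) where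
  contDiff := contDiff_fwdDiff hZ.contDiff _
  equation x hx t ht := by
    rw [dirDeriv_fwdDiff hZ.differentiable, dirDeriv_fwdDiff hZ.differentiable_right]
    simp [_root_.fwdDiff, hZ.equation x hx t ht, hZ.equation x hx (t + h) (add_nonneg ht hh)]
  at_zero t ht := by
    rw [dirDeriv_fwdDiff hZ.differentiable]
    simp [_root_.fwdDiff, hZ.at_zero t ht, hZ.at_zero (t + h) (add_nonneg ht hh), mul_sub]
  at_one t ht := by
    rw [dirDeriv_fwdDiff hZ.differentiable]
    simp [_root_.fwdDiff, hZ.at_one t ht, hZ.at_one (t + h) (add_nonneg ht hh)]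

lemma right_eq_neg_integral (hZ : IsCharacteristicSolution b P f Z) (hb : 0 ≤ b) {x t : ℝ}
    (hx : x ∈ Icc (0 : ℝ) 1) (ht : b * (1 - x) ≤ t) :
    ∂[(1, b)] Z (x, t) = -∫ ξ in x..1, f (ξ, t + -b * (ξ - x)) := by
  have hline : ∀ ξ ∈ uIcc x 1, ξ ∈ Icc (0 : ℝ) 1 ∧ 0 ≤ t + -b * (ξ - x) := fun ξ hξ => by
    rw [uIcc_of_le hx.2] at hξ
    exact ⟨⟨hx.1.trans hξ.1, hξ.2⟩, by nlinarith [hξ.2]⟩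
  have hcont := continuous_dirDeriv hZ.contDiff_right (1, -b)
  have hftc := intervalIntegral.integral_eq_sub_of_hasDerivAt (a := x) (b := 1)
    (fun ξ _ => hasDerivAt_line hZ.differentiable_right (-b) x t ξ)
    (Continuous.intervalIntegrable (by fun_prop) _ _)
  have hsource := intervalIntegral.integral_congr (μ := volume)
    fun ξ hξ => hZ.equation ξ (hline ξ hξ).1 _ (hline ξ hξ).2
  rw [← hsource, hftc, hZ.at_one _ (hline 1 right_mem_uIcc).2]
  simp

lemma timeDeriv_right_eq_neg_integral (hZ : IsCharacteristicSolution b P f Z)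
    (hf : ContDiff ℝ 1 f) (hb : 0 ≤ b) {x t : ℝ} (hx : x ∈ Icc (0 : ℝ) 1) (ht : b * (1 - x) < t) :
    ∂[(0, 1)] (∂[(1, b)] Z) (x, t) = -∫ ξ in x..1, ∂[(0, 1)] f (ξ, t + -b * (ξ - x)) := by
  have hcont := continuous_dirDeriv hf (0, 1)
  have hleibniz := hasDerivAt_integral_of_continuous
    (G := fun t ξ => f (ξ, t + -b * (ξ - x))) (G' := fun t ξ => ∂[(0, 1)] f (ξ, t + -b * (ξ - x)))
    (fun _ => by fun_prop) (by simp only [Function.HasUncurry.uncurry, id]; fun_prop)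
    (fun t ξ => (hasDerivAt_snd (hf.differentiable one_ne_zero) ξ _).comp_add_const t _) x 1 t
  refine (hasDerivAt_snd hZ.differentiable_right x t).unique (hleibniz.neg.congr_of_eventuallyEq ?_)
  filter_upwards [lt_mem_nhds ht] with τ hτ
  exact hZ.right_eq_neg_integral hb hx hτ.le

/-- The time derivative of the source is a combination of its two characteristic derivatives, one
of which integrates to boundary terms. -/
lemma two_mul_timeDeriv_right (hZ : IsCharacteristicSolution b P f Z) (hf : ContDiff ℝ 1 f)
    (hb : 0 ≤ b) {x t : ℝ} (hx : x ∈ Icc (0 : ℝ) 1) (ht : b * (1 - x) < t) :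
    2 * b * ∂[(0, 1)] (∂[(1, b)] Z) (x, t) = f (1, t + -b * (1 - x)) - f (x, t)
      - ∫ ξ in x..1, ∂[(1, b)] f (ξ, t + -b * (ξ - x)) := by
  have hcont := continuous_dirDeriv hf
  have hsplit (z : ℝ × ℝ) : 2 * b * ∂[(0, 1)] f z = ∂[(1, b)] f z - ∂[(1, -b)] f z := by
    rw [dirDeriv_pair f 1 b, dirDeriv_pair f 1 (-b)]
    ring
  have hftc := intervalIntegral.integral_eq_sub_of_hasDerivAt (a := x) (b := 1)
    (fun ξ _ => hasDerivAt_line (hf.differentiable one_ne_zero) (-b) x t ξ)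
    (Continuous.intervalIntegrable (by fun_prop) _ _)
  rw [hZ.timeDeriv_right_eq_neg_integral hf hb hx ht, mul_neg,
    ← intervalIntegral.integral_const_mul]
  simp only [hsplit]
  rw [intervalIntegral.integral_sub (Continuous.intervalIntegrable (by fun_prop) _ _)
    (Continuous.intervalIntegrable (by fun_prop) _ _), hftc]
  simp

lemma abs_right_le (hZ : IsCharacteristicSolution b P f Z) (hb : 0 ≤ b) {Q : ℝ} (hQ : 0 ≤ Q)
    (hf : ∀ x ∈ Icc (0 : ℝ) 1, ∀ t ≥ 0, |f (x, t)| ≤ Q * |Z (x, t)|) {x t : ℝ}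
    (hx : x ∈ Icc (0 : ℝ) 1) (ht : b * (1 - x) ≤ t) :
    |∂[(1, b)] Z (x, t)| ≤ Q * √(∫ ξ in (0 : ℝ)..1, Z (ξ, t + b * x - b * ξ) ^ 2) := by
  have hcont := hZ.contDiff.continuous
  have hsource : ∀ ξ ∈ Ioc x 1,
      ‖f (ξ, t + -b * (ξ - x))‖ ≤ Q * |Z (ξ, t + b * x - b * ξ)| := fun ξ hξ => by
    rw [Real.norm_eq_abs, show t + b * x - b * ξ = t + -b * (ξ - x) by ring]
    exact hf ξ ⟨hx.1.trans hξ.1.le, hξ.2⟩ _ (by nlinarith [hξ.2])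
  rw [hZ.right_eq_neg_integral hb hx ht, abs_neg]
  calc |∫ ξ in x..1, f (ξ, t + -b * (ξ - x))|
      ≤ ∫ ξ in x..1, Q * |Z (ξ, t + b * x - b * ξ)| :=
        intervalIntegral.norm_integral_le_of_norm_le hx.2 (.of_forall hsource)
          (Continuous.intervalIntegrable (by fun_prop) _ _)
    _ = Q * ∫ ξ in x..1, |Z (ξ, t + b * x - b * ξ)| := intervalIntegral.integral_const_mul _ _
    _ ≤ _ := mul_le_mul_of_nonneg_left (integral_abs_le_sqrt (by fun_prop) hx) hQ

lemma stripBound_timeDeriv_right (hZ : IsCharacteristicSolution b P f Z) (hf : ContDiff ℝ 1 f)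
    (hb : 0 < b) {t₀ T C D : ℝ} (ht₀ : 0 < t₀) (hC : StripBound f (Icc t₀ T) C)
    (hD : StripBound (∂[(1, b)] f) (Icc t₀ T) D) :
    StripBound (∂[(0, 1)] (∂[(1, b)] Z)) (Icc (t₀ + b) T) ((2 * C + D) / (2 * b)) := by
  intro x hx t ht
  have hline : ∀ ξ ∈ Icc x 1, t + -b * (ξ - x) ∈ Icc t₀ T := fun ξ hξ =>
    ⟨by nlinarith [ht.1, hξ.2, hx.1], by nlinarith [ht.2, hξ.1]⟩
  have hbase := hline 1 ⟨hx.2, le_rfl⟩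
  have hC₁ := hC 1 (by simp) _ hbase
  have hCx := hC x hx t (by simpa using hline x ⟨le_rfl, hx.2⟩)
  have hint : ‖∫ ξ in x..1, ∂[(1, b)] f (ξ, t + -b * (ξ - x))‖ ≤ D * |1 - x| :=
    intervalIntegral.norm_integral_le_of_norm_le_const fun ξ hξ => by
      rw [uIoc_of_le hx.2] at hξ
      exact hD ξ ⟨hx.1.trans hξ.1.le, hξ.2⟩ _ (hline ξ (Ioc_subset_Icc_self hξ))
  have hD₀ := (abs_nonneg _).trans (hD 1 (by simp) _ hbase)
  rw [Real.norm_eq_abs, abs_of_nonneg (sub_nonneg.2 hx.2)] at hint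
  rw [le_div_iff₀ (by positivity), mul_comm, ← abs_of_pos (mul_pos two_pos hb), ← abs_mul,
    hZ.two_mul_timeDeriv_right hf hb.le hx (by linarith [hbase.1])]
  have htriangle := (abs_sub (f (1, t + -b * (1 - x)) - f (x, t))
    (∫ ξ in x..1, ∂[(1, b)] f (ξ, t + -b * (ξ - x)))).trans (add_le_add_left (abs_sub _ _) _)
  nlinarith [hx.1]

lemma timeDeriv_at_zero (hZ : IsCharacteristicSolution b P f Z) {t : ℝ} (ht : 0 < t) :
    ∂[(0, 1)] Z (0, t) = P * ∂[(0, 1)] (∂[(1, b)] Z) (0, t) := by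
  refine (hasDerivAt_snd hZ.differentiable 0 t).unique ?_
  refine ((hasDerivAt_snd hZ.differentiable_right 0 t).const_mul P).congr_of_eventuallyEq ?_
  filter_upwards [lt_mem_nhds ht] with τ hτ
  exact hZ.at_zero τ hτ.le

lemma stripBound_timeDeriv (hZ : IsCharacteristicSolution b P f Z) (hf : ContDiff ℝ 1 f)
    (hb : 0 < b) {t₀ T C D : ℝ} (ht₀ : 0 < t₀) (hC : StripBound f (Icc t₀ T) C)
    (hD : StripBound (∂[(1, b)] f) (Icc t₀ T) D) :
    StripBound (∂[(0, 1)] Z) (Icc (t₀ + 2 * b) T) ((|P| + 1) * ((2 * C + D) / (2 * b))) := by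
  have hright := hZ.stripBound_timeDeriv_right hf hb ht₀ hC hD
  rw [dirDeriv_comm hZ.contDiff] at hright
  have hZt := contDiff_dirDeriv hZ.contDiff (m := 1) (by norm_num) (0, 1)
  have htransport := hright.transport (P := P) (hZt.differentiable one_ne_zero) hb.le
    fun t ht => by
      rw [hZ.timeDeriv_at_zero (by linarith [ht.1]), dirDeriv_comm hZ.contDiff]
  exact htransport.mono (Icc_subset_Icc_left (by linarith)) le_rfl

lemma stripBound_timeDeriv_timeDeriv (hZ : IsCharacteristicSolution b P f Z)
    (hf : ContDiff ℝ 2 f) (hb : 0 < b) {t₀ T C D : ℝ} (ht₀ : 0 < t₀)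
    (hC : StripBound (∂[(0, 1)] f) (Icc t₀ T) C)
    (hD : StripBound (∂[(0, 1)] (∂[(1, b)] f)) (Icc t₀ T) D) :
    StripBound (∂[(0, 1)] (∂[(0, 1)] Z)) (Ico (t₀ + 2 * b) T)
      ((|P| + 1) * ((2 * C + D) / (2 * b))) := by
  intro x hx t ht
  have hfd := hf.differentiable two_ne_zero
  have hZt := contDiff_dirDeriv hZ.contDiff (m := 1) (by norm_num) (0, 1)
  refine abs_dirDeriv_le_of_abs_fwdDiff_le (hZt.differentiable one_ne_zero) ?_
  filter_upwards [Ioc_mem_nhdsGT (sub_pos.2 ht.2)] with h hh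
  have hright : StripBound (∂[(1, b)] (Δ_[(0, h)] f)) (Icc t₀ (T - h)) (D * h) := by
    rw [dirDeriv_fwdDiff hfd]
    exact hD.fwdDiff ((contDiff_dirDeriv hf (by norm_num) _).differentiable one_ne_zero) hh.1.le
  have hdiff := (hZ.fwdDiff hh.1.le).stripBound_timeDeriv
    (contDiff_fwdDiff (hf.of_le one_le_two) _) hb ht₀ (hC.fwdDiff hfd hh.1.le) hright
    x hx t ⟨ht.1, by linarith [hh.2]⟩
  rw [dirDeriv_fwdDiff hZ.differentiable] at hdiff
  calc |Δ_[h • (0, 1)] (∂[(0, 1)] Z) (x, t)| = |Δ_[(0, h)] (∂[(0, 1)] Z) (x, t)| := by simp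
    _ ≤ (|P| + 1) * ((2 * (C * h) + D * h) / (2 * b)) := hdiff
    _ = (|P| + 1) * ((2 * C + D) / (2 * b)) * h := by ring

end IsCharacteristicSolution

section EnergyEstimate

variable {F : ℝ × ℝ → ℝ}

lemma contDiff_exp_mul_sq (hF : ContDiff ℝ 1 F) (ν : ℝ) :
    ContDiff ℝ 1 (fun z => rexp (-ν * z.2) * F z ^ 2) := by
  fun_prop

lemma dirDeriv_exp_mul_sq (hF : ContDiff ℝ 1 F) (ν k l : ℝ) (z : ℝ × ℝ) :
    ∂[(k, l)] (fun z => rexp (-ν * z.2) * F z ^ 2) z =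
      rexp (-ν * z.2) * (2 * F z * ∂[(k, l)] F z - ν * l * F z ^ 2) := by
  have hdamping : HasDerivAt (fun s : ℝ => rexp (-ν * (z.2 + s * l)))
      (rexp (-ν * z.2) * (-ν * l)) 0 := by
    simpa using ((((hasDerivAt_id (0 : ℝ)).mul_const l).const_add z.2).const_mul (-ν)).exp
  have hsq := (hasDerivAt_add_smul (hF.differentiable one_ne_zero) z (k, l) 0).fun_pow 2
  have hprod := hasDerivAt_add_smul
    ((contDiff_exp_mul_sq hF ν).differentiable one_ne_zero) z (k, l) 0
  have hunique := hprod.unique (hdamping.mul hsq)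
  simp only [zero_smul, add_zero, zero_mul] at hunique
  rw [hunique]
  simp only [neg_mul, mul_neg, Nat.cast_ofNat, Nat.add_one_sub_one, pow_one]
  ring

/-- The exponential rate at which the energy of a solution grows when its source is bounded by
`Q |Z|`. -/
noncomputable def growthRate (b P Q : ℝ) : ℝ := (1 + (1 + P ^ 2) * Q) / b

lemma damped_source_le {b P Q : ℝ} (hb : 0 < b) (hQ : 0 ≤ Q) {Z V f : ℝ} (hf : |f| ≤ Q * |Z|) :
    2 * Z * V - growthRate b P Q * b * Z ^ 2 ≤
      (1 + P ^ 2) * (2 * V * f - growthRate b P Q * -b * V ^ 2) := by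
  have hrate : growthRate b P Q * b = 1 + (1 + P ^ 2) * Q := div_mul_cancel₀ _ hb.ne'
  have hVf : -(2 * (V * f)) ≤ Q * (Z ^ 2 + V ^ 2) :=
    calc -(2 * (V * f)) ≤ 2 * (|V| * |f|) := by
          rw [← abs_mul]; linarith [neg_abs_le (V * f)]
      _ ≤ 2 * (|V| * (Q * |Z|)) := by gcongr
      _ = Q * (2 * |V| * |Z|) := by ring
      _ ≤ Q * (|V| ^ 2 + |Z| ^ 2) := mul_le_mul_of_nonneg_left (two_mul_le_add_sq _ _) hQ
      _ = Q * (Z ^ 2 + V ^ 2) := by rw [sq_abs, sq_abs, add_comm]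
  have hkVf := mul_le_mul_of_nonneg_left hVf (by positivity : 0 ≤ 1 + P ^ 2)
  have hP : 0 ≤ P ^ 2 * V ^ 2 := by positivity
  have hPQ : 0 ≤ (1 + P ^ 2) * Q * (P ^ 2 * V ^ 2) := by positivity
  rw [mul_neg, hrate]
  nlinarith [two_mul_le_add_sq Z V]

namespace IsCharacteristicSolution

variable {b P Q : ℝ} {f Z : ℝ × ℝ → ℝ}

lemma integral_sq_characteristic_le (hZ : IsCharacteristicSolution b P f Z) (hb : 0 < b)
    (hQ : 0 ≤ Q) (hf : ∀ x ∈ Icc (0 : ℝ) 1, ∀ t ≥ 0, |f (x, t)| ≤ Q * |Z (x, t)|) {s : ℝ}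
    (hs : b ≤ s) :
    2 * ∫ x in (0 : ℝ)..1, Z (x, s - b * x) ^ 2 ≤ rexp (growthRate b P Q * s) *
      ∫ x in (0 : ℝ)..1, (Z (x, 0) ^ 2 + (1 + P ^ 2) * ∂[(1, b)] Z (x, 0) ^ 2) := by
  set ν := growthRate b P Q
  have hν : 0 ≤ ν := div_nonneg (by positivity) hb.le
  have hZ₁ : ContDiff ℝ 1 Z := hZ.contDiff.of_le one_le_two
  have hright := contDiff_exp_mul_sq hZ.contDiff_right ν
  have hdamped := two_mul_integral_characteristic_le hb hs (contDiff_exp_mul_sq hZ₁ ν)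
    (contDiff_const.mul hright : ContDiff ℝ 1 fun z => (1 + P ^ 2) * _)
    (fun x hx t ht => by
      rw [dirDeriv_const_mul (hright.differentiable one_ne_zero), dirDeriv_exp_mul_sq hZ₁,
        dirDeriv_exp_mul_sq hZ.contDiff_right, hZ.equation x hx t ht, mul_left_comm]
      exact mul_le_mul_of_nonneg_left (damped_source_le hb hQ (hf x hx t ht)) (exp_pos _).le)
    (fun t ht => by
      rw [hZ.at_zero t ht, mul_left_comm, mul_pow]
      gcongr
      linarith)
    (fun t ht => by
      rw [hZ.at_one t ht]
      simpa using mul_nonneg (exp_pos _).le (sq_nonneg _))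
  have hundamp : ∀ x ∈ Icc (0 : ℝ) 1,
      Z (x, s - b * x) ^ 2 ≤ rexp (ν * s) * (rexp (-ν * (s - b * x)) * Z (x, s - b * x) ^ 2) :=
    fun x hx => by
      rw [← mul_assoc, ← exp_add]
      refine le_mul_of_one_le_left (sq_nonneg _) (one_le_exp ?_)
      nlinarith [mul_nonneg hν (mul_nonneg hb.le hx.1)]
  have hcont := hZ₁.continuous
  calc 2 * ∫ x in (0 : ℝ)..1, Z (x, s - b * x) ^ 2
      ≤ 2 * ∫ x in (0 : ℝ)..1,
          rexp (ν * s) * (rexp (-ν * (s - b * x)) * Z (x, s - b * x) ^ 2) :=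
        mul_le_mul_of_nonneg_left (intervalIntegral.integral_mono_on zero_le_one
          (Continuous.intervalIntegrable (by fun_prop) _ _)
          (Continuous.intervalIntegrable (by fun_prop) _ _) hundamp) zero_le_two
    _ = rexp (ν * s) * (2 * ∫ x in (0 : ℝ)..1, rexp (-ν * (s - b * x)) * Z (x, s - b * x) ^ 2) := by
        rw [intervalIntegral.integral_const_mul, mul_left_comm]
    _ ≤ _ := mul_le_mul_of_nonneg_left (by simpa using hdamped) (exp_pos _).le

end IsCharacteristicSolution

end EnergyEstimate

section Smoothing

/-- A `C²` potential on the strip all of whose derivatives entering the time derivative of the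
source `q W` and of its right-going derivative are bounded by `Q`. -/
structure PotentialBound (b Q : ℝ) (q : ℝ × ℝ → ℝ) : Prop where
  contDiff : ContDiff ℝ 2 q
  value : StripBound q (Ici 0) Q
  right : StripBound (∂[(1, b)] q) (Ici 0) Q
  timeDeriv : StripBound (∂[(0, 1)] q) (Ici 0) Q
  timeDeriv_right : StripBound (∂[(0, 1)] (∂[(1, b)] q)) (Ici 0) Q

/-- The factor by which the bound on a solution of `∂[(1, -b)] (∂[(1, b)] W) = q W` grows each time
that a derivative in time or the reflection at `x = 0` is taken into account. -/
noncomputable def amplification (b P Q : ℝ) : ℝ := (|P| + 1) * (1 + 4 * Q / b)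

variable {b P Q N t₀ T : ℝ} {f q W : ℝ × ℝ → ℝ}

lemma PotentialBound.nonneg (hq : PotentialBound b Q q) : 0 ≤ Q :=
  (abs_nonneg _).trans (hq.value 0 (by simp) 0 self_mem_Ici)

lemma abs_add_one_le_amplification (hb : 0 < b) (hQ : 0 ≤ Q) : |P| + 1 ≤ amplification b P Q :=
  le_mul_of_one_le_right (by positivity)
    (by linarith [div_nonneg (mul_nonneg zero_le_four hQ) hb.le])

lemma one_le_amplification (hb : 0 < b) (hQ : 0 ≤ Q) : 1 ≤ amplification b P Q :=
  (by linarith [abs_nonneg P] : 1 ≤ |P| + 1).trans (abs_add_one_le_amplification hb hQ)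

lemma smoothing_step_le (hb : 0 < b) (hN : 0 ≤ N) :
    (|P| + 1) * ((2 * (2 * Q * N) + 4 * Q * N) / (2 * b)) ≤ amplification b P Q * N :=
  calc (|P| + 1) * ((2 * (2 * Q * N) + 4 * Q * N) / (2 * b))
      = (|P| + 1) * (4 * Q / b) * N := by field_simp; ring
    _ ≤ amplification b P Q * N := by unfold amplification; gcongr; linarith

/-- The constant of the smoothing estimate for a potential satisfying `PotentialBound b Q`. -/
noncomputable def smoothingConst (b P Q : ℝ) : ℝ :=
  (1 + b + b ^ 2 + Q) * (amplification b P Q ^ 3 *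
    (Q * (√((1 + P ^ 2) * (1 + b ^ 2)) * rexp (growthRate b P Q / 2 * (1 + b)))))

lemma smoothingConst_pos (hb : 0 < b) (hQ : 0 < Q) : 0 < smoothingConst b P Q := by
  have hA : 0 < amplification b P Q := zero_lt_one.trans_le (one_le_amplification hb hQ.le)
  unfold smoothingConst
  positivity

namespace IsCharacteristicSolution

lemma stripBound_firstOrder (hW : IsCharacteristicSolution b P (fun z => q z * W z) W)
    (hq : PotentialBound b Q q) (hb : 0 < b) (hN : 0 ≤ N) (ht₀ : 0 < t₀)
    (hWN : StripBound W (Icc t₀ T) N) (hVN : StripBound (∂[(1, b)] W) (Icc t₀ T) N) :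
    StripBound (∂[(0, 1)] W) (Icc (t₀ + 2 * b) T) (amplification b P Q * N) ∧
      StripBound (∂[(0, 1)] (∂[(1, b)] W)) (Icc (t₀ + 2 * b) T) (amplification b P Q * N) := by
  have hI : Icc t₀ T ⊆ Ici 0 := fun t ht => ht₀.le.trans ht.1
  have hQ := hq.nonneg
  have hQN : 0 ≤ Q * N := mul_nonneg hQ hN
  have hf : ContDiff ℝ 1 (fun z => q z * W z) :=
    (hq.contDiff.mul hW.contDiff).of_le one_le_two
  have hsource : StripBound (fun z => q z * W z) (Icc t₀ T) (2 * Q * N) :=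
    ((hq.value.mono hI le_rfl).mul hWN).mono subset_rfl (by linarith)
  have hright : StripBound (∂[(1, b)] (fun z => q z * W z)) (Icc t₀ T) (4 * Q * N) := by
    rw [dirDeriv_mul (hq.contDiff.differentiable two_ne_zero) hW.differentiable]
    exact (((hq.right.mono hI le_rfl).mul hWN).add
      ((hq.value.mono hI le_rfl).mul hVN)).mono subset_rfl (by linarith)
  have hstep := smoothing_step_le (P := P) (Q := Q) hb hN
  refine ⟨(hW.stripBound_timeDeriv hf hb ht₀ hsource hright).mono subset_rfl hstep,
    (hW.stripBound_timeDeriv_right hf hb ht₀ hsource hright).mono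
      (Icc_subset_Icc_left (by linarith)) (le_trans ?_ hstep)⟩
  exact le_mul_of_one_le_left (by positivity) (by linarith [abs_nonneg P])

lemma stripBound_secondOrder (hW : IsCharacteristicSolution b P (fun z => q z * W z) W)
    (hq : PotentialBound b Q q) (hb : 0 < b) (hN : 0 ≤ N) (ht₀ : 0 < t₀)
    (hWN : StripBound W (Icc t₀ T) N) (hVN : StripBound (∂[(1, b)] W) (Icc t₀ T) N)
    (hWtN : StripBound (∂[(0, 1)] W) (Icc t₀ T) N)
    (hVtN : StripBound (∂[(0, 1)] (∂[(1, b)] W)) (Icc t₀ T) N) :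
    StripBound (∂[(0, 1)] (∂[(0, 1)] W)) (Ico (t₀ + 2 * b) T) (amplification b P Q * N) := by
  have hI : Icc t₀ T ⊆ Ici 0 := fun t ht => ht₀.le.trans ht.1
  have hqd := hq.contDiff.differentiable two_ne_zero
  have hqright := (contDiff_dirDeriv hq.contDiff (m := 1) (by norm_num) (1, b)).differentiable
    one_ne_zero
  have hsource : StripBound (∂[(0, 1)] (fun z => q z * W z)) (Icc t₀ T) (2 * Q * N) := by
    rw [dirDeriv_mul hqd hW.differentiable]
    exact (((hq.timeDeriv.mono hI le_rfl).mul hWN).add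
      ((hq.value.mono hI le_rfl).mul hWtN)).mono subset_rfl (by linarith)
  have hright : StripBound (∂[(0, 1)] (∂[(1, b)] (fun z => q z * W z))) (Icc t₀ T)
      (4 * Q * N) := by
    rw [dirDeriv_mul hqd hW.differentiable, dirDeriv_add (hqright.fun_mul hW.differentiable)
      (hqd.fun_mul hW.differentiable_right), dirDeriv_mul hqright hW.differentiable,
      dirDeriv_mul hqd hW.differentiable_right]
    exact ((((hq.timeDeriv_right.mono hI le_rfl).mul hWN).add
      ((hq.right.mono hI le_rfl).mul hWtN)).add (((hq.timeDeriv.mono hI le_rfl).mul hVN).add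
      ((hq.value.mono hI le_rfl).mul hVtN))).mono subset_rfl (by linarith)
  exact (hW.stripBound_timeDeriv_timeDeriv (hq.contDiff.mul hW.contDiff) hb ht₀ hsource
    hright).mono subset_rfl (smoothing_step_le hb hN)

lemma stripBound_partialDeriv (hW : IsCharacteristicSolution b P (fun z => q z * W z) W)
    (hq : StripBound q (Ici 0) Q) {I : Set ℝ} (hI : I ⊆ Ici 0) (hb : 0 < b) (hN : 0 ≤ N)
    (hWN : StripBound W I N) (hVN : StripBound (∂[(1, b)] W) I N)
    (hWtN : StripBound (∂[(0, 1)] W) I N) (hVtN : StripBound (∂[(0, 1)] (∂[(1, b)] W)) I N)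
    (hWttN : StripBound (∂[(0, 1)] (∂[(0, 1)] W)) I N) {α β : ℕ} (hαβ : α + β ≤ 2) :
    StripBound ((∂[(1, 0)])^[α] ((∂[(0, 1)])^[β] W)) I ((1 + b + b ^ 2 + Q) * N) := by
  intro x hx t ht
  have hQ : 0 ≤ Q := (abs_nonneg _).trans (hq x hx t (hI ht))
  have hone : N ≤ (1 + b + b ^ 2 + Q) * N :=
    le_mul_of_one_le_left hN (by linarith [sq_nonneg b])
  have hsum : N + b * N ≤ (1 + b + b ^ 2 + Q) * N := by nlinarith [mul_nonneg hQ hN, sq_nonneg b]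
  have hfst {F : ℝ × ℝ → ℝ} (hright : |∂[(1, b)] F (x, t)| ≤ N)
      (htime : |∂[(0, 1)] F (x, t)| ≤ N) :
      |∂[(1, 0)] F (x, t)| ≤ (1 + b + b ^ 2 + Q) * N := by
    have hsplit : ∂[(1, 0)] F (x, t) = ∂[(1, b)] F (x, t) - b * ∂[(0, 1)] F (x, t) := by
      rw [dirDeriv_pair F 1 b]; ring
    rw [hsplit]
    refine ((abs_sub _ _).trans (add_le_add hright ?_)).trans hsum
    rw [abs_mul, abs_of_pos hb]
    gcongr
  obtain ⟨rfl, rfl⟩ | ⟨rfl, rfl⟩ | ⟨rfl, rfl⟩ | ⟨rfl, rfl⟩ | ⟨rfl, rfl⟩ | ⟨rfl, rfl⟩ :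
      (α = 0 ∧ β = 0) ∨ (α = 0 ∧ β = 1) ∨ (α = 0 ∧ β = 2) ∨ (α = 1 ∧ β = 0) ∨
        (α = 1 ∧ β = 1) ∨ (α = 2 ∧ β = 0) := by omega
  · exact (hWN x hx t ht).trans hone
  · exact (hWtN x hx t ht).trans hone
  · exact (hWttN x hx t ht).trans hone
  · exact hfst (hVN x hx t ht) (hWtN x hx t ht)
  · exact hfst (dirDeriv_comm hW.contDiff (1, b) _ ▸ hVtN x hx t ht) (hWttN x hx t ht)
  · have hequation := hW.equation x hx t (hI ht)
    rw [dirDeriv_left_right hW.contDiff, sub_eq_iff_eq_add] at hequation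
    change |∂[(1, 0)] (∂[(1, 0)] W) (x, t)| ≤ _
    rw [hequation]
    calc |q (x, t) * W (x, t) + b ^ 2 * ∂[(0, 1)] (∂[(0, 1)] W) (x, t)|
        ≤ |q (x, t)| * |W (x, t)| + b ^ 2 * |∂[(0, 1)] (∂[(0, 1)] W) (x, t)| := by
          refine (abs_add_le _ _).trans_eq ?_
          rw [abs_mul, abs_mul, abs_of_nonneg (sq_nonneg b)]
      _ ≤ Q * N + b ^ 2 * N := by
          gcongr
          exacts [hq x hx t (hI ht), hWN x hx t ht, hWttN x hx t ht]
      _ ≤ _ := by nlinarith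

lemma stripBound_partialDeriv_of_right (hW : IsCharacteristicSolution b P (fun z => q z * W z) W)
    (hq : PotentialBound b Q q) (hb : 0 < b) (hN : 0 ≤ N)
    (hVN : StripBound (∂[(1, b)] W) (Icc b T) N) {α β : ℕ} (hαβ : α + β ≤ 2) :
    StripBound ((∂[(1, 0)])^[α] ((∂[(0, 1)])^[β] W)) (Ico (6 * b) T)
      ((1 + b + b ^ 2 + Q) * (amplification b P Q ^ 3 * N)) := by
  set A := amplification b P Q
  have hA : 1 ≤ A := one_le_amplification hb hq.nonneg
  have hgrow {M : ℝ} (hM : 0 ≤ M) : M ≤ A * M := le_mul_of_one_le_left hM hA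
  have hN₁ : 0 ≤ A * N := hN.trans (hgrow hN)
  have hN₂ : 0 ≤ A * (A * N) := hN₁.trans (hgrow hN₁)
  have htimes {k : ℝ} (hk : k ≤ 4 * b) : Icc (4 * b) T ⊆ Icc k T := Icc_subset_Icc_left hk
  have hW₁ : StripBound W (Icc (2 * b) T) (A * N) :=
    (hVN.transport hW.differentiable hb.le fun t ht => hW.at_zero t (hb.le.trans ht.1)).mono
      (Icc_subset_Icc_left (by linarith))
      (mul_le_mul_of_nonneg_right (abs_add_one_le_amplification hb hq.nonneg) hN)
  have hV₁ : StripBound (∂[(1, b)] W) (Icc (2 * b) T) (A * N) :=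
    hVN.mono (Icc_subset_Icc_left (by linarith)) (hgrow hN)
  obtain ⟨hWt, hVt⟩ := hW.stripBound_firstOrder hq hb hN₁ (by positivity) hW₁ hV₁
  rw [show 2 * b + 2 * b = 4 * b by ring] at hWt hVt
  have hW₂ := hW₁.mono (htimes (by linarith)) (hgrow hN₁)
  have hV₂ := hV₁.mono (htimes (by linarith)) (hgrow hN₁)
  have hWtt := hW.stripBound_secondOrder hq hb hN₂ (by positivity) hW₂ hV₂ hWt hVt
  rw [show 4 * b + 2 * b = 6 * b by ring] at hWtt
  have hI : Ico (6 * b) T ⊆ Icc (4 * b) T := fun t ht => ⟨by linarith [ht.1], ht.2.le⟩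
  have hI₀ : Ico (6 * b) T ⊆ Ici 0 := fun t ht => (mul_nonneg (by norm_num) hb.le).trans ht.1
  have hfinal := hW.stripBound_partialDeriv hq.value hI₀ hb (hN₂.trans (hgrow hN₂))
    (hW₂.mono hI (hgrow hN₂)) (hV₂.mono hI (hgrow hN₂)) (hWt.mono hI (hgrow hN₂))
    (hVt.mono hI (hgrow hN₂)) hWtt hαβ
  exact hfinal.mono subset_rfl (le_of_eq (by ring))

lemma integral_initial_energy_le (hW : ContDiff ℝ 1 W) {k m : ℝ} (hk : 1 ≤ k)
    (hvalue : ∫ x in (0 : ℝ)..1, (W (x, 0) ^ 2 + ∂[(1, 0)] W (x, 0) ^ 2) ≤ m ^ 2)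
    (hvelocity : ∫ x in (0 : ℝ)..1, ∂[(0, 1)] W (x, 0) ^ 2 ≤ m ^ 2) :
    ∫ x in (0 : ℝ)..1, (W (x, 0) ^ 2 + k * ∂[(1, b)] W (x, 0) ^ 2) ≤
      2 * (k * (1 + b ^ 2) * m ^ 2) := by
  have hcont := hW.continuous
  have hcont' := continuous_dirDeriv hW
  have hpointwise (x : ℝ) : W (x, 0) ^ 2 + k * ∂[(1, b)] W (x, 0) ^ 2 ≤ k * (1 + b ^ 2) *
      ((W (x, 0) ^ 2 + ∂[(1, 0)] W (x, 0) ^ 2) + ∂[(0, 1)] W (x, 0) ^ 2) := by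
    rw [dirDeriv_pair W 1 b]
    have hvalue : W (x, 0) ^ 2 ≤ k * (1 + b ^ 2) * W (x, 0) ^ 2 :=
      le_mul_of_one_le_left (sq_nonneg _) (by nlinarith [sq_nonneg b])
    have hright : (1 * ∂[(1, 0)] W (x, 0) + b * ∂[(0, 1)] W (x, 0)) ^ 2 ≤
        (1 + b ^ 2) * (∂[(1, 0)] W (x, 0) ^ 2 + ∂[(0, 1)] W (x, 0) ^ 2) := by
      linarith [sq_nonneg (b * ∂[(1, 0)] W (x, 0) - ∂[(0, 1)] W (x, 0))]
    linarith [mul_le_mul_of_nonneg_left hright (zero_le_one.trans hk)]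
  calc ∫ x in (0 : ℝ)..1, (W (x, 0) ^ 2 + k * ∂[(1, b)] W (x, 0) ^ 2)
      ≤ ∫ x in (0 : ℝ)..1, k * (1 + b ^ 2) *
          ((W (x, 0) ^ 2 + ∂[(1, 0)] W (x, 0) ^ 2) + ∂[(0, 1)] W (x, 0) ^ 2) :=
        intervalIntegral.integral_mono zero_le_one
          (Continuous.intervalIntegrable (by fun_prop) _ _)
          (Continuous.intervalIntegrable (by fun_prop) _ _) hpointwise
    _ = k * (1 + b ^ 2) * ((∫ x in (0 : ℝ)..1, (W (x, 0) ^ 2 + ∂[(1, 0)] W (x, 0) ^ 2)) +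
          ∫ x in (0 : ℝ)..1, ∂[(0, 1)] W (x, 0) ^ 2) := by
        rw [intervalIntegral.integral_const_mul, intervalIntegral.integral_add
          (Continuous.intervalIntegrable (by fun_prop) _ _)
          (Continuous.intervalIntegrable (by fun_prop) _ _)]
    _ ≤ k * (1 + b ^ 2) * (m ^ 2 + m ^ 2) := by gcongr
    _ = 2 * (k * (1 + b ^ 2) * m ^ 2) := by ring

lemma stripBound_right_of_initial (hW : IsCharacteristicSolution b P f W) (hb : 0 < b)
    (hQ : 0 ≤ Q) (hf : ∀ x ∈ Icc (0 : ℝ) 1, ∀ t ≥ 0, |f (x, t)| ≤ Q * |W (x, t)|)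
    {m : ℝ} (hm : 0 ≤ m)
    (hvalue : ∫ x in (0 : ℝ)..1, (W (x, 0) ^ 2 + ∂[(1, 0)] W (x, 0) ^ 2) ≤ m ^ 2)
    (hvelocity : ∫ x in (0 : ℝ)..1, ∂[(0, 1)] W (x, 0) ^ 2 ≤ m ^ 2) (T : ℝ) :
    StripBound (∂[(1, b)] W) (Icc b T) (Q *
      (√((1 + P ^ 2) * (1 + b ^ 2)) * rexp (growthRate b P Q / 2 * (T + b)) * m)) := by
  intro x hx t ht
  refine (hW.abs_right_le hb.le hQ hf hx (by nlinarith [ht.1, hx.1])).trans ?_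
  gcongr
  refine Real.sqrt_le_iff.2 ⟨by positivity, ?_⟩
  have henergy := hW.integral_sq_characteristic_le hb hQ hf (s := t + b * x)
    (by nlinarith [ht.1, hx.1])
  have hinitial := integral_initial_energy_le (b := b) (hW.contDiff.of_le one_le_two)
    (by nlinarith [sq_nonneg P] : 1 ≤ 1 + P ^ 2) hvalue hvelocity
  have hexp : rexp (growthRate b P Q * (t + b * x)) ≤
      rexp (growthRate b P Q / 2 * (T + b)) ^ 2 := by
    have hν : 0 ≤ growthRate b P Q := div_nonneg (by positivity) hb.le
    have htime : t + b * x ≤ T + b := by nlinarith [ht.2, hx.2]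
    rw [← exp_nat_mul, exp_le_exp]
    push_cast
    linarith [mul_le_mul_of_nonneg_left htime hν]
  rw [mul_pow, mul_pow, sq_sqrt (by positivity)]
  have hbound := henergy.trans (mul_le_mul hexp hinitial (intervalIntegral.integral_nonneg
    zero_le_one fun y _ => by positivity) (by positivity))
  linarith

lemma abs_partialDeriv_le_of_initial
    (hW : IsCharacteristicSolution b P (fun z => q z * W z) W) (hq : PotentialBound b Q q)
    (hb : 0 < b) {m : ℝ} (hm : 0 ≤ m)
    (hvalue : ∫ x in (0 : ℝ)..1, (W (x, 0) ^ 2 + ∂[(1, 0)] W (x, 0) ^ 2) ≤ m ^ 2)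
    (hvelocity : ∫ x in (0 : ℝ)..1, ∂[(0, 1)] W (x, 0) ^ 2 ≤ m ^ 2)
    {α β : ℕ} (hαβ : α + β ≤ 2) {x t : ℝ} (hx : x ∈ Icc (0 : ℝ) 1) (ht : 6 * b ≤ t) :
    |(∂[(1, 0)])^[α] ((∂[(0, 1)])^[β] W) (x, t)| ≤
      smoothingConst b P Q * rexp (growthRate b P Q / 2 * t) * m := by
  have hQ := hq.nonneg
  have hsource : ∀ x ∈ Icc (0 : ℝ) 1, ∀ t ≥ 0, |q (x, t) * W (x, t)| ≤ Q * |W (x, t)| :=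
    fun x hx t ht => (abs_mul _ _).trans_le
      (mul_le_mul_of_nonneg_right (hq.value x hx t ht) (abs_nonneg _))
  have hright := hW.stripBound_right_of_initial hb hQ hsource hm hvalue hvelocity (t + 1)
  refine (hW.stripBound_partialDeriv_of_right hq hb (by positivity) hright hαβ x hx t
    ⟨ht, lt_add_one t⟩).trans_eq ?_
  have hexp : rexp (growthRate b P Q / 2 * (t + 1 + b)) =
      rexp (growthRate b P Q / 2 * (1 + b)) * rexp (growthRate b P Q / 2 * t) := by
    rw [← exp_add]
    ring_nf
  rw [hexp, smoothingConst]
  ring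

end IsCharacteristicSolution

end Smoothing

section ClassicalSolution

lemma potentialBound_of_norm_iteratedFDeriv_le {c : ℝ × ℝ → ℝ} {b C₀ : ℝ} (hc : ContDiff ℝ 2 c)
    (hb : 0 ≤ b) (hbound : ∀ k ≤ 2, ∀ z ∈ Icc (0 : ℝ) 1 ×ˢ Ici (0 : ℝ),
      ‖iteratedFDeriv ℝ k c z‖ ≤ C₀) :
    PotentialBound b (b ^ 2 * (C₀ * (1 + b))) (fun z => b ^ 2 * c z) := by
  have hC₀ : 0 ≤ C₀ := (norm_nonneg _).trans (hbound 0 (by simp) 0 (by simp))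
  have hnorm_right : ‖((1, b) : ℝ × ℝ)‖ ≤ 1 + b := by
    simp [Prod.norm_def, abs_of_nonneg hb, hb]
  have hnorm_time : ‖((0, 1) : ℝ × ℝ)‖ ≤ 1 := by simp
  have hscale {F : ℝ × ℝ → ℝ} {z : ℝ × ℝ} (hF : |F z| ≤ C₀ * (1 + b)) :
      |b ^ 2 * F z| ≤ b ^ 2 * (C₀ * (1 + b)) := by
    rw [abs_mul, abs_of_nonneg (sq_nonneg b)]
    gcongr
  have hfirst (v z : ℝ × ℝ) : ∂[v] (fun z => b ^ 2 * c z) z = b ^ 2 * ∂[v] c z :=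
    dirDeriv_const_mul (hc.differentiable two_ne_zero) _ _ _
  have hsecond (v w z : ℝ × ℝ) :
      ∂[v] (∂[w] (fun z => b ^ 2 * c z)) z = b ^ 2 * ∂[v] (∂[w] c) z := by
    rw [funext (hfirst w), dirDeriv_const_mul
      ((contDiff_dirDeriv hc (m := 1) (by norm_num) w).differentiable one_ne_zero)]
  refine ⟨contDiff_const.mul hc, fun x hx t ht => hscale ?_, fun x hx t ht => ?_,
    fun x hx t ht => ?_, fun x hx t ht => ?_⟩
  · rw [← Real.norm_eq_abs, ← norm_iteratedFDeriv_zero (𝕜 := ℝ)]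
    exact (hbound 0 (by simp) _ ⟨hx, ht⟩).trans (le_mul_of_one_le_right hC₀ (by linarith))
  · rw [hfirst]
    refine hscale ((abs_dirDeriv_le c _ _).trans ?_)
    gcongr
    exact hbound 1 (by simp) _ ⟨hx, ht⟩
  · rw [hfirst]
    refine hscale ((abs_dirDeriv_le c _ _).trans ?_)
    gcongr
    exacts [hbound 1 (by simp) _ ⟨hx, ht⟩, hnorm_time.trans (by linarith)]
  · rw [hsecond]
    refine hscale ((abs_dirDeriv_dirDeriv_le hc _ _ _).trans ?_)
    gcongr
    exacts [hbound 2 le_rfl _ ⟨hx, ht⟩,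
      (mul_le_mul hnorm_time hnorm_right (norm_nonneg _) zero_le_one).trans_eq (one_mul _)]

variable {a p : ℝ} {c w : ℝ → ℝ → ℝ}

lemma deriv_fst_eq (hw : Differentiable ℝ (fun z : ℝ × ℝ => w z.1 z.2)) (x t : ℝ) :
    deriv (fun y => w y t) x = ∂[(1, 0)] (fun z : ℝ × ℝ => w z.1 z.2) (x, t) :=
  (hasDerivAt_fst hw x t).deriv

lemma deriv_snd_eq (hw : Differentiable ℝ (fun z : ℝ × ℝ => w z.1 z.2)) (x t : ℝ) :
    deriv (w x) t = ∂[(0, 1)] (fun z : ℝ × ℝ => w z.1 z.2) (x, t) :=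
  (hasDerivAt_snd hw x t).deriv

lemma characteristic_equation_of_wave_equation (ha : a ≠ 0)
    (hc : Continuous (fun z : ℝ × ℝ => c z.1 z.2)) (hw : ContDiff ℝ 2 (fun z : ℝ × ℝ => w z.1 z.2))
    (hwave : ∀ x ∈ Ioo (0 : ℝ) 1, ∀ t > (0 : ℝ), deriv (deriv (w x)) t
      - a ^ 2 * deriv (fun y => deriv (fun z => w z t) y) x + c x t * w x t = 0) :
    EqOn (∂[(1, -a⁻¹)] (∂[(1, a⁻¹)] (fun z : ℝ × ℝ => w z.1 z.2)))
      (fun z => a⁻¹ ^ 2 * c z.1 z.2 * w z.1 z.2) (Icc 0 1 ×ˢ Ici 0) := by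
  have hw₁ (v : ℝ × ℝ) := contDiff_dirDeriv hw (m := 1) (by norm_num) v
  have hd := hw.differentiable two_ne_zero
  have hd₁ (v : ℝ × ℝ) := (hw₁ v).differentiable one_ne_zero
  have hinterior : EqOn (∂[(1, -a⁻¹)] (∂[(1, a⁻¹)] (fun z : ℝ × ℝ => w z.1 z.2)))
      (fun z => a⁻¹ ^ 2 * c z.1 z.2 * w z.1 z.2) (Ioo 0 1 ×ˢ Ioi 0) := by
    rintro ⟨x, t⟩ ⟨hx, ht⟩
    have h := hwave x hx t ht
    rw [funext (deriv_snd_eq hd x), (hasDerivAt_snd (hd₁ _) x t).deriv,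
      funext fun y => deriv_fst_eq hd y t, (hasDerivAt_fst (hd₁ _) x t).deriv] at h
    rw [dirDeriv_left_right hw]
    field_simp
    linarith
  simpa only [closure_prod_eq, closure_Ioo zero_ne_one, closure_Ioi] using
    hinterior.closure (continuous_dirDeriv (hw₁ _) _) (by have := hw.continuous; fun_prop)

lemma eqOn_Ici_of_eqOn_Ioi {f g : ℝ → ℝ} (hf : Continuous f) (hg : Continuous g)
    (h : ∀ t > 0, f t = g t) : ∀ t ≥ 0, f t = g t := by
  have hclosure := EqOn.closure (s := Ioi (0 : ℝ)) h hf hg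
  rwa [closure_Ioi] at hclosure

lemma isCharacteristicSolution_of_wave_problem (ha : a ≠ 0)
    (hc : Continuous (fun z : ℝ × ℝ => c z.1 z.2)) (hw : ContDiff ℝ 2 (fun z : ℝ × ℝ => w z.1 z.2))
    (hwave : ∀ x ∈ Ioo (0 : ℝ) 1, ∀ t > (0 : ℝ), deriv (deriv (w x)) t
      - a ^ 2 * deriv (fun y => deriv (fun z => w z t) y) x + c x t * w x t = 0)
    (hzero : ∀ t > (0 : ℝ), w 0 t = p * (deriv (w 0) t + a * deriv (fun y => w y t) 0))
    (hone : ∀ t > (0 : ℝ), deriv (w 1) t + a * deriv (fun y => w y t) 1 = 0) :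
    IsCharacteristicSolution a⁻¹ (p * a) (fun z => a⁻¹ ^ 2 * c z.1 z.2 * w z.1 z.2)
      (fun z => w z.1 z.2) := by
  have hcont := hw.continuous
  have hcont_right := continuous_dirDeriv (hw.of_le one_le_two) ((1, a⁻¹) : ℝ × ℝ)
  have hright (x t : ℝ) : deriv (w x) t + a * deriv (fun y => w y t) x =
      a * ∂[(1, a⁻¹)] (fun z : ℝ × ℝ => w z.1 z.2) (x, t) := by
    rw [deriv_fst_eq (hw.differentiable two_ne_zero), deriv_snd_eq (hw.differentiable two_ne_zero),
      dirDeriv_pair _ 1 a⁻¹]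
    field_simp
    ring
  refine ⟨hw, fun x hx t ht => characteristic_equation_of_wave_equation ha hc hw hwave ⟨hx, ht⟩,
    eqOn_Ici_of_eqOn_Ioi (by fun_prop) (by fun_prop) fun t ht => ?_,
    eqOn_Ici_of_eqOn_Ioi (by fun_prop) continuous_const fun t ht => ?_⟩
  · rw [hzero t ht, hright, mul_assoc]
  · exact (mul_eq_zero.1 ((hright 1 t).symm.trans (hone t ht))).resolve_left ha

end ClassicalSolution

end PerturbedWave

open PerturbedWave in
theorem perturbed_wave_C2_smoothing_bound_general
    (a p C₀ : ℝ) (ha : 0 < a) (hC₀ : 0 < C₀) :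
    ∃ M₁ > (0 : ℝ), ∃ ω > (0 : ℝ),
      ∀ c : ℝ → ℝ → ℝ,
        ContDiff ℝ 2 (fun q : ℝ × ℝ => c q.1 q.2) →
        (∀ k ≤ 2, ∀ q ∈ Set.Icc (0 : ℝ) 1 ×ˢ Set.Ici (0 : ℝ),
          ‖iteratedFDeriv ℝ k (fun q : ℝ × ℝ => c q.1 q.2) q‖ ≤ C₀) →
      ∀ w : ℝ → ℝ → ℝ,
        ContDiff ℝ 2 (fun q : ℝ × ℝ => w q.1 q.2) →
        (∀ x ∈ Set.Ioo (0 : ℝ) 1, ∀ t > (0 : ℝ),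
          deriv (deriv (w x)) t
            - a ^ 2 * deriv (fun y => deriv (fun z => w z t) y) x
            + c x t * w x t = 0) →
        (∀ t > (0 : ℝ), w 0 t = p * (deriv (w 0) t + a * deriv (fun y => w y t) 0)) →
        (∀ t > (0 : ℝ), deriv (w 1) t + a * deriv (fun y => w y t) 1 = 0) →
      ∀ α β : ℕ, α + β ≤ 2 → ∀ t ≥ 6 / a, ∀ x ∈ Set.Icc (0 : ℝ) 1,
        |pdxt w α β x t| ≤
          M₁ * Real.exp (ω * t) *
            max (Real.sqrt (∫ x in (0 : ℝ)..1,
                  ((w x 0) ^ 2 + (deriv (fun y => w y 0) x) ^ 2)))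
                (Real.sqrt (∫ x in (0 : ℝ)..1, (deriv (w x) 0) ^ 2)) := by
  have hb : 0 < a⁻¹ := inv_pos.2 ha
  refine ⟨smoothingConst a⁻¹ (p * a) (a⁻¹ ^ 2 * (C₀ * (1 + a⁻¹))),
    smoothingConst_pos hb (by positivity),
    growthRate a⁻¹ (p * a) (a⁻¹ ^ 2 * (C₀ * (1 + a⁻¹))) / 2,
    half_pos (div_pos (by positivity) hb),
    fun c hc hbound w hw hwave hzero hone α β hαβ t ht x hx => ?_⟩
  have hd := hw.differentiable two_ne_zero
  have hW := isCharacteristicSolution_of_wave_problem ha.ne' hc.continuous hw hwave hzero hone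
  have hq := potentialBound_of_norm_iteratedFDeriv_le hc hb.le hbound
  rw [pdxt_eq (hw.of_le (by exact_mod_cast hαβ))]
  simp only [deriv_fst_eq hd, deriv_snd_eq hd]
  exact hW.abs_partialDeriv_le_of_initial hq hb (le_max_of_le_left (Real.sqrt_nonneg _))
    ((Real.sqrt_le_left (le_max_of_le_left (Real.sqrt_nonneg _))).1 (le_max_left _ _))
    ((Real.sqrt_le_left (le_max_of_le_left (Real.sqrt_nonneg _))).1 (le_max_right _ _))
    hαβ hx ht

/-- estimate (bound2) of Theorem 2 of the paper, for classical solutions.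
Let `a > 0`, `p ∈ ℝ`, `C₀ > 0`. There exist `M₁ > 0` and `ω > 0` such that for every `C²`
coefficient `c` with all partial derivatives up to order 2 bounded by `C₀`, and every `C²`
solution `w` of the perturbed wave problem, for all `α + β ≤ 2` and all `t ≥ 6/a`,
`sup_x |∂ₓ^α ∂ₜ^β w(x,t)| ≤ M₁ e^{ωt} max(‖w(·,0)‖_{H¹}, ‖wₜ(·,0)‖_{L²})`. -/
theorem perturbed_wave_C2_smoothing_bound
    (a p C₀ : ℝ) (ha : 0 < a) (hC₀ : 0 < C₀) :
    ∃ M₁ > (0:ℝ), ∃ ω > (0:ℝ),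
      ∀ c : ℝ → ℝ → ℝ,
        ContDiff ℝ 2 (fun q : ℝ × ℝ => c q.1 q.2) →
        (∀ k : ℕ, k ≤ 2 → ∀ q : ℝ × ℝ,
          ‖iteratedFDeriv ℝ k (fun q : ℝ × ℝ => c q.1 q.2) q‖ ≤ C₀) →
      ∀ w : ℝ → ℝ → ℝ,
        ContDiff ℝ 2 (fun q : ℝ × ℝ => w q.1 q.2) →
        -- the perturbed wave equation ∂ₜ²w − a²∂ₓ²w + c·w = 0 on (0,1)×(0,∞)
        (∀ x ∈ Set.Ioo (0:ℝ) 1, ∀ t > (0:ℝ),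
          deriv (deriv (w x)) t
            - a ^ 2 * deriv (fun y => deriv (fun z => w z t) y) x
            + c x t * w x t = 0) →
        -- boundary condition at x = 0 : w(0,t) = p (wₜ + a wₓ)(0,t)
        (∀ t > (0:ℝ),
          w 0 t = p * (deriv (w 0) t + a * deriv (fun y => w y t) 0)) →
        -- boundary condition at x = 1 : (wₜ + a wₓ)(1,t) = 0
        (∀ t > (0:ℝ),
          deriv (w 1) t + a * deriv (fun y => w y t) 1 = 0) →
      ∀ α β : ℕ, α + β ≤ 2 → ∀ t ≥ 6 / a, ∀ x ∈ Set.Icc (0:ℝ) 1,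
        |pdxt w α β x t| ≤
          M₁ * Real.exp (ω * t) *
            max (Real.sqrt (∫ x in (0:ℝ)..1,
                  ((w x 0) ^ 2 + (deriv (fun y => w y 0) x) ^ 2)))
                (Real.sqrt (∫ x in (0:ℝ)..1, (deriv (w x) 0) ^ 2)) :=
  let ⟨M₁, hM₁, ω, hω, hbound⟩ := perturbed_wave_C2_smoothing_bound_general a p C₀ ha hC₀
  ⟨M₁, hM₁, ω, hω, fun c hc hc₀ => hbound c hc fun k hk q _ => hc₀ k hk q⟩
end

section
/- Let a > 0 and p ∈ ℝ be fixed, and set T = 6/a. For every γ > 0 there exist ε > 0 and M₂ > 0 such that the following holds: for every function c : [0,1]×[0,∞) → ℝ that is twice continuously differentiable with all partial derivatives up to order 2 bounded in absolute value by ε, and every twice continuously differentiable function w : [0,1]×[0,∞) → ℝ satisfying ∂²_t w − a² ∂²_x w + c·w = 0 on (0,1)×(0,∞), w(0,t) = p·(∂_t w + a ∂_x w)(0,t) and (∂_t w + a ∂_x w)(1,t) = 0 for all t > 0, one has for every pair of nonnegative integers α, β with α + β ≤ 2 and every t > T: sup_{x∈[0,1]} |∂_x^α ∂_t^β w(x,t)|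 ≤ M₂ e^{−γ t} · max{ (∫_0^1 [w(x,0)² + (∂_x w(x,0))²] dx)^{1/2}, (∫_0^1 (∂_t w(x,0))² dx)^{1/2} }. -/
/-!
The wave operator factorises as `(∂ₜ - a ∂ₓ)(∂ₜ + a ∂ₓ)`, so with `u = (∂ₜ + a ∂ₓ) w` the problem is
a pair of transport equations: `u` enters with the value `0` at `x = 1` and travels to the left,
`w` enters with the value `p u` at `x = 0` and travels to the right. For `c = 0` everything has left
the interval by the time `2 / a`. For small `c` the source `-c w` feeds back into `w` with a gain
below `1 / 2`, even after weighting by `e^{γ t}`, so that any bound `m e^{-γ t}` for the part of `w`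
created by the source improves to `(K + m / 2) e^{-γ t}`.

The boundary conditions also smooth: after time `1 / a` the characteristics of `u` start from the
zero boundary value, so `∂ₜ u` is controlled by the source and its derivative along `(a, 1)`, which
involves only `w` and `u`; one more crossing controls `∂ₜ w`. On top of the initial
`2 / a`, each order of differentiation thus costs `2 / a`, whence `6 / a` for second order.
-/

open Set MeasureTheory Topology

section DirectionalDerivative

variable {E F : Type*} [NormedAddCommGroup E] [NormedSpace ℝ E] [NormedAddCommGroup F]
  [NormedSpace ℝ F] {f : E → F} {v q : E}

/-- The derivative of `f` along the constant vector field `v`. Unlike `lineDeriv`, it is an operator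
on functions, so that it can be iterated and commuted. -/
noncomputable def dirDeriv (v : E) (f : E → F) (q : E) : F := fderiv ℝ f q v

theorem contDiff_dirDeriv {m n : WithTop ℕ∞} (hf : ContDiff ℝ n f) (hmn : m + 1 ≤ n) (v : E) :
    ContDiff ℝ m (dirDeriv v f) :=
  (hf.fderiv_right hmn).clm_apply contDiff_const

theorem dirDeriv_dirDeriv (hf : ContDiff ℝ 2 f) (v v' q : E) :
    dirDeriv v (dirDeriv v' f) q = fderiv ℝ (fderiv ℝ f) q v v' := by
  have hf' : Differentiable ℝ (fderiv ℝ f) :=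
    (hf.fderiv_right one_add_one_eq_two.le).differentiable one_ne_zero
  change fderiv ℝ (fun q => fderiv ℝ f q v') q v = _
  simp [fderiv_clm_apply (hf' q) (differentiableAt_const _)]

theorem dirDeriv_comm (hf : ContDiff ℝ 2 f) (v v' : E) :
    dirDeriv v (dirDeriv v' f) = dirDeriv v' (dirDeriv v f) := by
  ext q
  rw [dirDeriv_dirDeriv hf, dirDeriv_dirDeriv hf]
  exact hf.contDiffAt.isSymmSndFDerivAt (by simp) v v'

theorem dirDeriv_neg (v : E) (f : E → F) : dirDeriv v (-f) = -dirDeriv v f := by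
  ext q
  simp [dirDeriv, fderiv_neg]

theorem dirDeriv_add {g : E → F} (hf : Differentiable ℝ f) (hg : Differentiable ℝ g) (v : E) :
    dirDeriv v (f + g) = dirDeriv v f + dirDeriv v g := by
  ext q
  simp [dirDeriv, fderiv_add (hf q) (hg q)]

theorem dirDeriv_fwdDiff (hf : Differentiable ℝ f) (v h : E) :
    dirDeriv v (fwdDiff h f) = fwdDiff h (dirDeriv v f) := by
  ext q
  have hfh : DifferentiableAt ℝ (fun q => f (q + h)) q := (hf _).comp q (by fun_prop)
  change fderiv ℝ (fun q => f (q + h) - f q) q v = _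
  simp [fderiv_fun_sub hfh (hf q), fderiv_comp_add_right, fwdDiff, dirDeriv]

theorem contDiff_fwdDiff {n : WithTop ℕ∞} (hf : ContDiff ℝ n f) (h : E) :
    ContDiff ℝ n (fwdDiff h f) :=
  (hf.comp (contDiff_id.add contDiff_const)).sub hf

theorem contDiff_iterate_dirDeriv {m n : ℕ} (hf : ContDiff ℝ (m + n : ℕ) f) (v : E) :
    ContDiff ℝ m ((dirDeriv v)^[n] f) := by
  induction n generalizing f with
  | zero => exact hf
  | succ n ih => exact ih (contDiff_dirDeriv hf (by norm_cast) v)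

theorem hasDerivAt_line (hf : Differentiable ℝ f) (q v : E) (s : ℝ) :
    HasDerivAt (fun s : ℝ => f (q + s • v)) (dirDeriv v f (q + s • v)) s := by
  have hq : HasDerivAt (fun s : ℝ => q + s • v) v s := by
    simpa using ((hasDerivAt_id s).smul_const v).const_add q
  exact (hf _).hasFDerivAt.comp_hasDerivAt s hq

theorem iteratedDeriv_line {n : ℕ} (hf : ContDiff ℝ n f) (q v : E) (s : ℝ) :
    iteratedDeriv n (fun s : ℝ => f (q + s • v)) s = (dirDeriv v)^[n] f (q + s • v) := by
  induction n generalizing f with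
  | zero => simp
  | succ n ih =>
    rw [iteratedDeriv_succ', Function.iterate_succ_apply,
      funext fun s => (hasDerivAt_line (hf.differentiable (by simp)) q v s).deriv]
    exact ih (contDiff_dirDeriv hf (by norm_cast) v)

theorem norm_dirDeriv_le (v q : E) :
    ‖dirDeriv v f q‖ ≤ ‖iteratedFDeriv ℝ 1 f q‖ * ‖v‖ := by
  rw [norm_iteratedFDeriv_one]
  exact (fderiv ℝ f q).le_opNorm v

theorem norm_dirDeriv_dirDeriv_le (hf : ContDiff ℝ 2 f) (v v' q : E) :
    ‖dirDeriv v (dirDeriv v' f) q‖ ≤ ‖iteratedFDeriv ℝ 2 f q‖ * ‖v‖ * ‖v'‖ := by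
  rw [dirDeriv_dirDeriv hf, ← norm_iteratedFDeriv_fderiv, norm_iteratedFDeriv_one]
  exact (fderiv ℝ (fderiv ℝ f) q).le_opNorm₂ v v'

theorem norm_sub_le_integral_of_norm_dirDeriv_le (hf : ContDiff ℝ 1 f) {φ : ℝ → ℝ} {ρ : ℝ}
    (hρ : 0 ≤ ρ) (hφ : IntervalIntegrable φ volume 0 ρ)
    (h : ∀ σ ∈ Ioo 0 ρ, ‖dirDeriv v f (q + σ • v)‖ ≤ φ σ) :
    ‖f (q + ρ • v) - f q‖ ≤ ∫ σ in 0..ρ, φ σ := by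
  have hline := hasDerivAt_line (hf.differentiable one_ne_zero) q v
  simpa using norm_sub_le_integral_of_norm_deriv_le_of_le hρ
    (fun σ _ => (hline σ).continuousAt.continuousWithinAt)
    (fun σ _ => (hline σ).differentiableAt.differentiableWithinAt)
    (.of_forall fun σ hσ => (hline σ).deriv ▸ h σ hσ)
    hφ

theorem norm_le_add_integral_of_norm_dirDeriv_le (hf : ContDiff ℝ 1 f) {φ : ℝ → ℝ} {ρ : ℝ}
    (hρ : 0 ≤ ρ) (hφ : IntervalIntegrable φ volume 0 ρ)
    (h : ∀ σ ∈ Ioo 0 ρ, ‖dirDeriv v f (q - σ • v)‖ ≤ φ σ) :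
    ‖f q‖ ≤ ‖f (q - ρ • v)‖ + ∫ σ in 0..ρ, φ σ := by
  have hback := norm_sub_le_integral_of_norm_dirDeriv_le (v := -v) (q := q) hf hρ hφ
    fun σ hσ => by simpa [dirDeriv, sub_eq_add_neg] using h σ hσ
  rw [smul_neg, ← sub_eq_add_neg] at hback
  linarith [norm_le_norm_add_norm_sub' (f q) (f (q - ρ • v)), norm_sub_rev (f q) (f (q - ρ • v))]

theorem norm_dirDeriv_le_of_norm_fwdDiff_le (hf : DifferentiableAt ℝ f q) {C : ℝ}
    (h : ∀ᶠ η in 𝓝[>] (0 : ℝ), ‖fwdDiff (η • v) f q‖ ≤ C * η) : ‖dirDeriv v f q‖ ≤ C := by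
  refine le_of_tendsto (hf.hasFDerivAt.hasLineDerivAt v).tendsto_slope_zero_right.norm ?_
  filter_upwards [h, self_mem_nhdsWithin] with η hη (hη₀ : 0 < η)
  rw [norm_smul, Real.norm_of_nonneg (inv_nonneg.2 hη₀.le), inv_mul_le_iff₀ hη₀]
  linarith [show ‖f (q + η • v) - f q‖ ≤ C * η from hη]

end DirectionalDerivative

theorem dirDeriv_mul {E : Type*} [NormedAddCommGroup E] [NormedSpace ℝ E] {f g : E → ℝ}
    (hf : Differentiable ℝ f) (hg : Differentiable ℝ g) (v : E) :
    dirDeriv v (f * g) = dirDeriv v f * g + f * dirDeriv v g := by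
  ext q
  simp only [dirDeriv, fderiv_mul (hf q) (hg q), Pi.add_apply, Pi.mul_apply, _root_.add_apply,
    _root_.smul_apply, smul_eq_mul]
  ring

section ExpBound

/-- `|f (x, t)| ≤ A e^{-γ t}` for `x ∈ [0, 1]` and `t ≥ τ`. -/
def ExpBound (γ τ A : ℝ) (f : ℝ × ℝ → ℝ) : Prop :=
  ∀ x ∈ Icc (0 : ℝ) 1, ∀ t ≥ τ, |f (x, t)| ≤ A * Real.exp (-γ * t)

/-- `|f| ≤ b` on the strip `[0, 1] × [0, ∞)`. -/
def StripBound (b : ℝ) (f : ℝ × ℝ → ℝ) : Prop :=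
  ∀ x ∈ Icc (0 : ℝ) 1, ∀ t ≥ 0, |f (x, t)| ≤ b

variable {γ τ τ' A B b k s : ℝ} {f g : ℝ × ℝ → ℝ}

theorem exp_neg_mul_le {d t : ℝ} (hγ : 0 ≤ γ) (h : t - d ≤ s) :
    Real.exp (-γ * s) ≤ Real.exp (γ * d) * Real.exp (-γ * t) := by
  rw [← Real.exp_add, Real.exp_le_exp]
  nlinarith

theorem ExpBound.mono (hf : ExpBound γ τ A f) (hτ : τ ≤ τ') (hAB : A ≤ B) :
    ExpBound γ τ' B f := fun x hx t ht =>
  (hf x hx t (hτ.trans ht)).trans (by gcongr)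

theorem ExpBound.nonneg (hf : ExpBound γ τ A f) : 0 ≤ A :=
  nonneg_of_mul_nonneg_left ((abs_nonneg _).trans (hf 0 (by simp) τ le_rfl)) (Real.exp_pos _)

theorem ExpBound.neg (hf : ExpBound γ τ A f) : ExpBound γ τ A (-f) := fun x hx t ht => by
  simpa using hf x hx t ht

theorem ExpBound.add (hf : ExpBound γ τ A f) (hg : ExpBound γ τ B g) :
    ExpBound γ τ (A + B) (f + g) := fun x hx t ht => by
  rw [add_mul]
  exact (abs_add_le _ _).trans (add_le_add (hf x hx t ht) (hg x hx t ht))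

theorem ExpBound.mul_left (hf : ExpBound γ τ A f) (hτ : 0 ≤ τ) (hg : StripBound b g) :
    ExpBound γ τ (b * A) (g * f) := fun x hx t ht => by
  have hb := hg x hx t (hτ.trans ht)
  rw [Pi.mul_apply, abs_mul, mul_assoc]
  exact mul_le_mul hb (hf x hx t ht) (abs_nonneg _) ((abs_nonneg _).trans hb)

theorem ExpBound.dirDeriv_fst (hs : s ≠ 0) (hchar : ExpBound γ τ A (dirDeriv (s, 1) f))
    (htime : ExpBound γ τ B (dirDeriv (0, 1) f)) :
    ExpBound γ τ ((A + B) / |s|) (dirDeriv (1, 0) f) := fun x hx t ht => by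
  have hsplit : dirDeriv (s, 1) f (x, t) - dirDeriv (0, 1) f (x, t) =
      s * dirDeriv (1, 0) f (x, t) := by
    simp only [dirDeriv, ← map_sub, ← smul_eq_mul, ← map_smul]
    simp
  rw [div_mul_eq_mul_div, le_div_iff₀' (abs_pos.2 hs), ← abs_mul, ← hsplit, add_mul]
  exact (abs_sub _ _).trans (add_le_add (hchar x hx t ht) (htime x hx t ht))

theorem abs_fwdDiff_smul_le (hγ : 0 ≤ γ) (hf : ContDiff ℝ 1 f)
    (hdf : ExpBound γ τ A (dirDeriv (k, 1) f)) {x t η : ℝ} (hη : 0 ≤ η) (hx : x ∈ Icc (0 : ℝ) 1)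
    (hxη : x + k * η ∈ Icc (0 : ℝ) 1) (ht : τ ≤ t) :
    |fwdDiff (η • (k, 1)) f (x, t)| ≤ A * η * Real.exp (-γ * t) := by
  have hA := hdf.nonneg
  have hstep := norm_sub_le_integral_of_norm_dirDeriv_le (q := (x, t)) (v := (k, 1)) hf hη
    intervalIntegrable_const (φ := fun _ => A * Real.exp (-γ * t)) fun σ hσ => by
      have hxσ : x + σ * k ∈ Icc (0 : ℝ) 1 := by
        rcases le_total 0 k with hk | hk <;>
          constructor <;> nlinarith [hx.1, hx.2, hxη.1, hxη.2, hσ.1, hσ.2]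
      simp only [Prod.smul_mk, Prod.mk_add_mk, smul_eq_mul, mul_one, Real.norm_eq_abs]
      refine (hdf _ hxσ (t + σ) (by linarith [hσ.1])).trans ?_
      have := hσ.1
      gcongr ?_ * Real.exp ?_
      nlinarith
  simpa [fwdDiff, mul_comm, mul_left_comm, mul_assoc] using hstep

theorem expBound_dirDeriv_time_iff (hγ : 0 ≤ γ) (hf : ContDiff ℝ 1 f) :
    ExpBound γ τ A (dirDeriv (0, 1) f) ↔ ∀ h > 0, ExpBound γ τ (A * h) (fwdDiff (0, h) f) := by
  constructor
  · intro hdf h hh x hx t ht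
    simpa using abs_fwdDiff_smul_le hγ hf hdf hh.le hx (by simpa using hx) ht
  · intro hdiff x hx t ht
    refine norm_dirDeriv_le_of_norm_fwdDiff_le (hf.differentiable one_ne_zero _) ?_
    filter_upwards [self_mem_nhdsWithin] with h (hh : 0 < h)
    simpa [mul_right_comm] using hdiff h hh x hx t ht

end ExpBound

section Transport

/-- `u` is a `C¹` solution of the transport equation `∂ₜu + k ∂ₓu = F` on the strip
`[0, 1] × [0, ∞)`. -/
structure IsTransport (k : ℝ) (F u : ℝ × ℝ → ℝ) : Prop where
  contDiff : ContDiff ℝ 1 u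
  dirDeriv_eq : ∀ x ∈ Icc (0 : ℝ) 1, ∀ t ≥ 0, dirDeriv (k, 1) u (x, t) = F (x, t)

variable {a p k γ τ A A' : ℝ} {F u w : ℝ × ℝ → ℝ}

theorem IsTransport.fwdDiff_time (hu : IsTransport k F u) {h : ℝ} (hh : 0 ≤ h) :
    IsTransport k (fwdDiff (0, h) F) (fwdDiff (0, h) u) where
  contDiff := contDiff_fwdDiff hu.contDiff _
  dirDeriv_eq x hx t ht := by
    rw [dirDeriv_fwdDiff (hu.contDiff.differentiable one_ne_zero)]
    simp [fwdDiff, hu.dirDeriv_eq x hx _ ht, hu.dirDeriv_eq x hx _ (add_nonneg ht hh)]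

theorem IsTransport.abs_le_add_integral (hu : IsTransport k F u) {φ : ℝ → ℝ} {x t ρ : ℝ}
    (hρ : 0 ≤ ρ) (hφ : IntervalIntegrable φ volume 0 ρ) (hx : x ∈ Icc (0 : ℝ) 1)
    (hxρ : x - k * ρ ∈ Icc (0 : ℝ) 1) (ht : ρ ≤ t)
    (hF : ∀ σ ∈ Ioo 0 ρ, x - k * σ ∈ Icc (0 : ℝ) 1 → |F (x - k * σ, t - σ)| ≤ φ σ) :
    |u (x, t)| ≤ |u (x - k * ρ, t - ρ)| + ∫ σ in 0..ρ, φ σ := by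
  have hback := norm_le_add_integral_of_norm_dirDeriv_le (q := (x, t)) (v := (k, 1)) hu.contDiff
    hρ hφ fun σ hσ => by
      have hxσ : x - k * σ ∈ Icc (0 : ℝ) 1 := by
        rcases le_total 0 k with hk | hk <;>
          constructor <;> nlinarith [hx.1, hx.2, hxρ.1, hxρ.2, hσ.1, hσ.2]
      have htσ : t - σ ≥ 0 := by linarith [hσ.2]
      simpa [mul_comm, hu.dirDeriv_eq _ hxσ _ htσ] using hF σ hσ hxσ
  simpa [mul_comm] using hback

theorem IsTransport.expBound_of_inflow (ha : 0 < a) (hγ : 0 ≤ γ) (hτ : 0 ≤ τ)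
    (hw : IsTransport a u w) (hw₀ : ∀ t ≥ 0, w (0, t) = p * u (0, t))
    (hu : ExpBound γ τ A u) :
    ExpBound γ (τ + 1 / a) (Real.exp (γ * (1 / a)) * (|p| + 1 / a) * A) w := by
  intro x hx t ht
  have hA := hu.nonneg
  have hρ₀ : 0 ≤ x / a := div_nonneg hx.1 ha.le
  have hρ : x / a ≤ 1 / a := div_le_div_of_nonneg_right hx.2 ha.le
  have hxρ : x - a * (x / a) = 0 := by field_simp; ring
  set M := A * (Real.exp (γ * (1 / a)) * Real.exp (-γ * t)) with hM
  have hu_le {y s : ℝ} (hy : y ∈ Icc (0 : ℝ) 1) (hs : t - x / a ≤ s) : |u (y, s)| ≤ M :=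
    (hu y hy s (by linarith)).trans
      (mul_le_mul_of_nonneg_left (exp_neg_mul_le hγ (by linarith)) hA)
  have htransport := hw.abs_le_add_integral (t := t) (φ := fun _ => M) hρ₀ intervalIntegrable_const
    hx (by simp [hxρ]) (by linarith) fun σ hσ hxσ => hu_le hxσ (by linarith [hσ.2])
  rw [hxρ, hw₀ _ (by linarith), abs_mul, intervalIntegral.integral_const, smul_eq_mul] at htransport
  calc |w (x, t)| ≤ |p| * M + 1 / a * M :=
        htransport.trans (by
          gcongr
          exacts [hu_le (by simp) le_rfl, by linarith])
    _ = _ := by rw [hM]; ring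

theorem IsTransport.expBound_dirDeriv_of_inflow (ha : 0 < a) (hγ : 0 ≤ γ) (hτ : 0 ≤ τ)
    (hw : IsTransport a u w) (hw₀ : ∀ t ≥ 0, w (0, t) = p * u (0, t)) (hu : ContDiff ℝ 1 u)
    (hut : ExpBound γ τ A (dirDeriv (0, 1) u)) :
    ExpBound γ (τ + 1 / a) (Real.exp (γ * (1 / a)) * (|p| + 1 / a) * A) (dirDeriv (0, 1) w) := by
  rw [expBound_dirDeriv_time_iff hγ hw.contDiff]
  intro h hh
  rw [mul_assoc _ A]
  refine (hw.fwdDiff_time hh.le).expBound_of_inflow ha hγ hτ (p := p) (fun t ht => ?_)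
    ((expBound_dirDeriv_time_iff hγ hu).1 hut h hh)
  simp [fwdDiff, hw₀ t ht, hw₀ (t + h) (by positivity), mul_sub]

-- `u` is only `C¹`, so its equation is differenced along `(k', 1)` instead of differentiated.
theorem IsTransport.abs_dirDeriv_fwdDiff_le (hγ : 0 ≤ γ) (hτ : 0 ≤ τ) (hu : IsTransport k F u)
    (hFc : ContDiff ℝ 1 F) {k' : ℝ} (hF' : ExpBound γ τ A (dirDeriv (k', 1) F)) {x t η : ℝ}
    (hη : 0 ≤ η) (hx : x ∈ Icc (0 : ℝ) 1) (hxη : x + k' * η ∈ Icc (0 : ℝ) 1) (ht : τ ≤ t) :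
    |dirDeriv (k, 1) (fwdDiff (η • (k', 1)) u) (x, t)| ≤ A * η * Real.exp (-γ * t) := by
  have ht₀ : 0 ≤ t := hτ.trans ht
  have hsource : dirDeriv (k, 1) (fwdDiff (η • (k', 1)) u) (x, t) =
      fwdDiff (η • (k', 1)) F (x, t) := by
    rw [dirDeriv_fwdDiff (hu.contDiff.differentiable one_ne_zero)]
    simp [fwdDiff, mul_comm η, hu.dirDeriv_eq _ hx _ ht₀,
      hu.dirDeriv_eq _ hxη _ (add_nonneg ht₀ hη)]
  exact hsource ▸ abs_fwdDiff_smul_le hγ hFc hF' hη hx hxη ht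

theorem IsTransport.abs_fwdDiff_char_outflow_le (ha : 0 < a) (hγ : 0 ≤ γ) (hτ : 0 ≤ τ)
    (hu : IsTransport (-a) F u) (hu₁ : ∀ t ≥ 0, u (1, t) = 0) (hF : ExpBound γ τ A F) {t η : ℝ}
    (hη : 0 ≤ η) (hη₁ : a * η ≤ 1) (ht : τ + η ≤ t) :
    |fwdDiff (η • (a, 1)) u (1 - a * η, t)| ≤ A * η * Real.exp (-γ * (t - η)) := by
  have hA := hF.nonneg
  have hback := hu.abs_le_add_integral (x := 1 - a * η) (t := t)
    (φ := fun _ => A * Real.exp (-γ * (t - η))) hη intervalIntegrable_const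
    ⟨by linarith, by nlinarith⟩ (by simp) (by linarith) fun σ hσ hxσ =>
      (hF _ hxσ _ (by linarith [hσ.2])).trans
        (mul_le_mul_of_nonneg_left (Real.exp_le_exp.2 (by nlinarith [hσ.2])) hA)
  simpa [fwdDiff, mul_comm _ a, hu₁ _ (show 0 ≤ t - η by linarith),
    hu₁ _ (show 0 ≤ t + η by linarith), mul_left_comm, mul_assoc] using hback

theorem IsTransport.abs_fwdDiff_char_le (ha : 0 < a) (hγ : 0 ≤ γ) (hτ : 0 ≤ τ)
    (hu : IsTransport (-a) F u) (hu₁ : ∀ t ≥ 0, u (1, t) = 0) (hFc : ContDiff ℝ 1 F)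
    (hF : ExpBound γ τ A F) (hF' : ExpBound γ τ A' (dirDeriv (a, 1) F)) {x t η : ℝ}
    (hη : 0 ≤ η) (hx : 0 ≤ x) (hxη : x + a * η ≤ 1) (ht : τ + 1 / a ≤ t) :
    |fwdDiff (η • (a, 1)) u (x, t)| ≤
      Real.exp (γ * (1 / a)) * (A + A' / a) * Real.exp (-γ * t) * η := by
  have hA := hF.nonneg
  have hA' := hF'.nonneg
  set ρ := (1 - x) / a - η with hρ
  have hxρ : x + a * ρ = 1 - a * η := by rw [hρ]; field_simp; ring
  have hρ₀ : 0 ≤ ρ := by nlinarith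
  have hρ₁ : ρ + η ≤ 1 / a := by rw [le_div_iff₀' ha]; linarith
  set E := Real.exp (γ * (1 / a)) * Real.exp (-γ * t) with hE
  have hexp {s : ℝ} (hs : t - 1 / a ≤ s) : Real.exp (-γ * s) ≤ E := exp_neg_mul_le hγ hs
  have hend : |fwdDiff (η • (a, 1)) u ((x, t) - ρ • (-a, 1))| ≤ A * η * E := by
    have hout := hu.abs_fwdDiff_char_outflow_le ha hγ hτ hu₁ hF (t := t - ρ) hη (by linarith)
      (by linarith)
    rw [← hxρ] at hout
    simpa [mul_comm ρ] using hout.trans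
      (mul_le_mul_of_nonneg_left (hexp (by linarith)) (by positivity))
  have hback := norm_le_add_integral_of_norm_dirDeriv_le (q := (x, t)) (v := (-a, 1))
    (contDiff_fwdDiff hu.contDiff (η • (a, 1))) hρ₀ (φ := fun _ => A' * η * E)
    intervalIntegrable_const fun σ hσ => by
      have hsource := hu.abs_dirDeriv_fwdDiff_le hγ hτ hFc hF' (x := x + a * σ) (t := t - σ) hη
        ⟨by nlinarith [hσ.1], by nlinarith [hσ.2]⟩ ⟨by nlinarith [hσ.1], by nlinarith [hσ.2]⟩
        (by linarith [hσ.2])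
      simpa [mul_comm σ] using hsource.trans
        (mul_le_mul_of_nonneg_left (hexp (by linarith [hσ.2])) (by positivity))
  rw [intervalIntegral.integral_const, smul_eq_mul, Real.norm_eq_abs, Real.norm_eq_abs] at hback
  calc |fwdDiff (η • (a, 1)) u (x, t)| ≤ A * η * E + 1 / a * (A' * η * E) :=
        hback.trans (by gcongr; linarith)
    _ = _ := by rw [hE]; ring

theorem IsTransport.expBound_dirDeriv_of_outflow (ha : 0 < a) (hγ : 0 ≤ γ) (hτ : 0 ≤ τ)
    (hu : IsTransport (-a) F u) (hu₁ : ∀ t ≥ 0, u (1, t) = 0) (hFc : ContDiff ℝ 1 F)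
    (hF : ExpBound γ τ A F) (hF' : ExpBound γ τ A' (dirDeriv (a, 1) F)) :
    ExpBound γ (τ + 1 / a) (Real.exp (γ * (1 / a)) * (A + A' / a)) (dirDeriv (0, 1) u) := by
  intro x hx t ht
  have hA := hF.nonneg
  have hA' := hF'.nonneg
  have hdiff : DifferentiableAt ℝ u (x, t) := hu.contDiff.differentiable one_ne_zero _
  have ha' : 0 < 1 / a := by positivity
  rcases hx.2.eq_or_lt with rfl | hx₁
  · refine (norm_dirDeriv_le_of_norm_fwdDiff_le hdiff (C := 0) ?_).trans (by positivity)
    filter_upwards [self_mem_nhdsWithin] with η (hη : 0 < η)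
    simp [fwdDiff, hu₁ t (by linarith), hu₁ (t + η) (by linarith)]
  have hright : |dirDeriv (a, 1) u (x, t)| ≤
      Real.exp (γ * (1 / a)) * (A + A' / a) * Real.exp (-γ * t) := by
    refine norm_dirDeriv_le_of_norm_fwdDiff_le hdiff ?_
    filter_upwards [Ioo_mem_nhdsGT (show 0 < (1 - x) / a by bound)] with η hη
    have hxη : a * η ≤ 1 - x := by rw [← le_div_iff₀' ha]; exact hη.2.le
    exact hu.abs_fwdDiff_char_le ha hγ hτ hu₁ hFc hF hF' hη.1.le hx.1 (by linarith) ht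
  have hleft : |dirDeriv (-a, 1) u (x, t)| ≤
      Real.exp (γ * (1 / a)) * (A + A' / a) * Real.exp (-γ * t) := by
    rw [hu.dirDeriv_eq x hx t (by linarith)]
    refine (hF x hx t (by linarith)).trans (mul_le_mul_of_nonneg_right ?_ (Real.exp_pos _).le)
    exact (le_add_of_nonneg_right (by positivity)).trans
      (le_mul_of_one_le_left (by positivity) (Real.one_le_exp (by positivity)))
  have hmean : dirDeriv (0, 1) u (x, t) =
      (dirDeriv (a, 1) u (x, t) + dirDeriv (-a, 1) u (x, t)) / 2 := by
    rw [eq_div_iff two_ne_zero, mul_comm]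
    simp only [dirDeriv, ← map_add, ← smul_eq_mul, ← map_smul]
    norm_num
  rw [hmean, abs_le]
  rw [abs_le] at hright hleft
  constructor <;> linarith [hright.1, hright.2, hleft.1, hleft.2]

/-- The boundary value problem `(∂ₜ - a ∂ₓ)(∂ₜ + a ∂ₓ) w = F`, `w = p (∂ₜ + a ∂ₓ) w` at `x = 0`,
`(∂ₜ + a ∂ₓ) w = 0` at `x = 1`, written as two coupled transport equations through
`u = (∂ₜ + a ∂ₓ) w`. -/
structure IsCharSystem (a p : ℝ) (F u w : ℝ × ℝ → ℝ) : Prop where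
  left : IsTransport (-a) F u
  right : IsTransport a u w
  left_one : ∀ t ≥ 0, u (1, t) = 0
  right_zero : ∀ t ≥ 0, w (0, t) = p * u (0, t)

theorem IsCharSystem.fwdDiff_time (hS : IsCharSystem a p F u w) {h : ℝ} (hh : 0 ≤ h) :
    IsCharSystem a p (fwdDiff (0, h) F) (fwdDiff (0, h) u) (fwdDiff (0, h) w) where
  left := hS.left.fwdDiff_time hh
  right := hS.right.fwdDiff_time hh
  left_one t ht := by simp [fwdDiff, hS.left_one t ht, hS.left_one _ (add_nonneg ht hh)]
  right_zero t ht := by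
    simp [fwdDiff, hS.right_zero t ht, hS.right_zero _ (add_nonneg ht hh), mul_sub]

theorem IsCharSystem.expBound_dirDeriv_time (ha : 0 < a) (hγ : 0 ≤ γ) (hτ : 0 ≤ τ)
    (hS : IsCharSystem a p F u w) (hFc : ContDiff ℝ 1 F) (hF : ExpBound γ τ A F)
    (hF' : ExpBound γ τ A' (dirDeriv (a, 1) F)) :
    ExpBound γ (τ + 1 / a + 1 / a)
      (Real.exp (γ * (1 / a)) * (|p| + 1 / a) * (Real.exp (γ * (1 / a)) * (A + A' / a)))
      (dirDeriv (0, 1) w) :=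
  hS.right.expBound_dirDeriv_of_inflow ha hγ (by positivity) hS.right_zero hS.left.contDiff
    (hS.left.expBound_dirDeriv_of_outflow ha hγ hτ hS.left_one hFc hF hF')

theorem IsCharSystem.expBound_dirDeriv_dirDeriv_time (ha : 0 < a) (hγ : 0 ≤ γ) (hτ : 0 ≤ τ)
    (hS : IsCharSystem a p F u w) (hw : ContDiff ℝ 2 w) (hFc : ContDiff ℝ 2 F)
    (hF : ExpBound γ τ A (dirDeriv (0, 1) F))
    (hF' : ExpBound γ τ A' (dirDeriv (0, 1) (dirDeriv (a, 1) F))) :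
    ExpBound γ (τ + 1 / a + 1 / a)
      (Real.exp (γ * (1 / a)) * (|p| + 1 / a) * (Real.exp (γ * (1 / a)) * (A + A' / a)))
      (dirDeriv (0, 1) (dirDeriv (0, 1) w)) := by
  have hFc₁ : ContDiff ℝ 1 F := hFc.of_le one_le_two
  have hdFc : ContDiff ℝ 1 (dirDeriv (a, 1) F) := contDiff_dirDeriv hFc one_add_one_eq_two.le _
  rw [expBound_dirDeriv_time_iff hγ (contDiff_dirDeriv hw one_add_one_eq_two.le _)]
  intro h hh
  have hFh : ExpBound γ τ (A * h) (fwdDiff (0, h) F) :=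
    (expBound_dirDeriv_time_iff hγ hFc₁).1 hF h hh
  have hFh' : ExpBound γ τ (A' * h) (dirDeriv (a, 1) (fwdDiff (0, h) F)) := by
    rw [dirDeriv_fwdDiff (hFc₁.differentiable one_ne_zero)]
    exact (expBound_dirDeriv_time_iff hγ hdFc).1 hF' h hh
  have hdiff := (hS.fwdDiff_time hh.le).expBound_dirDeriv_time ha hγ hτ
    (contDiff_fwdDiff hFc₁ (0, h)) hFh hFh'
  rw [dirDeriv_fwdDiff (hw.differentiable two_ne_zero)] at hdiff
  exact hdiff.mono le_rfl (by ring_nf; rfl)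

end Transport

-- Stands in for a contraction argument: `S` will be the set of weights of the a priori bounds.
theorem exists_mem_le_two_mul {S : Set ℝ} {K : ℝ} (hS : IsClosed S) (hne : S.Nonempty)
    (hbdd : BddBelow S) (hstep : ∀ m ∈ S, K + m / 2 ∈ S) : ∃ m ∈ S, m ≤ 2 * K := by
  have hmem := hS.csInf_mem hne hbdd
  exact ⟨sInf S, hmem, by linarith [csInf_le hbdd (hstep _ hmem)]⟩

section InitialLayer

/-- An integrable majorant of an initial profile on `[0, 1)`, extended beyond `1` by zero: carried
along the characteristics and their reflections as `g (x + a t)` and `g (a t - x)`, it accounts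
for the part of a solution that remembers its initial data. -/
structure IsProfile (g : ℝ → ℝ) : Prop where
  integrable : Integrable g
  nonneg : ∀ y, 0 ≤ g y
  eq_zero : ∀ y ≥ 1, g y = 0

variable {a p γ : ℝ} {F u w : ℝ × ℝ → ℝ} {g : ℝ → ℝ}

theorem intervalIntegrable_char (ha : 0 < a) (hg : Integrable g) (b ρ : ℝ) :
    IntervalIntegrable (fun σ => g (b - 2 * a * σ)) volume 0 ρ :=
  ((hg.comp_sub_left b).comp_mul_left' (by positivity)).intervalIntegrable

-- `g` vanishes along the whole characteristic unless `d > 0`, when the exponential is at least `1`.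
theorem integral_char_le (ha : 0 < a) (hγ : 0 ≤ γ) (hg : IsProfile g) {b d ρ : ℝ}
    (hρ : 0 ≤ ρ) (hb : 1 - b + 2 * a * ρ ≤ a * d) :
    ∫ σ in 0..ρ, g (b - 2 * a * σ) ≤ (∫ y, g y) / (2 * a) * Real.exp (γ * d) := by
  have hI : 0 ≤ ∫ y, g y := integral_nonneg hg.nonneg
  rcases le_total d 0 with hd | hd
  · have hzero : ∫ σ in 0..ρ, g (b - 2 * a * σ) = ∫ _ in 0..ρ, (0 : ℝ) := by
      refine intervalIntegral.integral_congr fun σ hσ => hg.eq_zero _ ?_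
      rw [uIcc_of_le hρ] at hσ
      nlinarith [hσ.2]
    rw [hzero, intervalIntegral.integral_zero]
    positivity
  calc ∫ σ in 0..ρ, g (b - 2 * a * σ)
      = (2 * a)⁻¹ * ∫ y in (b - 2 * a * ρ)..b, g y := by
        simp [intervalIntegral.integral_comp_sub_mul g (show 2 * a ≠ 0 by positivity)]
    _ ≤ (2 * a)⁻¹ * ∫ y, g y := by
        rw [intervalIntegral.integral_of_le (by nlinarith)]
        exact mul_le_mul_of_nonneg_left
          (setIntegral_le_integral hg.integrable (.of_forall hg.nonneg)) (by positivity)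
    _ ≤ (∫ y, g y) / (2 * a) * Real.exp (γ * d) := by
        rw [inv_mul_eq_div]
        exact le_mul_of_one_le_right (by positivity) (Real.one_le_exp (by positivity))

theorem integral_char_add_const_le (ha : 0 < a) (hγ : 0 ≤ γ) (hg : IsProfile g)
    {b k m t ρ : ℝ} (hk : 0 ≤ k) (hm : 0 ≤ m) (hρ : 0 ≤ ρ) (hρ₁ : ρ ≤ 1 / a)
    (hb : 1 - b + 2 * a * ρ ≤ 3 - a * t) :
    ∫ σ in 0..ρ, (k * g (b - 2 * a * σ) + m * (Real.exp (γ * (3 / a)) * Real.exp (-γ * t))) ≤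
      Real.exp (γ * (3 / a)) * (k * ((∫ y, g y) / (2 * a)) + m * (1 / a)) * Real.exp (-γ * t) := by
  have hchar := integral_char_le ha hγ hg (b := b) (d := 3 / a - t) hρ
    (by rwa [mul_sub, mul_div_cancel₀ _ ha.ne'])
  rw [show γ * (3 / a - t) = γ * (3 / a) + -γ * t by ring, Real.exp_add] at hchar
  rw [intervalIntegral.integral_add ((intervalIntegrable_char ha hg.integrable b ρ).const_mul k)
    intervalIntegrable_const, intervalIntegral.integral_const_mul,
    intervalIntegral.integral_const, smul_eq_mul, sub_zero]
  set E := Real.exp (γ * (3 / a)) * Real.exp (-γ * t) with hE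
  calc _ ≤ k * ((∫ y, g y) / (2 * a) * E) + 1 / a * (m * E) := by gcongr
    _ = _ := by rw [hE]; ring

theorem IsCharSystem.abs_left_le (ha : 0 < a) (hγ : 0 ≤ γ) (hS : IsCharSystem a p F u w)
    (hg : IsProfile g) (hgu : ∀ y ∈ Ico (0 : ℝ) 1, |u (y, 0)| ≤ g y)
    {k m x t : ℝ} (hk : 0 ≤ k) (hm : 0 ≤ m)
    (hF : ∀ y ∈ Icc (0 : ℝ) 1, ∀ s ∈ Icc 0 t,
      |F (y, s)| ≤ k * g (a * s - y) + m * Real.exp (-γ * s))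
    (hx : x ∈ Icc (0 : ℝ) 1) (ht : 0 ≤ t) :
    |u (x, t)| ≤ g (x + a * t) +
      Real.exp (γ * (3 / a)) * (k * ((∫ y, g y) / (2 * a)) + m * (1 / a)) * Real.exp (-γ * t) := by
  set ρ := min t ((1 - x) / a) with hρ
  have hρt : ρ ≤ t := min_le_left _ _
  have hρx : a * ρ ≤ 1 - x := by
    rw [← le_div_iff₀' ha]
    exact min_le_right _ _
  have hρ₀ : 0 ≤ ρ := le_min ht (div_nonneg (by linarith [hx.2]) ha.le)
  have hρ₁ : ρ ≤ 1 / a := by rw [le_div_iff₀' ha]; linarith [hx.1]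
  have hend : |u (x - -a * ρ, t - ρ)| ≤ g (x + a * t) := by
    rcases lt_or_ge t ((1 - x) / a) with h | h
    · have hxt : x + a * t < 1 := by
        rw [lt_div_iff₀' ha] at h
        linarith
      rw [hρ, min_eq_left h.le]
      simpa using hgu _ ⟨by nlinarith [hx.1], hxt⟩
    · have hx₁ : x - -a * ρ = 1 := by rw [hρ, min_eq_right h]; field_simp; ring
      simpa only [hx₁, hS.left_one _ (sub_nonneg.2 hρt), abs_zero] using hg.nonneg _
  refine (hS.left.abs_le_add_integral hρ₀
    (((intervalIntegrable_char ha hg.integrable (a * t - x) ρ).const_mul k).add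
      intervalIntegrable_const)
    hx ⟨by nlinarith [hx.1], by linarith⟩ hρt
    fun σ hσ hxσ => ?_).trans (add_le_add hend
      (integral_char_add_const_le ha hγ hg hk hm hρ₀ hρ₁ (by linarith [hx.1])))
  have hexp : Real.exp (-γ * (t - σ)) ≤ Real.exp (γ * (3 / a)) * Real.exp (-γ * t) :=
    exp_neg_mul_le hγ (by linarith [hσ.2, show 1 / a ≤ 3 / a by gcongr; norm_num])
  refine (hF _ hxσ _ ⟨by linarith [hσ.2], by linarith [hσ.1]⟩).trans ?_
  rw [show a * (t - σ) - (x - -a * σ) = a * t - x - 2 * a * σ by ring]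
  gcongr

theorem IsCharSystem.abs_right_entry_le (ha : 0 < a) (hγ : 0 ≤ γ) (hS : IsCharSystem a p F u w)
    (hg₀ : ∀ y, 0 ≤ g y) {W n x t : ℝ} (hW : ∀ y ∈ Icc (0 : ℝ) 1, |w (y, 0)| ≤ W) (hn : 0 ≤ n)
    (hu : ∀ s ∈ Icc 0 t, |u (0, s)| ≤ g (a * s) + n * Real.exp (-γ * s))
    (hx : x ∈ Icc (0 : ℝ) 1) (ht : 0 ≤ t) :
    |w (x - a * min t (x / a), t - min t (x / a))| ≤ |p| * g (a * t - x) +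
      (W + |p| * n) * (Real.exp (γ * (3 / a)) * Real.exp (-γ * t)) := by
  set E := Real.exp (γ * (3 / a)) * Real.exp (-γ * t)
  have ha₃ : 1 / a ≤ 3 / a := by gcongr; norm_num
  have hxa : x / a ≤ 1 / a := div_le_div_of_nonneg_right hx.2 ha.le
  have hexp {s : ℝ} (hs : t - x / a ≤ s) : Real.exp (-γ * s) ≤ E :=
    exp_neg_mul_le hγ (by linarith)
  have hW₀ : 0 ≤ W := (abs_nonneg _).trans (hW 0 (by simp))
  have hg_nonneg := mul_nonneg (abs_nonneg p) (hg₀ (a * t - x))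
  rcases le_total t (x / a) with h | h
  · have hE : 1 ≤ E := by simpa using hexp (s := 0) (by linarith)
    have hat : a * t ≤ x := (le_div_iff₀' ha).1 h
    rw [min_eq_left h, sub_self]
    calc |w (x - a * t, 0)| ≤ W * 1 := by
          rw [mul_one]
          exact hW _ ⟨by linarith, by nlinarith [hx.2]⟩
      _ ≤ (W + |p| * n) * E := by gcongr; exact le_add_of_nonneg_right (by positivity)
      _ ≤ _ := le_add_of_nonneg_left hg_nonneg
  · have hu₀ := hu (t - x / a) ⟨by linarith, by linarith [div_nonneg hx.1 ha.le]⟩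
    rw [mul_sub, mul_div_cancel₀ _ ha.ne'] at hu₀
    rw [min_eq_right h, mul_div_cancel₀ _ ha.ne', sub_self, hS.right_zero _ (by linarith), abs_mul]
    calc |p| * |u (0, t - x / a)| ≤ |p| * (g (a * t - x) + n * E) := by
          gcongr
          exact hu₀.trans (by gcongr; exact hexp le_rfl)
      _ = |p| * g (a * t - x) + |p| * n * E := by ring
      _ ≤ _ := by gcongr; exact le_add_of_nonneg_left hW₀

theorem IsCharSystem.abs_right_le (ha : 0 < a) (hγ : 0 ≤ γ) (hS : IsCharSystem a p F u w)
    (hg : IsProfile g) {W n x t : ℝ} (hW : ∀ y ∈ Icc (0 : ℝ) 1, |w (y, 0)| ≤ W) (hn : 0 ≤ n)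
    (hu : ∀ y ∈ Icc (0 : ℝ) 1, ∀ s ∈ Icc 0 t, |u (y, s)| ≤ g (y + a * s) + n * Real.exp (-γ * s))
    (hx : x ∈ Icc (0 : ℝ) 1) (ht : 0 ≤ t) :
    |w (x, t)| ≤ |p| * g (a * t - x) + Real.exp (γ * (3 / a)) *
      (W + (∫ y, g y) / (2 * a) + (|p| + 1 / a) * n) * Real.exp (-γ * t) := by
  have hend := hS.abs_right_entry_le ha hγ hg.nonneg hW hn
    (fun s hs => by simpa using hu 0 (by simp) s hs) hx ht
  set ρ := min t (x / a)
  have hρt : ρ ≤ t := min_le_left _ _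
  have hρx : a * ρ ≤ x := by
    rw [← le_div_iff₀' ha]
    exact min_le_right _ _
  have hρ₀ : 0 ≤ ρ := le_min ht (div_nonneg hx.1 ha.le)
  have hρ₁ : ρ ≤ 1 / a := by rw [le_div_iff₀' ha]; linarith [hx.2]
  refine (hS.right.abs_le_add_integral hρ₀
    (((intervalIntegrable_char ha hg.integrable (x + a * t) ρ).const_mul 1).add
      intervalIntegrable_const)
    hx ⟨by linarith, by nlinarith [hx.2]⟩ hρt
    fun σ hσ hxσ => ?_).trans ((add_le_add hend (integral_char_add_const_le (t := t) ha hγ hg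
      zero_le_one hn hρ₀ hρ₁ (by linarith [hx.2]))).trans_eq (by ring))
  have hexp : Real.exp (-γ * (t - σ)) ≤ Real.exp (γ * (3 / a)) * Real.exp (-γ * t) :=
    exp_neg_mul_le hγ (by linarith [hσ.2, show 1 / a ≤ 3 / a by gcongr; norm_num])
  refine (hu _ hxσ _ ⟨by linarith [hσ.2], by linarith [hσ.1]⟩).trans ?_
  rw [show x - a * σ + a * (t - σ) = x + a * t - 2 * a * σ by ring, one_mul]
  gcongr

theorem IsCharSystem.abs_right_le_step (ha : 0 < a) (hγ : 0 ≤ γ) (hS : IsCharSystem a p F u w)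
    (hg : IsProfile g) (hgu : ∀ y ∈ Ico (0 : ℝ) 1, |u (y, 0)| ≤ g y) {ε W m τ : ℝ}
    (hW : ∀ y ∈ Icc (0 : ℝ) 1, |w (y, 0)| ≤ W) (hε₀ : 0 ≤ ε)
    (hε : Real.exp (γ * (3 / a)) ^ 2 * (|p| + 1 / a) * ε ≤ a / 2)
    (hF : ∀ y ∈ Icc (0 : ℝ) 1, ∀ s ≥ 0, |F (y, s)| ≤ ε * |w (y, s)|) (hm : 0 ≤ m)
    (hw : ∀ y ∈ Icc (0 : ℝ) 1, ∀ s ∈ Icc 0 τ,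
      |w (y, s)| ≤ |p| * g (a * s - y) + m * Real.exp (-γ * s)) :
    ∀ x ∈ Icc (0 : ℝ) 1, ∀ t ∈ Icc 0 τ, |w (x, t)| ≤ |p| * g (a * t - x) +
      (Real.exp (γ * (3 / a)) * (W + (∫ y, g y) / (2 * a)) + |p| * (∫ y, g y) / 4 + m / 2) *
        Real.exp (-γ * t) := by
  intro x hx t ht
  have hI : 0 ≤ ∫ y, g y := integral_nonneg hg.nonneg
  set J := (∫ y, g y) / (2 * a) with hJ
  have hu (y : ℝ) (hy : y ∈ Icc (0 : ℝ) 1) (s : ℝ) (hs : s ∈ Icc 0 t) :=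
    hS.abs_left_le ha hγ hg hgu (k := ε * |p|) (m := ε * m) (t := s) (by positivity)
      (by positivity) (fun z hz r hr => (hF z hz r hr.1).trans <| by
        rw [mul_assoc, mul_assoc, ← mul_add]
        exact mul_le_mul_of_nonneg_left (hw z hz r ⟨hr.1, hr.2.trans (hs.2.trans ht.2)⟩) hε₀)
      hy hs.1
  refine (hS.abs_right_le ha hγ hg hW (by positivity) hu hx ht.1).trans ?_
  refine add_le_add le_rfl (mul_le_mul_of_nonneg_right ?_ (Real.exp_pos _).le)
  set Θ := Real.exp (γ * (3 / a))
  calc Θ * (W + J + (|p| + 1 / a) * (Θ * (ε * |p| * J + ε * m * (1 / a))))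
      = Θ * (W + J) + Θ ^ 2 * (|p| + 1 / a) * ε * (|p| * J + m * (1 / a)) := by ring
    _ ≤ Θ * (W + J) + a / 2 * (|p| * J + m * (1 / a)) := by gcongr
    _ = _ := by rw [hJ]; field_simp; ring

theorem exists_abs_le_mul_exp (hγ : 0 ≤ γ) {t : ℝ} (ht : 0 ≤ t) (hw : Continuous w) :
    ∃ m ≥ 0, ∀ y ∈ Icc (0 : ℝ) 1, ∀ s ∈ Icc 0 t, |w (y, s)| ≤ m * Real.exp (-γ * s) := by
  obtain ⟨C, hC⟩ := (isCompact_Icc.prod isCompact_Icc).exists_bound_of_continuousOn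
    (hw.continuousOn (s := Icc (0 : ℝ) 1 ×ˢ Icc 0 t))
  have hC₀ : 0 ≤ C := (norm_nonneg _).trans (hC (0, 0) ⟨by simp, by simpa⟩)
  refine ⟨C * Real.exp (γ * t), by positivity, fun y hy s hs => (hC (y, s) ⟨hy, hs⟩).trans ?_⟩
  rw [mul_assoc, ← Real.exp_add]
  exact le_mul_of_one_le_right hC₀ (Real.one_le_exp (by nlinarith [hs.2]))

theorem IsCharSystem.abs_right_le_of_small (ha : 0 < a) (hγ : 0 ≤ γ) (hS : IsCharSystem a p F u w)
    (hg : IsProfile g) (hgu : ∀ y ∈ Ico (0 : ℝ) 1, |u (y, 0)| ≤ g y) {ε W : ℝ}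
    (hW : ∀ y ∈ Icc (0 : ℝ) 1, |w (y, 0)| ≤ W) (hε₀ : 0 ≤ ε)
    (hε : Real.exp (γ * (3 / a)) ^ 2 * (|p| + 1 / a) * ε ≤ a / 2)
    (hF : ∀ y ∈ Icc (0 : ℝ) 1, ∀ s ≥ 0, |F (y, s)| ≤ ε * |w (y, s)|)
    {x t : ℝ} (hx : x ∈ Icc (0 : ℝ) 1) (ht : 0 ≤ t) :
    |w (x, t)| ≤ |p| * g (a * t - x) +
      2 * (Real.exp (γ * (3 / a)) * (W + (∫ y, g y) / (2 * a)) + |p| * (∫ y, g y) / 4) *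
        Real.exp (-γ * t) := by
  set K := Real.exp (γ * (3 / a)) * (W + (∫ y, g y) / (2 * a)) + |p| * (∫ y, g y) / 4
  have hK₀ : 0 ≤ K := by
    have hW₀ : 0 ≤ W := (abs_nonneg _).trans (hW 0 (by simp))
    have hI : 0 ≤ ∫ y, g y := integral_nonneg hg.nonneg
    positivity
  set S : Set ℝ := Ici 0 ∩ {m | ∀ y ∈ Icc (0 : ℝ) 1, ∀ s ∈ Icc 0 t,
    |w (y, s)| ≤ |p| * g (a * s - y) + m * Real.exp (-γ * s)}
  have hclosed : IsClosed S := by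
    refine isClosed_Ici.inter ?_
    simp only [Set.ofPred_forall]
    exact isClosed_iInter fun y => isClosed_iInter fun _ => isClosed_iInter fun s =>
      isClosed_iInter fun _ => isClosed_le continuous_const (by fun_prop)
  have hne : S.Nonempty := by
    obtain ⟨m, hm, hwm⟩ := exists_abs_le_mul_exp hγ ht hS.right.contDiff.continuous
    exact ⟨m, hm, fun y hy s hs => (hwm y hy s hs).trans
      (le_add_of_nonneg_left (mul_nonneg (abs_nonneg p) (hg.nonneg _)))⟩
  obtain ⟨m, hm, hmK⟩ := exists_mem_le_two_mul hclosed hne ⟨0, fun m hm => hm.1⟩ fun m hm =>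
    ⟨add_nonneg hK₀ (div_nonneg hm.1 zero_le_two),
      hS.abs_right_le_step ha hγ hg hgu hW hε₀ hε hF hm.1 hm.2⟩
  exact (hm.2 x hx t ⟨ht, le_rfl⟩).trans (by gcongr)

theorem exists_isProfile {f : ℝ → ℝ} (hf : Continuous f) :
    ∃ g, IsProfile g ∧ (∀ y ∈ Ico (0 : ℝ) 1, |f y| ≤ g y) ∧
      ∫ y, g y = ∫ y in (0 : ℝ)..1, |f y| := by
  refine ⟨(Ico (0 : ℝ) 1).indicator fun y => |f y|, ⟨?_, ?_, ?_⟩, ?_, ?_⟩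
  · exact (integrable_indicator_iff measurableSet_Ico).2
      (hf.abs.integrableOn_Icc.mono_set Ico_subset_Icc_self)
  · exact indicator_nonneg fun _ _ => abs_nonneg _
  · exact fun y hy => indicator_of_notMem (fun h => h.2.not_ge hy) _
  · exact fun y hy => (indicator_of_mem hy fun y => |f y|).ge
  · rw [integral_indicator measurableSet_Ico, intervalIntegral.integral_of_le zero_le_one,
      integral_Ico_eq_integral_Ioc]

theorem IsCharSystem.expBound_of_small (ha : 0 < a) (hγ : 0 ≤ γ) (hS : IsCharSystem a p F u w)
    {ε W : ℝ} (hW : ∀ y ∈ Icc (0 : ℝ) 1, |w (y, 0)| ≤ W) (hε₀ : 0 ≤ ε)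
    (hε : Real.exp (γ * (3 / a)) ^ 2 * (|p| + 1 / a) * ε ≤ a / 2)
    (hF : ∀ y ∈ Icc (0 : ℝ) 1, ∀ s ≥ 0, |F (y, s)| ≤ ε * |w (y, s)|) {I K : ℝ}
    (hI : I = ∫ y in (0 : ℝ)..1, |u (y, 0)|)
    (hK : K = Real.exp (γ * (3 / a)) * (W + I / (2 * a)) + |p| * I / 4) :
    ExpBound γ (2 / a)
        (Real.exp (γ * (3 / a)) * (ε * |p| * (I / (2 * a)) + ε * (2 * K) * (1 / a))) u ∧
      ExpBound γ (2 / a) (2 * K) w := by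
  obtain ⟨g, hg, hgu, hgI⟩ := exists_isProfile (f := fun y => u (y, 0))
    (hS.left.contDiff.continuous.comp (by fun_prop))
  rw [hI, ← hgI] at hK ⊢
  have hw {x t : ℝ} (hx : x ∈ Icc (0 : ℝ) 1) (ht : 0 ≤ t) :
      |w (x, t)| ≤ |p| * g (a * t - x) + 2 * K * Real.exp (-γ * t) := by
    rw [hK]
    exact hS.abs_right_le_of_small ha hγ hg hgu hW hε₀ hε hF hx ht
  have hK₀ : 0 ≤ K := by
    have hW₀ : 0 ≤ W := (abs_nonneg _).trans (hW 0 (by simp))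
    have hg_int : 0 ≤ ∫ y, g y := integral_nonneg hg.nonneg
    rw [hK]
    positivity
  have hlate {t : ℝ} (ht : t ≥ 2 / a) : 2 ≤ a * t := (div_le_iff₀' ha).1 ht
  constructor <;> intro x hx t ht <;> have ht₀ : 0 ≤ t := (by positivity : 0 ≤ 2 / a).trans ht
  · have hu := hS.abs_left_le ha hγ hg hgu (k := ε * |p|) (m := ε * (2 * K))
      (by positivity) (by positivity) (fun y hy s hs => (hF y hy s hs.1).trans <| by
        rw [mul_assoc, mul_assoc, ← mul_add]
        exact mul_le_mul_of_nonneg_left (hw hy hs.1) hε₀) hx ht₀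
    rwa [hg.eq_zero _ (by linarith [hlate ht, hx.1]), zero_add] at hu
  · simpa [hg.eq_zero _ (by linarith [hlate ht, hx.2] : a * t - x ≥ 1)] using hw hx ht₀

theorem exists_expBound_of_small (ha : 0 < a) (p : ℝ) (hγ : 0 ≤ γ) :
    ∃ ε > 0, ∃ N > 0, ∀ F u w : ℝ × ℝ → ℝ, IsCharSystem a p F u w →
      (∀ y ∈ Icc (0 : ℝ) 1, ∀ s ≥ 0, |F (y, s)| ≤ ε * |w (y, s)|) →
      ∀ W, (∀ y ∈ Icc (0 : ℝ) 1, |w (y, 0)| ≤ W) →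
        ExpBound γ (2 / a) (N * (W + ∫ y in (0 : ℝ)..1, |u (y, 0)|)) u ∧
        ExpBound γ (2 / a) (N * (W + ∫ y in (0 : ℝ)..1, |u (y, 0)|)) w := by
  set Θ := Real.exp (γ * (3 / a)) with hΘ
  have : 0 < Θ := Real.exp_pos _
  set ε := a / 2 / (Θ ^ 2 * (|p| + 1 / a))
  set κ := Θ * (1 + 1 / (2 * a)) + |p| / 4 with hκ
  set N := Θ * (ε * |p| * (1 / (2 * a)) + ε * (2 * κ) * (1 / a)) + 2 * κ with hN
  refine ⟨ε, by positivity, N, by positivity, fun F u w hS hF W hW => ?_⟩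
  set I := ∫ y in (0 : ℝ)..1, |u (y, 0)| with hI
  have hW₀ : 0 ≤ W := (abs_nonneg _).trans (hW 0 (by simp))
  have hI₀ : 0 ≤ I := intervalIntegral.integral_nonneg zero_le_one fun _ _ => abs_nonneg _
  have hκ_le : Θ * (W + I / (2 * a)) + |p| * I / 4 ≤ κ * (W + I) := by
    have : 0 ≤ Θ * I + Θ * W / (2 * a) + |p| * W / 4 := by positivity
    rw [hκ]
    linear_combination this
  obtain ⟨hu, hw⟩ := hS.expBound_of_small ha hγ hW (by positivity)
    (mul_div_cancel₀ _ (by positivity)).le hF hI rfl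
  rw [← hΘ] at hu hw
  refine ⟨hu.mono le_rfl ?_, hw.mono le_rfl ?_⟩
  · calc _ ≤ Θ * (ε * |p| * ((W + I) / (2 * a)) + ε * (2 * (κ * (W + I))) * (1 / a)) := by
          gcongr
          exact le_add_of_nonneg_left hW₀
      _ = (N - 2 * κ) * (W + I) := by rw [hN]; ring
      _ ≤ N * (W + I) := by gcongr; exact sub_le_self _ (by positivity)
  · calc _ ≤ 2 * κ * (W + I) := by rw [mul_assoc]; gcongr
      _ ≤ N * (W + I) := by gcongr; exact le_add_of_nonneg_left (by positivity)

end InitialLayer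

section Coordinates

variable {w : ℝ × ℝ → ℝ} {n : ℕ}

theorem iterate_dirDeriv_fst (hw : ContDiff ℝ n w) (x t : ℝ) :
    (dirDeriv (1, 0))^[n] w (x, t) = iteratedDeriv n (fun y => w (y, t)) x := by
  simpa using (iteratedDeriv_line hw (0, t) (1, 0) x).symm

theorem iterate_dirDeriv_snd (hw : ContDiff ℝ n w) (x t : ℝ) :
    (dirDeriv (0, 1))^[n] w (x, t) = iteratedDeriv n (fun s => w (x, s)) t := by
  simpa using (iteratedDeriv_line hw (x, 0) (0, 1) t).symm

theorem dirDeriv_fst (hw : ContDiff ℝ 1 w) (x t : ℝ) :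
    dirDeriv (1, 0) w (x, t) = deriv (fun y => w (y, t)) x := by
  simpa using iterate_dirDeriv_fst (n := 1) (mod_cast hw) x t

theorem dirDeriv_snd (hw : ContDiff ℝ 1 w) (x t : ℝ) :
    dirDeriv (0, 1) w (x, t) = deriv (fun s => w (x, s)) t := by
  simpa using iterate_dirDeriv_snd (n := 1) (mod_cast hw) x t

theorem dirDeriv_char (s : ℝ) :
    dirDeriv (s, 1) w = dirDeriv (0, 1) w + s • dirDeriv (1, 0) w := by
  ext q
  simp only [dirDeriv, Pi.add_apply, Pi.smul_apply, ← map_smul, ← map_add]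
  simp

theorem dirDeriv_neg_char_dirDeriv_char (hw : ContDiff ℝ 2 w) (a : ℝ) (q : ℝ × ℝ) :
    dirDeriv (-a, 1) (dirDeriv (a, 1) w) q =
      dirDeriv (0, 1) (dirDeriv (0, 1) w) q - a ^ 2 * dirDeriv (1, 0) (dirDeriv (1, 0) w) q := by
  have hcomm := congrFun (dirDeriv_comm hw (0, 1) (1, 0)) q
  have hright : (a, (1 : ℝ)) = (0, 1) + a • (1, 0) := by simp
  have hleft : (-a, (1 : ℝ)) = (0, 1) - a • (1, 0) := by simp
  simp only [dirDeriv_dirDeriv hw] at hcomm ⊢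
  rw [hright, hleft]
  simp only [map_add, map_sub, map_smul, _root_.sub_apply, _root_.smul_apply, smul_eq_mul, hcomm]
  ring

end Coordinates

section InitialData

theorem integral_abs_le_sqrt_integral_sq {f : ℝ → ℝ} (hf : Continuous f) :
    ∫ x in (0 : ℝ)..1, |f x| ≤ √(∫ x in (0 : ℝ)..1, f x ^ 2) := by
  refine Real.le_sqrt_of_sq_le ?_
  have : IsProbabilityMeasure (volume.restrict (Ioc (0 : ℝ) 1)) := ⟨by simp⟩
  have hint {g : ℝ → ℝ} (hg : Continuous g) : Integrable g (volume.restrict (Ioc (0 : ℝ) 1)) :=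
    (hg.integrableOn_Icc (a := 0) (b := 1)).mono_set Ioc_subset_Icc_self
  simp only [intervalIntegral.integral_of_le zero_le_one]
  simpa using even_two.convexOn_pow.map_integral_le (f := fun x => |f x|)
    (continuous_pow 2).continuousOn isClosed_univ (by simp) (hint hf.abs)
    (hint (hf.abs.pow 2))

theorem abs_le_integral_abs_add_integral_abs_deriv {f : ℝ → ℝ} (hf : ContDiff ℝ 1 f) {x : ℝ}
    (hx : x ∈ Icc (0 : ℝ) 1) :
    |f x| ≤ (∫ y in (0 : ℝ)..1, |f y|) + ∫ y in (0 : ℝ)..1, |deriv f y| := by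
  have hf' : Continuous (deriv f) := hf.continuous_deriv_one
  have hint {g : ℝ → ℝ} (hg : Continuous g) : IntervalIntegrable g volume 0 1 :=
    hg.intervalIntegrable 0 1
  have hosc (y : ℝ) (hy : y ∈ Icc (0 : ℝ) 1) :
      |f x| ≤ |f y| + ∫ s in (0 : ℝ)..1, |deriv f s| := by
    have hftc : f x - f y = ∫ s in y..x, deriv f s :=
      (intervalIntegral.integral_deriv_eq_sub (fun s _ => hf.differentiable one_ne_zero s)
        (hf'.intervalIntegrable _ _)).symm
    have hle : |f x - f y| ≤ ∫ s in (0 : ℝ)..1, |deriv f s| := by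
      rw [hftc, intervalIntegral.integral_of_le zero_le_one]
      refine (intervalIntegral.norm_integral_le_integral_norm_uIoc (f := deriv f)).trans
        (setIntegral_mono_set (hf'.abs.integrableOn_Icc.mono_set Ioc_subset_Icc_self)
          (.of_forall fun _ => abs_nonneg _) (.of_forall ?_))
      exact Ioc_subset_Ioc (le_min hy.1 hx.1) (max_le hy.2 hx.2)
    linarith [abs_sub_abs_le_abs_sub (f x) (f y)]
  calc |f x| = ∫ _ in (0 : ℝ)..1, |f x| := by simp
    _ ≤ ∫ y in (0 : ℝ)..1, (|f y| + ∫ s in (0 : ℝ)..1, |deriv f s|) :=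
        intervalIntegral.integral_mono_on zero_le_one intervalIntegrable_const
          (hint (hf.continuous.abs.add continuous_const)) hosc
    _ = _ := by
        rw [intervalIntegral.integral_add (hint hf.continuous.abs) intervalIntegrable_const]
        simp

/-- The norm `max (‖w(·, 0)‖_{H¹(0, 1)}) (‖∂ₜw(·, 0)‖_{L²(0, 1)})` of the Cauchy data of `w`. -/
noncomputable def dataNorm (w : ℝ × ℝ → ℝ) : ℝ :=
  max √(∫ x in (0 : ℝ)..1, (w (x, 0) ^ 2 + dirDeriv (1, 0) w (x, 0) ^ 2))
    √(∫ x in (0 : ℝ)..1, dirDeriv (0, 1) w (x, 0) ^ 2)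

variable {w : ℝ × ℝ → ℝ}

theorem continuous_dirDeriv_zero (hw : ContDiff ℝ 1 w) (v : ℝ × ℝ) :
    Continuous fun x : ℝ => dirDeriv v w (x, 0) :=
  (contDiff_dirDeriv hw (zero_add 1).le v).continuous.comp (by fun_prop)

theorem integral_abs_le_dataNorm (hw : ContDiff ℝ 1 w) :
    ∫ x in (0 : ℝ)..1, |w (x, 0)| ≤ dataNorm w := by
  have hw₀ : Continuous fun x : ℝ => w (x, 0) := hw.continuous.comp (by fun_prop)
  have hwx := continuous_dirDeriv_zero hw (1, 0)
  exact (integral_abs_le_sqrt_integral_sq hw₀).trans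
    (le_max_of_le_left (Real.sqrt_le_sqrt (intervalIntegral.integral_mono_on zero_le_one
      ((by fun_prop : Continuous _).intervalIntegrable _ _)
      ((by fun_prop : Continuous _).intervalIntegrable _ _) fun x _ =>
        le_add_of_nonneg_right (sq_nonneg _))))

theorem integral_abs_dirDeriv_fst_le_dataNorm (hw : ContDiff ℝ 1 w) :
    ∫ x in (0 : ℝ)..1, |dirDeriv (1, 0) w (x, 0)| ≤ dataNorm w := by
  have : Continuous fun x : ℝ => w (x, 0) := hw.continuous.comp (by fun_prop)
  have hwx := continuous_dirDeriv_zero hw (1, 0)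
  exact (integral_abs_le_sqrt_integral_sq hwx).trans
    (le_max_of_le_left (Real.sqrt_le_sqrt (intervalIntegral.integral_mono_on zero_le_one
      ((by fun_prop : Continuous _).intervalIntegrable _ _)
      ((by fun_prop : Continuous _).intervalIntegrable _ _) fun x _ =>
        le_add_of_nonneg_left (sq_nonneg _))))

theorem abs_le_two_mul_dataNorm (hw : ContDiff ℝ 1 w) {x : ℝ} (hx : x ∈ Icc (0 : ℝ) 1) :
    |w (x, 0)| ≤ 2 * dataNorm w := by
  have hsup := abs_le_integral_abs_add_integral_abs_deriv (f := fun y => w (y, 0))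
    (hw.comp (by fun_prop)) hx
  simp only [← dirDeriv_fst hw] at hsup
  linarith [integral_abs_le_dataNorm hw, integral_abs_dirDeriv_fst_le_dataNorm hw]

theorem integral_abs_dirDeriv_char_le_dataNorm {s : ℝ} (hs : 0 ≤ s) (hw : ContDiff ℝ 1 w) :
    ∫ x in (0 : ℝ)..1, |dirDeriv (s, 1) w (x, 0)| ≤ (1 + s) * dataNorm w := by
  have hwx := continuous_dirDeriv_zero hw (1, 0)
  have hwt := continuous_dirDeriv_zero hw (0, 1)
  have hwt_le : ∫ x in (0 : ℝ)..1, |dirDeriv (0, 1) w (x, 0)| ≤ dataNorm w :=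
    (integral_abs_le_sqrt_integral_sq hwt).trans (le_max_right _ _)
  calc ∫ x in (0 : ℝ)..1, |dirDeriv (s, 1) w (x, 0)|
      ≤ ∫ x in (0 : ℝ)..1, (|dirDeriv (0, 1) w (x, 0)| + s * |dirDeriv (1, 0) w (x, 0)|) :=
        intervalIntegral.integral_mono_on zero_le_one
          ((continuous_dirDeriv_zero hw (s, 1)).abs.intervalIntegrable _ _)
          ((by fun_prop : Continuous _).intervalIntegrable _ _) fun x _ => by
            rw [dirDeriv_char, ← abs_of_nonneg hs, ← abs_mul, abs_of_nonneg hs]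
            exact abs_add_le _ _
    _ = (∫ x in (0 : ℝ)..1, |dirDeriv (0, 1) w (x, 0)|) +
          s * ∫ x in (0 : ℝ)..1, |dirDeriv (1, 0) w (x, 0)| := by
        rw [intervalIntegral.integral_add (hwt.abs.intervalIntegrable _ _)
          ((by fun_prop : Continuous _).intervalIntegrable _ _),
          intervalIntegral.integral_const_mul]
    _ ≤ dataNorm w + s * dataNorm w := by
        gcongr
        exact integral_abs_dirDeriv_fst_le_dataNorm hw
    _ = _ := by ring

end InitialData

section PerturbedWave

/-- A `C²` coefficient bounded by `b` together with those of its derivatives that enter the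
derivatives of the source `-(c * w)` along `(0, 1)`, `(a, 1)` and both. -/
structure IsCoeffBound (a b : ℝ) (c : ℝ × ℝ → ℝ) : Prop where
  contDiff : ContDiff ℝ 2 c
  stripBound : StripBound b c
  stripBound_time : StripBound b (dirDeriv (0, 1) c)
  stripBound_char : StripBound b (dirDeriv (a, 1) c)
  stripBound_time_char : StripBound b (dirDeriv (0, 1) (dirDeriv (a, 1) c))

/-- `w` is a classical solution of the perturbed wave equation with the two boundary conditions, in
the factorised form `(∂ₜ - a ∂ₓ)(∂ₜ + a ∂ₓ) w = -c w`. -/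
structure IsWaveSolution (a p : ℝ) (c w : ℝ × ℝ → ℝ) : Prop where
  contDiff : ContDiff ℝ 2 w
  isCharSystem : IsCharSystem a p (-(c * w)) (dirDeriv (a, 1) w) w

variable {a p γ τ b A : ℝ} {c w : ℝ × ℝ → ℝ}

theorem isCoeffBound_of_norm_iteratedFDeriv_le (ha : 0 ≤ a) {K : ℝ} (hc : ContDiff ℝ 2 c)
    (hK : ∀ k ≤ 2, ∀ x ∈ Icc (0 : ℝ) 1, ∀ t ≥ 0, ‖iteratedFDeriv ℝ k c (x, t)‖ ≤ K) :
    IsCoeffBound a (K * (1 + a)) c := by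
  have hK₀ : 0 ≤ K := (norm_nonneg _).trans (hK 0 zero_le_two 0 (by simp) 0 le_rfl)
  have htime : ‖((0 : ℝ), (1 : ℝ))‖ = 1 := by simp [Prod.norm_mk]
  have hchar : ‖(a, (1 : ℝ))‖ ≤ 1 + a := by
    rw [Prod.norm_mk, Real.norm_of_nonneg ha, norm_one]
    exact max_le (by linarith) (by linarith)
  have hK_le : K ≤ K * (1 + a) := le_mul_of_one_le_right hK₀ (by linarith)
  refine ⟨hc, fun x hx t ht => ?_, fun x hx t ht => ?_, fun x hx t ht => ?_, fun x hx t ht => ?_⟩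
  · have hle := hK 0 zero_le_two x hx t ht
    rw [norm_iteratedFDeriv_zero] at hle
    exact hle.trans hK_le
  · have hle := norm_dirDeriv_le (f := c) (0, 1) (x, t)
    rw [htime, mul_one] at hle
    exact hle.trans ((hK 1 one_le_two x hx t ht).trans hK_le)
  · exact (norm_dirDeriv_le _ _).trans
      (mul_le_mul (hK 1 one_le_two x hx t ht) hchar (norm_nonneg _) hK₀)
  · have hle := norm_dirDeriv_dirDeriv_le hc (0, 1) (a, 1) (x, t)
    rw [htime, mul_one] at hle
    exact hle.trans (mul_le_mul (hK 2 le_rfl x hx t ht) hchar (norm_nonneg _) hK₀)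

theorem dirDeriv_dirDeriv_mul (hc : ContDiff ℝ 2 c) (hw : ContDiff ℝ 2 w) (v v' : ℝ × ℝ) :
    dirDeriv v (dirDeriv v' (c * w)) = dirDeriv v (dirDeriv v' c) * w +
      dirDeriv v' c * dirDeriv v w + (dirDeriv v c * dirDeriv v' w +
        c * dirDeriv v (dirDeriv v' w)) := by
  have hd {f : ℝ × ℝ → ℝ} (hf : ContDiff ℝ 2 f) : Differentiable ℝ f :=
    hf.differentiable two_ne_zero
  have hd' {f : ℝ × ℝ → ℝ} (hf : ContDiff ℝ 2 f) : Differentiable ℝ (dirDeriv v' f) :=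
    (contDiff_dirDeriv hf one_add_one_eq_two.le v').differentiable one_ne_zero
  rw [dirDeriv_mul (hd hc) (hd hw), dirDeriv_add ((hd' hc).mul (hd hw)) ((hd hc).mul (hd' hw)),
    dirDeriv_mul (hd' hc) (hd hw), dirDeriv_mul (hd hc) (hd' hw)]

theorem IsCoeffBound.expBound_source (hc : IsCoeffBound a b c) (hτ : 0 ≤ τ)
    (hw : ExpBound γ τ A w) : ExpBound γ τ (b * A) (-(c * w)) :=
  (hw.mul_left hτ hc.stripBound).neg

theorem IsCoeffBound.expBound_dirDeriv_source (hc : IsCoeffBound a b c) (hτ : 0 ≤ τ)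
    {v : ℝ × ℝ} (hcv : StripBound b (dirDeriv v c)) (hwd : Differentiable ℝ w)
    (hw : ExpBound γ τ A w) (hwv : ExpBound γ τ A (dirDeriv v w)) :
    ExpBound γ τ (b * A + b * A) (dirDeriv v (-(c * w))) := by
  rw [dirDeriv_neg, dirDeriv_mul (hc.contDiff.differentiable two_ne_zero) hwd]
  exact ((hw.mul_left hτ hcv).add (hwv.mul_left hτ hc.stripBound)).neg

theorem IsCoeffBound.expBound_dirDeriv_dirDeriv_source (hc : IsCoeffBound a b c) (hτ : 0 ≤ τ)
    (hwd : ContDiff ℝ 2 w) (hw : ExpBound γ τ A w) (hu : ExpBound γ τ A (dirDeriv (a, 1) w))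
    (hwt : ExpBound γ τ A (dirDeriv (0, 1) w))
    (hut : ExpBound γ τ A (dirDeriv (0, 1) (dirDeriv (a, 1) w))) :
    ExpBound γ τ (b * A + b * A + (b * A + b * A))
      (dirDeriv (0, 1) (dirDeriv (a, 1) (-(c * w)))) := by
  rw [dirDeriv_neg, dirDeriv_neg, dirDeriv_dirDeriv_mul hc.contDiff hwd]
  exact (((hw.mul_left hτ hc.stripBound_time_char).add (hwt.mul_left hτ hc.stripBound_char)).add
    ((hu.mul_left hτ hc.stripBound_time).add (hut.mul_left hτ hc.stripBound))).neg

theorem IsWaveSolution.expBound_dirDeriv_time (ha : 0 < a) (hγ : 0 ≤ γ) (hτ : 0 ≤ τ)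
    (hc : IsCoeffBound a b c) (hsol : IsWaveSolution a p c w) (hw : ExpBound γ τ A w)
    (hu : ExpBound γ τ A (dirDeriv (a, 1) w)) {R Q : ℝ}
    (hR : R = Real.exp (γ * (1 / a)) * (b + 2 * b / a))
    (hQ : Q = Real.exp (γ * (1 / a)) * (|p| + 1 / a)) :
    ExpBound γ (τ + 1 / a) (R * A) (dirDeriv (0, 1) (dirDeriv (a, 1) w)) ∧
      ExpBound γ (τ + 1 / a + 1 / a) (Q * (R * A)) (dirDeriv (0, 1) w) := by
  have hS := hsol.isCharSystem
  have hut := hS.left.expBound_dirDeriv_of_outflow ha hγ hτ hS.left_one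
    ((hc.contDiff.mul hsol.contDiff).neg.of_le one_le_two) (hc.expBound_source hτ hw)
    (hc.expBound_dirDeriv_source hτ hc.stripBound_char
      (hsol.contDiff.differentiable two_ne_zero) hw hu)
  have hRA : Real.exp (γ * (1 / a)) * (b * A + (b * A + b * A) / a) = R * A := by rw [hR]; ring
  rw [hRA] at hut
  exact ⟨hut, hQ ▸ hS.right.expBound_dirDeriv_of_inflow ha hγ (by positivity) hS.right_zero
    hS.left.contDiff hut⟩

theorem IsWaveSolution.expBound_dirDeriv_dirDeriv_time (ha : 0 < a) (hγ : 0 ≤ γ) (hτ : 0 ≤ τ)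
    (hc : IsCoeffBound a b c) (hsol : IsWaveSolution a p c w) (hw : ExpBound γ τ A w)
    (hu : ExpBound γ τ A (dirDeriv (a, 1) w)) (hwt : ExpBound γ τ A (dirDeriv (0, 1) w))
    (hut : ExpBound γ τ A (dirDeriv (0, 1) (dirDeriv (a, 1) w))) {R Q : ℝ}
    (hR : R = Real.exp (γ * (1 / a)) * (b + 2 * b / a))
    (hQ : Q = Real.exp (γ * (1 / a)) * (|p| + 1 / a)) :
    ExpBound γ (τ + 1 / a + 1 / a) (2 * (Q * (R * A))) (dirDeriv (0, 1) (dirDeriv (0, 1) w)) :=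
  (hsol.isCharSystem.expBound_dirDeriv_dirDeriv_time ha hγ hτ hsol.contDiff
    (hc.contDiff.mul hsol.contDiff).neg
    (hc.expBound_dirDeriv_source hτ hc.stripBound_time (hsol.contDiff.differentiable two_ne_zero)
      hw hwt)
    (hc.expBound_dirDeriv_dirDeriv_source hτ hsol.contDiff hw hu hwt hut)).mono le_rfl
    (by rw [hR, hQ]; ring_nf; rfl)

theorem IsWaveSolution.expBound_iterate_dirDeriv (ha : 0 < a) (hτ : 0 ≤ τ)
    (hsol : IsWaveSolution a p c w) (hF : ExpBound γ τ A (-(c * w))) (hw : ExpBound γ τ A w)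
    (hu : ExpBound γ τ A (dirDeriv (a, 1) w)) (hwt : ExpBound γ τ A (dirDeriv (0, 1) w))
    (hut : ExpBound γ τ A (dirDeriv (0, 1) (dirDeriv (a, 1) w)))
    (hwtt : ExpBound γ τ A (dirDeriv (0, 1) (dirDeriv (0, 1) w))) {α β : ℕ} (hαβ : α + β ≤ 2) :
    ExpBound γ τ ((1 + 2 / a + 4 / a ^ 2) * A)
      ((dirDeriv (1, 0))^[α] ((dirDeriv (0, 1))^[β] w)) := by
  have hcomm := dirDeriv_comm hsol.contDiff
  have hA := hw.nonneg
  have hone : A ≤ (1 + 2 / a + 4 / a ^ 2) * A :=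
    le_mul_of_one_le_left hA (by rw [add_assoc]; exact le_add_of_nonneg_right (by positivity))
  have htwo : (A + A) / |a| ≤ (1 + 2 / a + 4 / a ^ 2) * A := by
    rw [abs_of_pos ha, ← sub_nonneg]
    have : 0 ≤ A + 4 / a ^ 2 * A := by positivity
    linear_combination this
  have hleft : ExpBound γ τ A (dirDeriv (-a, 1) (dirDeriv (a, 1) w)) := fun x hx t ht =>
    hsol.isCharSystem.left.dirDeriv_eq x hx t (hτ.trans ht) ▸ hF x hx t ht
  have hwx := hu.dirDeriv_fst ha.ne' hwt
  have hux := hleft.dirDeriv_fst (neg_ne_zero.2 ha.ne') hut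
  have hwxt := (hcomm (0, 1) (a, 1) ▸ hut).dirDeriv_fst ha.ne' hwtt
  have hwxx := (hcomm (1, 0) (a, 1) ▸ hux).dirDeriv_fst ha.ne' (hcomm (1, 0) (0, 1) ▸ hwxt)
  obtain ⟨rfl, rfl⟩ | ⟨rfl, rfl⟩ | ⟨rfl, rfl⟩ | ⟨rfl, rfl⟩ | ⟨rfl, rfl⟩ | ⟨rfl, rfl⟩ :
      (α = 0 ∧ β = 0) ∨ (α = 0 ∧ β = 1) ∨ (α = 0 ∧ β = 2) ∨ (α = 1 ∧ β = 0) ∨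
        (α = 1 ∧ β = 1) ∨ (α = 2 ∧ β = 0) := by lia
  · exact hw.mono le_rfl hone
  · exact hwt.mono le_rfl hone
  · exact hwtt.mono le_rfl hone
  · exact hwx.mono le_rfl htwo
  · exact hwxt.mono le_rfl htwo
  · refine hwxx.mono le_rfl ?_
    rw [abs_neg, abs_of_pos ha, ← sub_nonneg]
    have : 0 ≤ A + 2 / a * A := by positivity
    linear_combination this

theorem exists_expBound_first_order (ha : 0 < a) (p : ℝ) (hγ : 0 ≤ γ) (hb : 0 ≤ b) :
    ∃ m > 0, ∀ c w, IsCoeffBound a b c → IsWaveSolution a p c w → ∀ B,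
      ExpBound γ (2 / a) B (dirDeriv (a, 1) w) → ExpBound γ (2 / a) B w →
        ExpBound γ (4 / a) (m * B) (dirDeriv (a, 1) w) ∧ ExpBound γ (4 / a) (m * B) w ∧
        ExpBound γ (4 / a) (m * B) (dirDeriv (0, 1) (dirDeriv (a, 1) w)) ∧
        ExpBound γ (4 / a) (m * B) (dirDeriv (0, 1) w) := by
  set R := Real.exp (γ * (1 / a)) * (b + 2 * b / a) with hR
  set Q := Real.exp (γ * (1 / a)) * (|p| + 1 / a) with hQ
  have hR₀ : 0 ≤ R := by positivity
  have hQR : 0 ≤ Q * R := by positivity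
  refine ⟨1 + R + Q * R, by positivity, fun c w hc hsol B hu hw => ?_⟩
  have hB := hu.nonneg
  have h2 : 0 ≤ 2 / a := by positivity
  have h4 : 2 / a + 1 / a + 1 / a = 4 / a := by ring
  have h24 : 2 / a ≤ 4 / a := by gcongr; norm_num
  have h34 : 2 / a + 1 / a ≤ 4 / a := h4 ▸ le_add_of_nonneg_right (by positivity)
  obtain ⟨hut, hwt⟩ := hsol.expBound_dirDeriv_time ha hγ h2 hc hw hu hR hQ
  have hB_le : B ≤ (1 + R + Q * R) * B := le_mul_of_one_le_left hB (by linarith)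
  exact ⟨hu.mono h24 hB_le, hw.mono h24 hB_le, hut.mono h34 (by gcongr; linarith),
    hwt.mono h4.le (by rw [← mul_assoc]; gcongr; linarith)⟩

theorem exists_expBound_iterate_dirDeriv (ha : 0 < a) (p : ℝ) (hγ : 0 ≤ γ) (hb : 0 ≤ b) :
    ∃ M > 0, ∀ c w, IsCoeffBound a b c → IsWaveSolution a p c w → ∀ B,
      ExpBound γ (2 / a) B (dirDeriv (a, 1) w) → ExpBound γ (2 / a) B w →
      ∀ α β : ℕ, α + β ≤ 2 →
        ExpBound γ (6 / a) (M * B) ((dirDeriv (1, 0))^[α] ((dirDeriv (0, 1))^[β] w)) := by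
  obtain ⟨m, hm, hfirst⟩ := exists_expBound_first_order ha p hγ hb
  set R := Real.exp (γ * (1 / a)) * (b + 2 * b / a) with hR
  set Q := Real.exp (γ * (1 / a)) * (|p| + 1 / a) with hQ
  have hQR : 0 ≤ Q * R := by positivity
  refine ⟨(1 + 2 / a + 4 / a ^ 2) * ((1 + b + 2 * (Q * R)) * m), by positivity,
    fun c w hc hsol B hu₀ hw₀ α β hαβ => ?_⟩
  obtain ⟨hu, hw, hut, hwt⟩ := hfirst c w hc hsol B hu₀ hw₀
  have hA := hw.nonneg
  have h4 : 0 ≤ 4 / a := by positivity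
  have h46 : 4 / a ≤ 6 / a := by gcongr; norm_num
  have hwtt := hsol.expBound_dirDeriv_dirDeriv_time ha hγ h4 hc hw hu hwt hut hR hQ
  have hA_le : m * B ≤ (1 + b + 2 * (Q * R)) * (m * B) :=
    le_mul_of_one_le_left hA (by linarith)
  rw [mul_assoc _ _ B, mul_assoc _ m B]
  refine hsol.expBound_iterate_dirDeriv ha (h4.trans h46) ?_ (hw.mono h46 hA_le)
    (hu.mono h46 hA_le) (hwt.mono h46 hA_le) (hut.mono h46 hA_le) ?_ hαβ
  · exact (hc.expBound_source h4 hw).mono h46 (by gcongr; linarith)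
  · refine hwtt.mono (by ring_nf; rfl) ?_
    rw [← mul_assoc Q R, ← mul_assoc 2]
    gcongr
    linarith

end PerturbedWave

section Classical

variable {a p : ℝ} {w c : ℝ → ℝ → ℝ}

theorem pdxt_eq_iterate_dirDeriv {α β : ℕ} (hw : ContDiff ℝ (α + β : ℕ) (Function.uncurry w))
    (x t : ℝ) :
    pdxt w α β x t =
      (dirDeriv (1, 0))^[α] ((dirDeriv (0, 1))^[β] (Function.uncurry w)) (x, t) := by
  have hβ : ContDiff ℝ β (Function.uncurry w) := hw.of_le (by norm_cast; lia)
  rw [iterate_dirDeriv_fst (contDiff_iterate_dirDeriv hw _)]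
  simp only [iterate_dirDeriv_snd hβ]
  rfl

theorem eq_on_strip_of_eq_on_interior {f g : ℝ × ℝ → ℝ} (hf : Continuous f) (hg : Continuous g)
    (hfg : ∀ x ∈ Ioo (0 : ℝ) 1, ∀ t > 0, f (x, t) = g (x, t)) {x t : ℝ}
    (hx : x ∈ Icc (0 : ℝ) 1) (ht : 0 ≤ t) : f (x, t) = g (x, t) := by
  have hclosure : EqOn f g (closure (Ioo 0 1 ×ˢ Ioi 0)) :=
    EqOn.closure (fun q hq => hfg q.1 hq.1 q.2 hq.2) hf hg
  rw [closure_prod_eq, closure_Ioo zero_ne_one, closure_Ioi] at hclosure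
  exact hclosure ⟨hx, ht⟩

theorem eq_on_Ici_of_eq_on_Ioi {f g : ℝ → ℝ} (hf : Continuous f) (hg : Continuous g)
    (hfg : ∀ t > 0, f t = g t) {t : ℝ} (ht : 0 ≤ t) : f t = g t := by
  have hclosure : EqOn f g (closure (Ioi 0)) := EqOn.closure hfg hf hg
  rw [closure_Ioi] at hclosure
  exact hclosure ht

theorem isWaveSolution_of_classical (hc : Continuous (Function.uncurry c))
    (hw : ContDiff ℝ 2 (Function.uncurry w))
    (hwave : ∀ x ∈ Ioo (0 : ℝ) 1, ∀ t > 0,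
      deriv (deriv (w x)) t - a ^ 2 * deriv (fun y => deriv (fun z => w z t) y) x
        + c x t * w x t = 0)
    (hzero : ∀ t > 0, w 0 t = p * (deriv (w 0) t + a * deriv (fun y => w y t) 0))
    (hone : ∀ t > 0, deriv (w 1) t + a * deriv (fun y => w y t) 1 = 0) :
    IsWaveSolution a p (Function.uncurry c) (Function.uncurry w) := by
  have hw₁ : ContDiff ℝ 1 (Function.uncurry w) := hw.of_le one_le_two
  have hdw (v) : ContDiff ℝ 1 (dirDeriv v (Function.uncurry w)) :=
    contDiff_dirDeriv hw one_add_one_eq_two.le v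
  have hchar (x t : ℝ) : dirDeriv (a, 1) (Function.uncurry w) (x, t) =
      deriv (w x) t + a * deriv (fun y => w y t) x := by
    rw [dirDeriv_char, Pi.add_apply, Pi.smul_apply, dirDeriv_fst hw₁, dirDeriv_snd hw₁]
    rfl
  have hchar_line (x : ℝ) : Continuous fun t => dirDeriv (a, 1) (Function.uncurry w) (x, t) :=
    (hdw _).continuous.comp (by fun_prop)
  refine ⟨hw, ⟨hdw _, fun x hx t ht =>
    eq_on_strip_of_eq_on_interior (contDiff_dirDeriv (hdw (a, 1)) (zero_add 1).le _).continuous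
      (hc.mul hw.continuous).neg (fun x hx t ht => ?_) hx ht⟩, ⟨hw₁, fun _ _ _ _ => rfl⟩, ?_, ?_⟩
  · rw [dirDeriv_neg_char_dirDeriv_char hw, dirDeriv_snd (hdw _), dirDeriv_fst (hdw _)]
    simp only [dirDeriv_fst hw₁, dirDeriv_snd hw₁]
    exact eq_neg_of_add_eq_zero_left (hwave x hx t ht)
  · exact fun t => eq_on_Ici_of_eq_on_Ioi (hchar_line 1) continuous_const
      fun t ht => (hchar 1 t).trans (hone t ht)
  · exact fun t => eq_on_Ici_of_eq_on_Ioi (hw.continuous.comp (by fun_prop))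
      ((hchar_line 0).const_mul p) fun t ht => by rw [hchar]; exact hzero t ht

end Classical

section Decay

variable {a γ : ℝ}

theorem dataNorm_uncurry {w : ℝ → ℝ → ℝ} (hw : ContDiff ℝ 1 (Function.uncurry w)) :
    dataNorm (Function.uncurry w) =
      max √(∫ x in (0 : ℝ)..1, (w x 0 ^ 2 + deriv (fun y => w y 0) x ^ 2))
        √(∫ x in (0 : ℝ)..1, deriv (w x) 0 ^ 2) := by
  simp only [dataNorm, dirDeriv_fst hw, dirDeriv_snd hw]
  rfl

theorem exists_forall_coeffBound_expBound (ha : 0 < a) (p : ℝ) (hγ : 0 ≤ γ) :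
    ∃ ε > 0, ∀ b ≥ 0, ∃ M > 0, ∀ c w : ℝ × ℝ → ℝ, StripBound ε c → IsCoeffBound a b c →
      IsWaveSolution a p c w → ∀ α β : ℕ, α + β ≤ 2 →
        ExpBound γ (6 / a) (M * dataNorm w) ((dirDeriv (1, 0))^[α] ((dirDeriv (0, 1))^[β] w)) := by
  obtain ⟨ε, hε, N, hN, hsmall⟩ := exists_expBound_of_small ha p hγ
  refine ⟨ε, hε, fun b hb => ?_⟩
  obtain ⟨M, hM, hsmooth⟩ := exists_expBound_iterate_dirDeriv ha p hγ hb
  refine ⟨M * (N * (2 + (1 + a))), by positivity, fun c w hcε hc hsol α β hαβ => ?_⟩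
  have hw : ContDiff ℝ 1 w := hsol.contDiff.of_le one_le_two
  have hF (y : ℝ) (hy : y ∈ Icc (0 : ℝ) 1) (s : ℝ) (hs : s ≥ 0) :
      |(-(c * w)) (y, s)| ≤ ε * |w (y, s)| := by
    rw [Pi.neg_apply, abs_neg, Pi.mul_apply, abs_mul]
    exact mul_le_mul_of_nonneg_right (hcε y hy s hs) (abs_nonneg _)
  obtain ⟨hu, hw₀⟩ := hsmall _ _ _ hsol.isCharSystem hF _ fun y hy => abs_le_two_mul_dataNorm hw hy
  have hdata : N * (2 * dataNorm w + ∫ y in (0 : ℝ)..1, |dirDeriv (a, 1) w (y, 0)|) ≤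
      N * (2 + (1 + a)) * dataNorm w := by
    rw [mul_assoc, add_mul]
    gcongr
    exact integral_abs_dirDeriv_char_le_dataNorm ha.le hw
  rw [mul_assoc]
  exact hsmooth c w hc hsol _ (hu.mono le_rfl hdata) (hw₀.mono le_rfl hdata) α β hαβ

theorem perturbed_wave_C2_exponential_decay_general (a p : ℝ) (ha : 0 < a) :
    ∀ γ ≥ (0 : ℝ), ∃ ε > (0 : ℝ), ∀ K : ℝ, ∃ M₂ > (0 : ℝ), ∀ c : ℝ → ℝ → ℝ,
      ContDiff ℝ 2 (fun q : ℝ × ℝ => c q.1 q.2) →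
      (∀ x ∈ Icc (0 : ℝ) 1, ∀ t ≥ (0 : ℝ), |c x t| ≤ ε) →
      (∀ k ≤ 2, ∀ x ∈ Icc (0 : ℝ) 1, ∀ t ≥ (0 : ℝ),
        ‖iteratedFDeriv ℝ k (fun q : ℝ × ℝ => c q.1 q.2) (x, t)‖ ≤ K) →
      ∀ w : ℝ → ℝ → ℝ, ContDiff ℝ 2 (fun q : ℝ × ℝ => w q.1 q.2) →
      (∀ x ∈ Ioo (0 : ℝ) 1, ∀ t > (0 : ℝ),
        deriv (deriv (w x)) t - a ^ 2 * deriv (fun y => deriv (fun z => w z t) y) x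
          + c x t * w x t = 0) →
      (∀ t > (0 : ℝ), w 0 t = p * (deriv (w 0) t + a * deriv (fun y => w y t) 0)) →
      (∀ t > (0 : ℝ), deriv (w 1) t + a * deriv (fun y => w y t) 1 = 0) →
      ∀ α β : ℕ, α + β ≤ 2 → ∀ t ≥ 6 / a, ∀ x ∈ Icc (0 : ℝ) 1,
        |pdxt w α β x t| ≤ M₂ * Real.exp (-γ * t) *
          max √(∫ x in (0 : ℝ)..1, (w x 0 ^ 2 + deriv (fun y => w y 0) x ^ 2))
            √(∫ x in (0 : ℝ)..1, deriv (w x) 0 ^ 2) := by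
  intro γ hγ
  obtain ⟨ε, hε, hdecay⟩ := exists_forall_coeffBound_expBound ha p hγ
  refine ⟨ε, hε, fun K => ?_⟩
  obtain ⟨M, hM, hdecay⟩ := hdecay (|K| * (1 + a)) (by positivity)
  refine ⟨M, hM, fun c hc hcε hcK w hw hwave hzero hone α β hαβ t ht x hx => ?_⟩
  have hcoeff : IsCoeffBound a (|K| * (1 + a)) (Function.uncurry c) :=
    isCoeffBound_of_norm_iteratedFDeriv_le ha.le hc fun k hk x hx t ht =>
      (hcK k hk x hx t ht).trans (le_abs_self K)
  have hsol : IsWaveSolution a p (Function.uncurry c) (Function.uncurry w) :=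
    isWaveSolution_of_classical hc.continuous hw hwave hzero hone
  rw [pdxt_eq_iterate_dirDeriv (hw.of_le (mod_cast hαβ)), mul_right_comm,
    ← dataNorm_uncurry (hw.of_le one_le_two)]
  exact hdecay (Function.uncurry c) (Function.uncurry w) hcε hcoeff hsol α β hαβ x hx t ht

end Decay

/-- Corollary 1 of the paper, for classical solutions.
Let `a > 0`, `p ∈ ℝ` and `T = 6/a`. For every `γ > 0` there exist `ε > 0` and `M₂ > 0`
such that for every `C²` coefficient `c` with all partial derivatives up to order 2
bounded by `ε`, and every `C²` solution `w` of the perturbed wave problem, for all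
`α + β ≤ 2` and `t > T`,
`sup_x |∂ₓ^α ∂ₜ^β w(x,t)| ≤ M₂ e^{−γt} max(‖w(·,0)‖_{H¹}, ‖wₜ(·,0)‖_{L²})`. -/
theorem perturbed_wave_C2_exponential_decay
    (a p : ℝ) (ha : 0 < a) (T : ℝ) (hT : T = 6 / a) :
    ∀ γ > (0:ℝ), ∃ ε > (0:ℝ), ∃ M₂ > (0:ℝ),
      ∀ c : ℝ → ℝ → ℝ,
        ContDiff ℝ 2 (fun q : ℝ × ℝ => c q.1 q.2) →
        (∀ k : ℕ, k ≤ 2 → ∀ q : ℝ × ℝ,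
          ‖iteratedFDeriv ℝ k (fun q : ℝ × ℝ => c q.1 q.2) q‖ ≤ ε) →
      ∀ w : ℝ → ℝ → ℝ,
        ContDiff ℝ 2 (fun q : ℝ × ℝ => w q.1 q.2) →
        -- the perturbed wave equation ∂ₜ²w − a²∂ₓ²w + c·w = 0 on (0,1)×(0,∞)
        (∀ x ∈ Set.Ioo (0:ℝ) 1, ∀ t > (0:ℝ),
          deriv (deriv (w x)) t
            - a ^ 2 * deriv (fun y => deriv (fun z => w z t) y) x
            + c x t * w x t = 0) →
        -- boundary condition at x = 0 : w(0,t) = p (wₜ + a wₓ)(0,t)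
        (∀ t > (0:ℝ),
          w 0 t = p * (deriv (w 0) t + a * deriv (fun y => w y t) 0)) →
        -- boundary condition at x = 1 : (wₜ + a wₓ)(1,t) = 0
        (∀ t > (0:ℝ),
          deriv (w 1) t + a * deriv (fun y => w y t) 1 = 0) →
      ∀ α β : ℕ, α + β ≤ 2 → ∀ t > T, ∀ x ∈ Set.Icc (0:ℝ) 1,
        |pdxt w α β x t| ≤
          M₂ * Real.exp (-γ * t) *
            max (Real.sqrt (∫ x in (0:ℝ)..1,
                  ((w x 0) ^ 2 + (deriv (fun y => w y 0) x) ^ 2)))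
                (Real.sqrt (∫ x in (0:ℝ)..1, (deriv (w x) 0) ^ 2)) := by
  intro γ hγ
  obtain ⟨ε, hε, hdecay⟩ := perturbed_wave_C2_exponential_decay_general a p ha γ hγ.le
  obtain ⟨M₂, hM₂, hdecay⟩ := hdecay ε
  exact ⟨ε, hε, M₂, hM₂, fun c hc hcε w hw hwave hzero hone α β hαβ t ht =>
    hdecay c hc (fun x _ t _ => by simpa using hcε 0 zero_le_two (x, t))
      (fun k hk x _ t _ => hcε k hk (x, t)) w hw hwave hzero hone α β hαβ t (hT ▸ ht.le)⟩
end

section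
/- Let a > 0 and q ∈ ℝ be fixed. For every γ > 0 there exist ε > 0 and M > 0 such that the following holds: for every continuous function c : [0,1]×[0,∞) → ℝ with |c(x,t)| < ε for all (x,t), and every twice continuously differentiable function w : [0,1]×[0,∞) → ℝ satisfying ∂²_t w − a² ∂²_x w + c·w = 0 on (0,1)×(0,∞), together with the boundary conditions w(1,t) = q·(∂_t w − a ∂_x w)(1,t) and (∂_t w − a ∂_x w)(0,t) = 0 for all t > 0, one has for all t > 0: (∫_0^1 w(x,t)² dx)^{1/2} ≤ M e^{−γ t} · max{ (∫_0^1 [w(x,0)² + (∂_x w(x,0))²] dx)^{1/2}, (∫_0^1 (∂_t w(x,0))² dx)^{1/2} }. -/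
/-!
The Riemann invariant `u = wₜ − a wₓ` turns the wave equation into the transport system
`uₜ + a uₓ = −c w`, `wₜ − a wₓ = u`. With `aμ = 2γ + 2` and `K` large, the Lyapunov functional
`V = ∫ (K e^{−μx} u² + e^{μx} w²)` satisfies `V' ≤ −2γ V`: each weight decreases in the
direction in which the quantity it multiplies travels, which contributes `−aμV`; the boundary terms
have the good sign because the reflection coefficient `q` is absorbed by `K`; and the coupling terms
are at most `2V` once `|c| ≤ 1/K`.
-/

open Function Set

section PartialDerivatives

variable {E : Type*} [NormedAddCommGroup E] [NormedSpace ℝ E] {f : ℝ → ℝ → E}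

/-- The partial derivative `∂ₓ f` of a function of `(x, t)`, in curried form. -/
noncomputable def derivX (f : ℝ → ℝ → E) (x t : ℝ) : E := deriv (fun y => f y t) x

/-- The partial derivative `∂ₜ f` of a function of `(x, t)`, in curried form. -/
noncomputable def derivT (f : ℝ → ℝ → E) (x t : ℝ) : E := deriv (f x) t

lemma hasDerivAt_left_of_uncurry (hf : Differentiable ℝ (uncurry f)) (x t : ℝ) :
    HasDerivAt (fun y => f y t) (fderiv ℝ (uncurry f) (x, t) (1, 0)) x :=
  (hf (x, t)).hasFDerivAt.comp_hasDerivAt (f := fun y : ℝ => (y, t)) x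
    ((hasDerivAt_id x).prodMk (hasDerivAt_const x t))

lemma hasDerivAt_right_of_uncurry (hf : Differentiable ℝ (uncurry f)) (x t : ℝ) :
    HasDerivAt (f x) (fderiv ℝ (uncurry f) (x, t) (0, 1)) t :=
  (hf (x, t)).hasFDerivAt.comp_hasDerivAt (f := fun s : ℝ => (x, s)) t
    ((hasDerivAt_const t x).prodMk (hasDerivAt_id t))

lemma hasDerivAt_derivX (hf : Differentiable ℝ (uncurry f)) (x t : ℝ) :
    HasDerivAt (fun y => f y t) (derivX f x t) x :=
  (hasDerivAt_left_of_uncurry hf x t).differentiableAt.hasDerivAt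

lemma hasDerivAt_derivT (hf : Differentiable ℝ (uncurry f)) (x t : ℝ) :
    HasDerivAt (f x) (derivT f x t) t :=
  (hasDerivAt_right_of_uncurry hf x t).differentiableAt.hasDerivAt

lemma uncurry_derivX (hf : Differentiable ℝ (uncurry f)) :
    uncurry (derivX f) = fun s => fderiv ℝ (uncurry f) s (1, 0) :=
  funext fun s => (hasDerivAt_left_of_uncurry hf s.1 s.2).deriv

lemma uncurry_derivT (hf : Differentiable ℝ (uncurry f)) :
    uncurry (derivT f) = fun s => fderiv ℝ (uncurry f) s (0, 1) :=
  funext fun s => (hasDerivAt_right_of_uncurry hf s.1 s.2).deriv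

lemma contDiff_uncurry_derivX {m n : WithTop ℕ∞} (hf : ContDiff ℝ n (uncurry f))
    (hmn : m + 1 ≤ n) : ContDiff ℝ m (uncurry (derivX f)) := by
  rw [uncurry_derivX (hf.differentiable (by rintro rfl; simp at hmn))]
  exact (hf.fderiv_right hmn).clm_apply contDiff_const

lemma contDiff_uncurry_derivT {m n : WithTop ℕ∞} (hf : ContDiff ℝ n (uncurry f))
    (hmn : m + 1 ≤ n) : ContDiff ℝ m (uncurry (derivT f)) := by
  rw [uncurry_derivT (hf.differentiable (by rintro rfl; simp at hmn))]
  exact (hf.fderiv_right hmn).clm_apply contDiff_const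

lemma continuous_uncurry_derivX (hf : ContDiff ℝ 1 (uncurry f)) :
    Continuous (uncurry (derivX f)) :=
  (contDiff_uncurry_derivX (m := 0) hf (zero_add 1).le).continuous

lemma continuous_uncurry_derivT (hf : ContDiff ℝ 1 (uncurry f)) :
    Continuous (uncurry (derivT f)) :=
  (contDiff_uncurry_derivT (m := 0) hf (zero_add 1).le).continuous

lemma derivX_derivT_comm (hf : ContDiff ℝ 2 (uncurry f)) (x t : ℝ) :
    derivX (derivT f) x t = derivT (derivX f) x t := by
  have hf₁ : Differentiable ℝ (uncurry f) := hf.differentiable two_ne_zero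
  have hX : Differentiable ℝ (uncurry (derivX f)) :=
    (contDiff_uncurry_derivX hf one_add_one_eq_two.le).differentiable one_ne_zero
  have hT : Differentiable ℝ (uncurry (derivT f)) :=
    (contDiff_uncurry_derivT hf one_add_one_eq_two.le).differentiable one_ne_zero
  have hf₂ : DifferentiableAt ℝ (fderiv ℝ (uncurry f)) (x, t) :=
    (hf.fderiv_right one_add_one_eq_two.le).differentiable one_ne_zero _
  have hXT : derivX (derivT f) x t = fderiv ℝ (fderiv ℝ (uncurry f)) (x, t) (1, 0) (0, 1) := by
    rw [derivX, (hasDerivAt_left_of_uncurry hT x t).deriv, uncurry_derivT hf₁,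
      fderiv_clm_apply hf₂ (differentiableAt_const _)]
    simp
  have hTX : derivT (derivX f) x t = fderiv ℝ (fderiv ℝ (uncurry f)) (x, t) (0, 1) (1, 0) := by
    rw [derivT, (hasDerivAt_right_of_uncurry hX x t).deriv, uncurry_derivX hf₁,
      fderiv_clm_apply hf₂ (differentiableAt_const _)]
    simp
  rw [hXT, hTX]
  exact hf.contDiffAt.isSymmSndFDerivAt (by simp) _ _

lemma hasDerivAt_intervalIntegral_of_continuous {f' : ℝ → ℝ → E} (α β : ℝ)
    (hf : ∀ t, Continuous fun x => f x t) (hf' : Continuous (uncurry f'))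
    (hderiv : ∀ x t, HasDerivAt (f x) (f' x t) t) (t : ℝ) :
    HasDerivAt (fun s => ∫ x in α..β, f x s) (∫ x in α..β, f' x t) t := by
  obtain ⟨C, hC⟩ := (isCompact_uIcc (a := α) (b := β)).prod
    (isCompact_Icc (a := t - 1) (b := t + 1)) |>.exists_bound_of_continuousOn hf'.continuousOn
  exact (intervalIntegral.hasDerivAt_integral_of_dominated_loc_of_deriv_le
    (F := fun s x => f x s) (F' := fun s x => f' x s) (bound := fun _ => C)
    (Icc_mem_nhds (sub_one_lt t) (lt_add_one t))
    (.of_forall fun s => (hf s).aestronglyMeasurable)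
    ((hf t).intervalIntegrable _ _)
    (hf'.uncurry_right t).aestronglyMeasurable
    (.of_forall fun x hx s hs => hC (x, s) ⟨uIoc_subset_uIcc hx, hs⟩)
    intervalIntegrable_const
    (.of_forall fun x _ s _ => hderiv x s)).2

end PartialDerivatives

lemma le_exp_mul_of_hasDerivAt_le {V V' : ℝ → ℝ} {κ : ℝ} (hcont : ContinuousOn V (Ici 0))
    (hderiv : ∀ t > 0, HasDerivAt V (V' t) t) (hle : ∀ t > 0, V' t ≤ κ * V t)
    {t : ℝ} (ht : 0 ≤ t) : V t ≤ Real.exp (κ * t) * V 0 := by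
  have hderiv' : ∀ s > 0, HasDerivAt (fun s => Real.exp (-κ * s) * V s)
      (Real.exp (-κ * s) * (-κ * 1) * V s + Real.exp (-κ * s) * V' s) s := fun s hs =>
    ((hasDerivAt_id s).const_mul (-κ)).exp.mul (hderiv s hs)
  have hanti : AntitoneOn (fun s => Real.exp (-κ * s) * V s) (Ici 0) := by
    refine antitoneOn_of_hasDerivWithinAt_nonpos (convex_Ici 0)
      (ContinuousOn.mul (by fun_prop) hcont)
      (fun s hs => (hderiv' s (by simpa using hs)).hasDerivWithinAt) fun s hs => ?_
    have := mul_le_mul_of_nonneg_left (hle s (by simpa using hs)) (Real.exp_pos (-κ * s)).le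
    linarith
  have hle₀ : Real.exp (-κ * t) * V t ≤ V 0 := by
    simpa using hanti self_mem_Ici ht ht
  calc V t = Real.exp (κ * t) * (Real.exp (-κ * t) * V t) := by
        rw [← mul_assoc, ← Real.exp_add]; simp
    _ ≤ Real.exp (κ * t) * V 0 := by gcongr

lemma integral_sub_const_mul_sq_le {f g : ℝ → ℝ} {α β : ℝ} (a : ℝ) (hαβ : α ≤ β)
    (hf : Continuous f) (hg : Continuous g) :
    ∫ x in α..β, (f x - a * g x) ^ 2 ≤
      2 * (∫ x in α..β, f x ^ 2) + 2 * a ^ 2 * ∫ x in α..β, g x ^ 2 := by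
  rw [← intervalIntegral.integral_const_mul, ← intervalIntegral.integral_const_mul,
    ← intervalIntegral.integral_add (Continuous.intervalIntegrable (by fun_prop) _ _)
      (Continuous.intervalIntegrable (by fun_prop) _ _)]
  refine intervalIntegral.integral_mono hαβ (Continuous.intervalIntegrable (by fun_prop) _ _)
    (Continuous.intervalIntegrable (by fun_prop) _ _) fun x => ?_
  dsimp only
  linarith [sq_nonneg (f x + a * g x)]

section WeightedEnergy

variable {u : ℝ → ℝ → ℝ} {μ t : ℝ}

/-- The weighted `L²` energy `∫₀¹ e^{−μx} u(x,t)² dx`. It decays for transport with a speed of the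
same sign as `μ`, up to boundary terms. -/
noncomputable def weightedEnergy (μ : ℝ) (u : ℝ → ℝ → ℝ) (t : ℝ) : ℝ :=
  ∫ x in (0 : ℝ)..1, Real.exp (-μ * x) * u x t ^ 2

lemma integral_sq_le_weightedEnergy (hμ : μ ≤ 0) (hu : Continuous fun x => u x t) :
    ∫ x in (0 : ℝ)..1, u x t ^ 2 ≤ weightedEnergy μ u t := by
  refine intervalIntegral.integral_mono_on zero_le_one
    (Continuous.intervalIntegrable (by fun_prop) _ _)
    (Continuous.intervalIntegrable (by fun_prop) _ _) fun x hx => ?_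
  exact le_mul_of_one_le_left (sq_nonneg _)
    (Real.one_le_exp (mul_nonneg (neg_nonneg.2 hμ) hx.1))

lemma weightedEnergy_nonneg : 0 ≤ weightedEnergy μ u t :=
  intervalIntegral.integral_nonneg zero_le_one fun x _ => by positivity

lemma weightedEnergy_le (hu : Continuous fun x => u x t) :
    weightedEnergy μ u t ≤ Real.exp |μ| * ∫ x in (0 : ℝ)..1, u x t ^ 2 := by
  rw [weightedEnergy, ← intervalIntegral.integral_const_mul]
  refine intervalIntegral.integral_mono_on zero_le_one
    (Continuous.intervalIntegrable (by fun_prop) _ _)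
    (Continuous.intervalIntegrable (by fun_prop) _ _) fun x hx => ?_
  have hexp : -μ * x ≤ |μ| :=
    (mul_le_mul_of_nonneg_right (neg_le_abs μ) hx.1).trans
      (mul_le_of_le_one_right (abs_nonneg μ) hx.2)
  gcongr

lemma integral_exp_mul_derivX_sq (hu : ContDiff ℝ 1 (uncurry u)) :
    ∫ x in (0 : ℝ)..1, Real.exp (-μ * x) * (2 * u x t * derivX u x t) =
      Real.exp (-μ) * u 1 t ^ 2 - u 0 t ^ 2 + μ * weightedEnergy μ u t := by
  have hu₀ := hu.continuous.uncurry_right t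
  have hX := (continuous_uncurry_derivX hu).uncurry_right t
  have hderiv : ∀ x, HasDerivAt (fun x => Real.exp (-μ * x) * u x t ^ 2)
      (Real.exp (-μ * x) * (2 * u x t * derivX u x t)
        - μ * (Real.exp (-μ * x) * u x t ^ 2)) x := fun x => by
    refine (((hasDerivAt_id x).const_mul (-μ)).exp.mul
      ((hasDerivAt_derivX (hu.differentiable one_ne_zero) x t).pow 2)).congr_deriv ?_
    simp only [id_eq, neg_mul, mul_one, mul_neg, Pi.pow_apply, Nat.cast_ofNat,
      Nat.add_one_sub_one, pow_one]
    ring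
  have hFTC := intervalIntegral.integral_eq_sub_of_hasDerivAt (a := 0) (b := 1)
    (fun x _ => hderiv x) (Continuous.intervalIntegrable (by fun_prop) _ _)
  rw [intervalIntegral.integral_sub (Continuous.intervalIntegrable (by fun_prop) _ _)
    (Continuous.intervalIntegrable (by fun_prop) _ _),
    intervalIntegral.integral_const_mul] at hFTC
  simp only [mul_one, mul_zero, Real.exp_zero, one_mul] at hFTC
  rw [weightedEnergy]
  linarith

lemma hasDerivAt_weightedEnergy (hu : ContDiff ℝ 1 (uncurry u)) :
    HasDerivAt (weightedEnergy μ u)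
      (∫ x in (0 : ℝ)..1, Real.exp (-μ * x) * (2 * u x t * derivT u x t)) t := by
  have hu₀ := hu.continuous
  have hT := continuous_uncurry_derivT hu
  refine hasDerivAt_intervalIntegral_of_continuous
    (f := fun x t => Real.exp (-μ * x) * u x t ^ 2)
    (f' := fun x t => Real.exp (-μ * x) * (2 * u x t * derivT u x t)) 0 1
    (fun t => by have := hu₀.uncurry_right t; fun_prop) ?_ (fun x t => ?_) t
  · simp only [uncurry_def] at hu₀ hT ⊢
    fun_prop
  · simpa using ((hasDerivAt_derivT (hu.differentiable one_ne_zero) x t).pow 2).const_mul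
      (Real.exp (-μ * x))

lemma hasDerivAt_weightedEnergy_transport (σ : ℝ) (hu : ContDiff ℝ 1 (uncurry u)) :
    HasDerivAt (weightedEnergy μ u)
      ((∫ x in (0 : ℝ)..1, Real.exp (-μ * x) * (2 * u x t * (derivT u x t + σ * derivX u x t)))
        - σ * μ * weightedEnergy μ u t - σ * (Real.exp (-μ) * u 1 t ^ 2 - u 0 t ^ 2)) t := by
  have hu₀ := hu.continuous.uncurry_right t
  have hX := (continuous_uncurry_derivX hu).uncurry_right t
  have hT := (continuous_uncurry_derivT hu).uncurry_right t
  have hsplit : ∫ x in (0 : ℝ)..1,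
        Real.exp (-μ * x) * (2 * u x t * (derivT u x t + σ * derivX u x t)) =
      (∫ x in (0 : ℝ)..1, Real.exp (-μ * x) * (2 * u x t * derivT u x t))
        + σ * ∫ x in (0 : ℝ)..1, Real.exp (-μ * x) * (2 * u x t * derivX u x t) := by
    rw [← intervalIntegral.integral_const_mul,
      ← intervalIntegral.integral_add (Continuous.intervalIntegrable (by fun_prop) _ _)
        (Continuous.intervalIntegrable (by fun_prop) _ _)]
    congr with x
    ring
  refine (hasDerivAt_weightedEnergy hu).congr_deriv ?_
  rw [hsplit, integral_exp_mul_derivX_sq hu]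
  ring

end WeightedEnergy

/-- A `C¹` solution of the transport system `uₜ + a uₓ = −c v`, `vₜ − a vₓ = u` on the half-strip
`(0,1) × (0,∞)`, where `u` vanishes at its inflow boundary `x = 0` and `v` is fed at `x = 1` by the
reflection `v = q u`. This is the diagonal form of the perturbed wave equation with mirror boundary
conditions. -/
structure IsMirrorTransportSolution (a q : ℝ) (c u v : ℝ → ℝ → ℝ) : Prop where
  contDiff_right : ContDiff ℝ 1 (uncurry u)
  contDiff_left : ContDiff ℝ 1 (uncurry v)
  transport_right : ∀ x ∈ Ioo (0 : ℝ) 1, ∀ t > 0, derivT u x t + a * derivX u x t = -(c x t * v x t)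
  transport_left : ∀ x ∈ Ioo (0 : ℝ) 1, ∀ t > 0, derivT v x t - a * derivX v x t = u x t
  inflow_zero : ∀ t > 0, u 0 t = 0
  reflection_one : ∀ t > 0, v 1 t = q * u 1 t

/-- The Lyapunov functional `∫₀¹ (K e^{−μx} u² + e^{μx} v²) dx` of the mirror transport system. -/
noncomputable def mirrorLyapunov (K μ : ℝ) (u v : ℝ → ℝ → ℝ) (t : ℝ) : ℝ :=
  K * weightedEnergy μ u t + weightedEnergy (-μ) v t

lemma integral_sq_le_mirrorLyapunov {K μ t : ℝ} {u v : ℝ → ℝ → ℝ} (hK : 0 ≤ K) (hμ : 0 ≤ μ)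
    (hv : Continuous fun x => v x t) :
    ∫ x in (0 : ℝ)..1, v x t ^ 2 ≤ mirrorLyapunov K μ u v t :=
  (integral_sq_le_weightedEnergy (neg_nonpos.2 hμ) hv).trans
    (le_add_of_nonneg_left (mul_nonneg hK weightedEnergy_nonneg))

lemma mirrorLyapunov_le {K μ t : ℝ} {u v : ℝ → ℝ → ℝ} (hK : 0 ≤ K)
    (hu : Continuous fun x => u x t) (hv : Continuous fun x => v x t) :
    mirrorLyapunov K μ u v t ≤
      Real.exp |μ| * (K * (∫ x in (0 : ℝ)..1, u x t ^ 2) + ∫ x in (0 : ℝ)..1, v x t ^ 2) :=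
  calc mirrorLyapunov K μ u v t
    _ ≤ K * (Real.exp |μ| * ∫ x in (0 : ℝ)..1, u x t ^ 2)
        + Real.exp |(-μ)| * ∫ x in (0 : ℝ)..1, v x t ^ 2 :=
      add_le_add (mul_le_mul_of_nonneg_left (weightedEnergy_le hu) hK) (weightedEnergy_le hv)
    _ = _ := by rw [abs_neg]; ring

lemma weighted_coupling_le {K A B c u v : ℝ} (hA : 0 ≤ A) (hAB : A ≤ B) (hBK : B ≤ K * A)
    (hc : |c * K| ≤ 1) :
    K * (A * (2 * u * -(c * v))) + B * (2 * v * u) ≤ 2 * (K * (A * u ^ 2) + B * v ^ 2) := by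
  have hcK : -(c * K) * (2 * u * v) ≤ u ^ 2 + v ^ 2 :=
    calc -(c * K) * (2 * u * v) ≤ |c * K| * (2 * |u| * |v|) := by
          simpa [abs_mul] using le_abs_self (-(c * K) * (2 * u * v))
      _ ≤ 1 * (2 * |u| * |v|) := by gcongr
      _ ≤ u ^ 2 + v ^ 2 := by simpa using two_mul_le_add_sq |u| |v|
  have hright : A * (-(c * K) * (2 * u * v)) ≤ K * (A * u ^ 2) + B * v ^ 2 :=
    calc A * (-(c * K) * (2 * u * v)) ≤ A * (u ^ 2 + v ^ 2) := by gcongr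
      _ = A * u ^ 2 + A * v ^ 2 := by ring
      _ ≤ K * A * u ^ 2 + B * v ^ 2 := by gcongr; exact hAB.trans hBK
      _ = K * (A * u ^ 2) + B * v ^ 2 := by ring
  have hleft : B * (2 * v * u) ≤ K * (A * u ^ 2) + B * v ^ 2 :=
    calc B * (2 * v * u) ≤ B * (u ^ 2 + v ^ 2) := by
          gcongr
          · exact hA.trans hAB
          · linarith [two_mul_le_add_sq v u]
      _ = B * u ^ 2 + B * v ^ 2 := by ring
      _ ≤ K * A * u ^ 2 + B * v ^ 2 := by gcongr
      _ = K * (A * u ^ 2) + B * v ^ 2 := by ring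
  linarith

namespace IsMirrorTransportSolution

variable {a q K μ : ℝ} {c u v : ℝ → ℝ → ℝ}

lemma boundary_flux_nonpos (h : IsMirrorTransportSolution a q c u v) (ha : 0 ≤ a)
    (hK : q ^ 2 * Real.exp (2 * μ) ≤ K) {t : ℝ} (ht : 0 < t) :
    a * (Real.exp μ * v 1 t ^ 2 - v 0 t ^ 2)
      - a * (K * (Real.exp (-μ) * u 1 t ^ 2 - u 0 t ^ 2)) ≤ 0 := by
  have hq : q ^ 2 * Real.exp μ ≤ K * Real.exp (-μ) :=
    calc q ^ 2 * Real.exp μ = q ^ 2 * Real.exp (2 * μ) * Real.exp (-μ) := by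
          rw [mul_assoc, ← Real.exp_add]; ring_nf
      _ ≤ K * Real.exp (-μ) := by gcongr
  rw [h.inflow_zero t ht, h.reflection_one t ht]
  calc _ = -(a * ((K * Real.exp (-μ) - q ^ 2 * Real.exp μ) * u 1 t ^ 2 + v 0 t ^ 2)) := by ring
    _ ≤ 0 := neg_nonpos.2 (mul_nonneg ha
      (add_nonneg (mul_nonneg (sub_nonneg.2 hq) (sq_nonneg _)) (sq_nonneg _)))

lemma integral_coupling_le (h : IsMirrorTransportSolution a q c u v) (hμ : 0 ≤ μ)
    (hK : Real.exp (2 * μ) ≤ K) (hc : ∀ x ∈ Ioo (0 : ℝ) 1, ∀ t > 0, |c x t| ≤ K⁻¹)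
    {t : ℝ} (ht : 0 < t) :
    K * (∫ x in (0 : ℝ)..1, Real.exp (-μ * x) * (2 * u x t * (derivT u x t + a * derivX u x t)))
      + ∫ x in (0 : ℝ)..1, Real.exp (- -μ * x) * (2 * v x t * (derivT v x t + -a * derivX v x t))
      ≤ 2 * mirrorLyapunov K μ u v t := by
  have hu := h.contDiff_right.continuous.uncurry_right t
  have hv := h.contDiff_left.continuous.uncurry_right t
  have hXu := (continuous_uncurry_derivX h.contDiff_right).uncurry_right t
  have hTu := (continuous_uncurry_derivT h.contDiff_right).uncurry_right t
  have hXv := (continuous_uncurry_derivX h.contDiff_left).uncurry_right t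
  have hTv := (continuous_uncurry_derivT h.contDiff_left).uncurry_right t
  have hK₀ : 0 < K := (Real.exp_pos _).trans_le hK
  rw [mirrorLyapunov, weightedEnergy, weightedEnergy, ← intervalIntegral.integral_const_mul,
    ← intervalIntegral.integral_const_mul K,
    ← intervalIntegral.integral_add (Continuous.intervalIntegrable (by fun_prop) _ _)
      (Continuous.intervalIntegrable (by fun_prop) _ _),
    ← intervalIntegral.integral_add (Continuous.intervalIntegrable (by fun_prop) _ _)
      (Continuous.intervalIntegrable (by fun_prop) _ _), ← intervalIntegral.integral_const_mul]
  refine intervalIntegral.integral_mono_on_of_le_Ioo zero_le_one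
    (Continuous.intervalIntegrable (by fun_prop) _ _)
    (Continuous.intervalIntegrable (by fun_prop) _ _) fun x hx => ?_
  rw [h.transport_right x hx t ht, neg_mul a, ← sub_eq_add_neg, h.transport_left x hx t ht]
  have hμx : 0 ≤ μ * x := mul_nonneg hμ hx.1.le
  have hweights : Real.exp (- -μ * x) ≤ K * Real.exp (-μ * x) :=
    calc Real.exp (- -μ * x) = Real.exp (2 * (μ * x)) * Real.exp (-μ * x) := by
          rw [← Real.exp_add]; ring_nf
      _ ≤ Real.exp (2 * μ) * Real.exp (-μ * x) := by
          gcongr; exact mul_le_of_le_one_right hμ hx.2.le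
      _ ≤ K * Real.exp (-μ * x) := by gcongr
  refine weighted_coupling_le (Real.exp_pos _).le (Real.exp_le_exp.2 (by linarith)) hweights ?_
  rw [abs_mul, abs_of_pos hK₀]
  exact (le_inv_mul_iff₀' hK₀).1 (by simpa using hc x hx t ht)

lemma mirrorLyapunov_decay (h : IsMirrorTransportSolution a q c u v) (ha : 0 ≤ a) (hμ : 0 ≤ μ)
    (hK : (q ^ 2 + 1) * Real.exp (2 * μ) ≤ K)
    (hc : ∀ x ∈ Ioo (0 : ℝ) 1, ∀ t > 0, |c x t| ≤ K⁻¹) {t : ℝ} (ht : 0 ≤ t) :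
    mirrorLyapunov K μ u v t ≤ Real.exp (-(a * μ - 2) * t) * mirrorLyapunov K μ u v 0 := by
  have hKexp : Real.exp (2 * μ) ≤ K := by nlinarith [Real.exp_pos (2 * μ), sq_nonneg q]
  have hKq : q ^ 2 * Real.exp (2 * μ) ≤ K := by linarith [Real.exp_pos (2 * μ)]
  have hderiv := fun t =>
    ((hasDerivAt_weightedEnergy_transport (μ := μ) (t := t) a h.contDiff_right).const_mul K).add
      (hasDerivAt_weightedEnergy_transport (μ := -μ) (-a) h.contDiff_left)
  refine le_exp_mul_of_hasDerivAt_le (V := mirrorLyapunov K μ u v)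
    (fun s _ => (hderiv s).continuousAt.continuousWithinAt) (fun s _ => hderiv s)
    (fun s hs => ?_) ht
  have hcoupling := h.integral_coupling_le hμ hKexp hc hs
  have hflux := h.boundary_flux_nonpos ha hKq hs
  rw [neg_neg] at hcoupling ⊢
  rw [mirrorLyapunov] at hcoupling ⊢
  linarith

lemma integral_sq_le (h : IsMirrorTransportSolution a q c u v) (ha : 0 ≤ a) (hμ : 0 ≤ μ)
    (hK : (q ^ 2 + 1) * Real.exp (2 * μ) ≤ K)
    (hc : ∀ x ∈ Ioo (0 : ℝ) 1, ∀ t > 0, |c x t| ≤ K⁻¹) {t : ℝ} (ht : 0 ≤ t) :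
    ∫ x in (0 : ℝ)..1, v x t ^ 2 ≤ Real.exp (-(a * μ - 2) * t) *
      (Real.exp μ * (K * (∫ x in (0 : ℝ)..1, u x 0 ^ 2) + ∫ x in (0 : ℝ)..1, v x 0 ^ 2)) := by
  have hK₀ : 0 ≤ K := le_trans (by positivity) hK
  calc ∫ x in (0 : ℝ)..1, v x t ^ 2 ≤ mirrorLyapunov K μ u v t :=
        integral_sq_le_mirrorLyapunov hK₀ hμ (h.contDiff_left.continuous.uncurry_right t)
    _ ≤ Real.exp (-(a * μ - 2) * t) * mirrorLyapunov K μ u v 0 :=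
        h.mirrorLyapunov_decay ha hμ hK hc ht
    _ ≤ _ := by
        gcongr
        simpa only [abs_of_nonneg hμ] using mirrorLyapunov_le (μ := μ) hK₀
          (h.contDiff_right.continuous.uncurry_right 0)
          (h.contDiff_left.continuous.uncurry_right 0)

lemma of_wave {w : ℝ → ℝ → ℝ} (hw : ContDiff ℝ 2 (uncurry w))
    (hpde : ∀ x ∈ Ioo (0 : ℝ) 1, ∀ t > 0,
      derivT (derivT w) x t - a ^ 2 * derivX (derivX w) x t + c x t * w x t = 0)
    (hone : ∀ t > 0, w 1 t = q * (derivT w 1 t - a * derivX w 1 t))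
    (hzero : ∀ t > 0, derivT w 0 t - a * derivX w 0 t = 0) :
    IsMirrorTransportSolution a q c (fun x t => derivT w x t - a * derivX w x t) w := by
  have hX := contDiff_uncurry_derivX hw one_add_one_eq_two.le
  have hT := contDiff_uncurry_derivT hw one_add_one_eq_two.le
  have hX' := hX.differentiable one_ne_zero
  have hT' := hT.differentiable one_ne_zero
  refine ⟨hT.sub (contDiff_const.mul hX), hw.of_le one_le_two, fun x hx t ht => ?_,
    fun _ _ _ _ => rfl, hzero, hone⟩
  have hTu : derivT (fun x t => derivT w x t - a * derivX w x t) x t =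
      derivT (derivT w) x t - a * derivT (derivX w) x t :=
    ((hasDerivAt_derivT hT' x t).sub ((hasDerivAt_derivT hX' x t).const_mul a)).deriv
  have hXu : derivX (fun x t => derivT w x t - a * derivX w x t) x t =
      derivX (derivT w) x t - a * derivX (derivX w) x t :=
    ((hasDerivAt_derivX hT' x t).sub ((hasDerivAt_derivX hX' x t).const_mul a)).deriv
  rw [hTu, hXu, derivX_derivT_comm hw]
  linear_combination hpde x hx t ht

end IsMirrorTransportSolution

lemma initial_energy_le_max_sq {a K α β : ℝ} {f g h : ℝ → ℝ} (hK : 0 ≤ K) (hαβ : α ≤ β)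
    (hf : Continuous f) (hg : Continuous g) (hh : Continuous h) :
    K * (∫ x in α..β, (h x - a * g x) ^ 2) + ∫ x in α..β, f x ^ 2 ≤
      (2 * K * (1 + a ^ 2) + 1) *
        max √(∫ x in α..β, (f x ^ 2 + g x ^ 2)) √(∫ x in α..β, h x ^ 2) ^ 2 := by
  set m := max √(∫ x in α..β, (f x ^ 2 + g x ^ 2)) √(∫ x in α..β, h x ^ 2)
  have hm : 0 ≤ m := le_max_of_le_left (Real.sqrt_nonneg _)
  have hfg : (∫ x in α..β, f x ^ 2) + ∫ x in α..β, g x ^ 2 ≤ m ^ 2 := by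
    rw [← intervalIntegral.integral_add (Continuous.intervalIntegrable (by fun_prop) _ _)
      (Continuous.intervalIntegrable (by fun_prop) _ _)]
    exact (Real.sqrt_le_left hm).1 (le_max_left _ _)
  have hh' : ∫ x in α..β, h x ^ 2 ≤ m ^ 2 := (Real.sqrt_le_left hm).1 (le_max_right _ _)
  have hf₀ : 0 ≤ ∫ x in α..β, f x ^ 2 :=
    intervalIntegral.integral_nonneg hαβ fun x _ => sq_nonneg _
  have hg₀ : 0 ≤ ∫ x in α..β, g x ^ 2 :=
    intervalIntegral.integral_nonneg hαβ fun x _ => sq_nonneg _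
  calc _ ≤ K * (2 * (∫ x in α..β, h x ^ 2) + 2 * a ^ 2 * ∫ x in α..β, g x ^ 2)
        + ∫ x in α..β, f x ^ 2 := by
        gcongr; exact integral_sub_const_mul_sq_le a hαβ hh hg
    _ ≤ K * (2 * m ^ 2 + 2 * a ^ 2 * m ^ 2) + m ^ 2 := by gcongr <;> linarith
    _ = _ := by ring

theorem perturbed_wave_mirror_L2_exponential_stability_general (a q : ℝ) (ha : 0 < a) :
    ∀ γ > (0 : ℝ), ∃ ε > (0 : ℝ), ∃ M > (0 : ℝ), ∀ c : ℝ → ℝ → ℝ,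
      (∀ x ∈ Ioo (0 : ℝ) 1, ∀ t > 0, |c x t| ≤ ε) →
      ∀ w : ℝ → ℝ → ℝ, ContDiff ℝ 2 (uncurry w) →
        (∀ x ∈ Ioo (0 : ℝ) 1, ∀ t > 0,
          derivT (derivT w) x t - a ^ 2 * derivX (derivX w) x t + c x t * w x t = 0) →
        (∀ t > 0, w 1 t = q * (derivT w 1 t - a * derivX w 1 t)) →
        (∀ t > 0, derivT w 0 t - a * derivX w 0 t = 0) →
      ∀ t > 0, √(∫ x in (0 : ℝ)..1, w x t ^ 2) ≤ M * Real.exp (-γ * t) *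
        max √(∫ x in (0 : ℝ)..1, (w x 0 ^ 2 + derivX w x 0 ^ 2))
          √(∫ x in (0 : ℝ)..1, derivT w x 0 ^ 2) := by
  intro γ hγ
  let μ := (2 * γ + 2) / a
  let K := (q ^ 2 + 1) * Real.exp (2 * μ)
  let C := Real.exp μ * (2 * K * (1 + a ^ 2) + 1)
  have hμ : 0 ≤ μ := by positivity
  have haμ : a * μ = 2 * γ + 2 := mul_div_cancel₀ _ ha.ne'
  have hK : 0 < K := by positivity
  refine ⟨K⁻¹, by positivity, √C, by positivity, fun c hc w hw hpde hone hzero t ht => ?_⟩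
  have hinit := initial_energy_le_max_sq (a := a) hK.le zero_le_one
    (hw.continuous.uncurry_right 0)
    ((contDiff_uncurry_derivX hw one_add_one_eq_two.le).continuous.uncurry_right 0)
    ((contDiff_uncurry_derivT hw one_add_one_eq_two.le).continuous.uncurry_right 0)
  set m := max √(∫ x in (0 : ℝ)..1, (w x 0 ^ 2 + derivX w x 0 ^ 2))
    √(∫ x in (0 : ℝ)..1, derivT w x 0 ^ 2)
  have : 0 ≤ m := le_max_of_le_left (Real.sqrt_nonneg _)
  refine Real.sqrt_le_iff.2 ⟨by positivity, ?_⟩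
  calc ∫ x in (0 : ℝ)..1, w x t ^ 2
    _ ≤ Real.exp (-(a * μ - 2) * t) * (Real.exp μ * ((2 * K * (1 + a ^ 2) + 1) * m ^ 2)) :=
        ((IsMirrorTransportSolution.of_wave hw hpde hone hzero).integral_sq_le
          ha.le hμ le_rfl hc ht.le).trans (by gcongr)
    _ = (√C * Real.exp (-γ * t) * m) ^ 2 := by
        rw [mul_pow, mul_pow, Real.sq_sqrt (by positivity), ← Real.exp_nat_mul, haμ]
        simp only [C]
        ring_nf

/-- Theorem 1 for the mirror boundary conditions (5), for classical
solutions. Let `a > 0` and `q ∈ ℝ`. For every `γ > 0` there exist `ε > 0` and `M > 0`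
such that: for every continuous `c` with `|c| < ε` and every `C²` solution `w` of
`∂ₜ²w − a²∂ₓ²w + c·w = 0` with boundary conditions `w(1,t) = q·(wₜ − a wₓ)(1,t)` and
`(wₜ − a wₓ)(0,t) = 0`, one has, for all `t > 0`,
`‖w(·,t)‖_{L²} ≤ M e^{−γt} max(‖w(·,0)‖_{H¹}, ‖wₜ(·,0)‖_{L²})`. -/
theorem perturbed_wave_mirror_L2_exponential_stability
    (a q : ℝ) (ha : 0 < a) :
    ∀ γ > (0:ℝ), ∃ ε > (0:ℝ), ∃ M > (0:ℝ),
      ∀ c : ℝ → ℝ → ℝ,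
        Continuous (fun s : ℝ × ℝ => c s.1 s.2) →
        (∀ x ∈ Set.Icc (0:ℝ) 1, ∀ t ≥ (0:ℝ), |c x t| < ε) →
      ∀ w : ℝ → ℝ → ℝ,
        ContDiff ℝ 2 (fun s : ℝ × ℝ => w s.1 s.2) →
        -- the perturbed wave equation ∂ₜ²w − a²∂ₓ²w + c·w = 0 on (0,1)×(0,∞)
        (∀ x ∈ Set.Ioo (0:ℝ) 1, ∀ t > (0:ℝ),
          deriv (deriv (w x)) t
            - a ^ 2 * deriv (fun y => deriv (fun z => w z t) y) x
            + c x t * w x t = 0) →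
        -- boundary condition at x = 1 : w(1,t) = q (wₜ − a wₓ)(1,t)
        (∀ t > (0:ℝ),
          w 1 t = q * (deriv (w 1) t - a * deriv (fun y => w y t) 1)) →
        -- boundary condition at x = 0 : (wₜ − a wₓ)(0,t) = 0
        (∀ t > (0:ℝ),
          deriv (w 0) t - a * deriv (fun y => w y t) 0 = 0) →
      ∀ t > (0:ℝ),
        Real.sqrt (∫ x in (0:ℝ)..1, (w x t) ^ 2) ≤
          M * Real.exp (-γ * t) *
            max (Real.sqrt (∫ x in (0:ℝ)..1,
                  ((w x 0) ^ 2 + (deriv (fun y => w y 0) x) ^ 2)))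
                (Real.sqrt (∫ x in (0:ℝ)..1, (deriv (w x) 0) ^ 2)) := by
  intro γ hγ
  obtain ⟨ε, hε, M, hM, h⟩ := perturbed_wave_mirror_L2_exponential_stability_general a q ha γ hγ
  exact ⟨ε, hε, M, hM, fun c _ hc =>
    h c fun x hx t ht => (hc x (Ioo_subset_Icc_self hx) t ht.le).le⟩
end
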